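/- For all constants A ≥ 1 and c₀ > 0 there exist constants 0 < c ≤ C and an integer N₀ (depending only on A and c₀) such that for all integers S ≥ 2 and n with N₀ ≤ n ≤ S^A and n ≥ c₀·S/ln S, in the Poisson sampling model with sample size n: c·S/(n ln n) ≤ sup_{Q ∈ M_S} inf_{L̂} sup_{P ∈ M_S} E_P (L̂(X) − L_1(P,Q))² ≤ C·S/(n ln n), where the infimum is over all estimators L̂ : ℕ^S → ℝ (which may depend on Q). -/

import Mathlib

/-!
Upper bound. Writing `|l - m| = m + l - 2 * min l m` and
`min l m = n * ∫ u in 0..√(l / n), 2 * u * 1[u ≤ √(m / n)]`, replace the indicator by its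
convolution with the Jackson kernel of order `M`, a trigonometric polynomial. Every `cos (θ * √l)`
is the mean of a normalised Hermite polynomial of a Poisson count of mean `l`, bounded by
`exp (θ ^ 2 / 2)`; so the smoothed expression has an unbiased statistic whose increments are bounded
up to a logarithm by `exp (2 * M ^ 2 / n)`. Summed over the symbols, the bias is of order
`∑ √(p i) / M ≤ √S / M`. For `M ^ 2 ≍ n * log n / A` its square has order `S / (n * log n)`, and the
variance is negligible since `n ≤ S ^ A`.

Lower bound. Let `Q` give mass `1 / 2` to one heavy symbol and spread the rest evenly, and let `P`
have independently drawn Poisson intensities at the light symbols, the heavy symbol absorbing the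
fluctuation of their sum. Two priors on Chebyshev-type nodes, the weights of the one on the even
nodes and of the other on the odd ones, share about `log n` moments, so the two laws of the counts
are close. With `μ` the intensity of a light symbol under `Q`, however, the mean absolute deviations
of the priors from `μ` differ by the order of `√(μ / log n)`. Le Cam's two-point method turns this
gap into the bound on the risk.
-/

open scoped BigOperators ENNReal

/-- The Poisson(lam) probability mass function on the nonnegative integers. -/
noncomputable def poissonPMF (lam : ℝ) (k : ℕ) : ℝ :=
  Real.exp (-lam) * lam ^ k / (Nat.factorial k)

/-- `P` is a probability vector on `{1,…,S}` (an element of `M_S`). -/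
def IsDist {S : ℕ} (p : Fin S → ℝ) : Prop :=
  (∀ i, 0 ≤ p i) ∧ ∑ i, p i = 1

/-- Joint pmf of `S` independent coordinates `X_i ~ Poisson(n p_i)` (Poisson sampling model). -/
noncomputable def prodPMF {S : ℕ} (n : ℕ) (p : Fin S → ℝ) (x : Fin S → ℕ) : ℝ :=
  ∏ i, poissonPMF (n * p i) (x i)

/-- The `L₁` distance between two vectors. -/
noncomputable def L1dist {S : ℕ} (p q : Fin S → ℝ) : ℝ :=
  ∑ i, |p i - q i|

/-- The mean squared error `E_P (est(X) - L)²` in the Poisson sampling model, valued in `ℝ≥0∞`. -/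
noncomputable def risk {S : ℕ} (n : ℕ) (p : Fin S → ℝ) (L : ℝ) (est : (Fin S → ℕ) → ℝ) : ℝ≥0∞ :=
  ∑' x : Fin S → ℕ, ENNReal.ofReal (prodPMF n p x * (est x - L) ^ 2)

open Finset MeasureTheory Real
open scoped Nat ProbabilityTheory

/-! ### Hermite polynomials and unbiased Poisson statistics -/

/-- The coefficient of `λ ^ i / i!` in the power series of `cos (θ √λ)`. -/
noncomputable def cosCoeff (θ : ℝ) (i : ℕ) : ℝ := (-1) ^ i * θ ^ (2 * i) * i ! / (2 * i)!

/-- The even Hermite polynomial normalised at the origin, `H₂ₖ(θ / 2) / H₂ₖ(0)`. As a function of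
`k` it is the statistic whose mean under `Poisson(λ)` is `cos (θ √λ)`. -/
noncomputable def normalizedHermite (θ : ℝ) (k : ℕ) : ℝ :=
  ∑ i ∈ range (k + 1), k.choose i * cosCoeff θ i

/-- The Gaussian moment `∫₀^∞ t ^ (2j) exp (-t²) dt`. -/
noncomputable def gaussianHalfMoment (j : ℕ) : ℝ := ∫ t in Set.Ioi 0, t ^ (2 * j) * exp (-t ^ 2)

lemma integrableOn_pow_two_mul_mul_exp_neg_sq (j : ℕ) :
    IntegrableOn (fun t : ℝ ↦ t ^ (2 * j) * exp (-t ^ 2)) (Set.Ioi 0) := by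
  have h : IntegrableOn (fun t : ℝ ↦ t ^ ((2 * j : ℕ) : ℝ) * exp (-t ^ (2 : ℝ))) (Set.Ioi 0) :=
    integrableOn_rpow_mul_exp_neg_rpow (neg_one_lt_zero.trans_le (Nat.cast_nonneg _)) two_pos
  exact_mod_cast h

lemma gaussianHalfMoment_eq_Gamma (j : ℕ) :
    gaussianHalfMoment j = 1 / 2 * Real.Gamma (j + 1 / 2) := by
  have h : ∫ t in Set.Ioi (0 : ℝ), t ^ ((2 * j : ℕ) : ℝ) * exp (-t ^ (2 : ℝ)) =
      1 / 2 * Real.Gamma ((((2 * j : ℕ) : ℝ) + 1) / 2) :=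
    integral_rpow_mul_exp_neg_rpow two_pos (neg_one_lt_zero.trans_le (Nat.cast_nonneg _))
  have hj : (((2 * j : ℕ) : ℝ) + 1) / 2 = j + 1 / 2 := by push_cast; ring
  rw [← hj, ← h, gaussianHalfMoment]
  norm_cast

lemma gaussianHalfMoment_pos (j : ℕ) : 0 < gaussianHalfMoment j := by
  rw [gaussianHalfMoment_eq_Gamma]
  have := Real.Gamma_pos_of_pos (show (0 : ℝ) < j + 1 / 2 by positivity)
  positivity

lemma gaussianHalfMoment_succ (j : ℕ) :
    gaussianHalfMoment (j + 1) = (j + 1 / 2) * gaussianHalfMoment j := by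
  have hj : ((j + 1 : ℕ) : ℝ) + 1 / 2 = (j + 1 / 2) + 1 := by push_cast; ring
  rw [gaussianHalfMoment_eq_Gamma, gaussianHalfMoment_eq_Gamma, hj,
    Real.Gamma_add_one (by positivity)]
  ring

lemma gaussianHalfMoment_eq_factorial (j : ℕ) :
    gaussianHalfMoment j = (2 * j)! / (4 ^ j * j !) * gaussianHalfMoment 0 := by
  induction j with
  | zero => simp
  | succ j ih =>
    rw [gaussianHalfMoment_succ, ih, show 2 * (j + 1) = 2 * j + 1 + 1 by ring,
      Nat.factorial_succ, Nat.factorial_succ, Nat.factorial_succ]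
    have : (j ! : ℝ) ≠ 0 := by positivity
    push_cast
    field_simp
    ring

lemma choose_mul_gaussianHalfMoment_le (j r : ℕ) :
    ((j + r).choose j : ℝ) * gaussianHalfMoment r ≤ 2 ^ j / j ! * gaussianHalfMoment (j + r) := by
  induction j generalizing r with
  | zero => simp
  | succ j ih =>
    have hchoose : ((j + 1 + r).choose (j + 1) : ℝ) * (j + 1) =
        (j + (r + 1)).choose j * (r + 1) := by
      have := Nat.choose_succ_right_eq (j + 1 + r) j
      rw [show j + 1 + r - j = r + 1 by omega, show j + 1 + r = j + (r + 1) by ring] at this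
      rw [show j + 1 + r = j + (r + 1) by ring]
      exact_mod_cast this
    have hr := gaussianHalfMoment_pos r
    have hmoment : (r + 1) * gaussianHalfMoment r ≤ 2 * gaussianHalfMoment (r + 1) := by
      rw [gaussianHalfMoment_succ]
      nlinarith [mul_nonneg (Nat.cast_nonneg (α := ℝ) r) hr.le]
    refine le_of_mul_le_mul_right ?_ (show (0 : ℝ) < j + 1 by positivity)
    calc (j + 1 + r).choose (j + 1) * gaussianHalfMoment r * (j + 1)
        = (j + (r + 1)).choose j * ((r + 1) * gaussianHalfMoment r) := by
          linear_combination gaussianHalfMoment r * hchoose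
      _ ≤ (j + (r + 1)).choose j * (2 * gaussianHalfMoment (r + 1)) := by gcongr
      _ ≤ 2 * (2 ^ j / j ! * gaussianHalfMoment (j + (r + 1))) := by linarith [ih (r + 1)]
      _ = 2 ^ (j + 1) / (j + 1)! * gaussianHalfMoment (j + 1 + r) * (j + 1) := by
          rw [Nat.factorial_succ, show j + (r + 1) = j + 1 + r by ring]
          push_cast
          field_simp
          ring

lemma sum_range_two_mul_add_one_of_odd_eq_zero {R : Type*} [AddCommMonoid R] {f : ℕ → R}
    (hf : ∀ j, f (2 * j + 1) = 0) (k : ℕ) :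
    ∑ i ∈ range (2 * k + 1), f i = ∑ j ∈ range (k + 1), f (2 * j) := by
  induction k with
  | zero => simp
  | succ k ih =>
    rw [show 2 * (k + 1) + 1 = 2 * k + 1 + 1 + 1 by ring, sum_range_succ, sum_range_succ, ih, hf,
      sum_range_succ _ (k + 1), add_zero]
    rfl

lemma re_add_mul_I_pow_two_mul (x t : ℝ) (k : ℕ) :
    (((t : ℂ) + x * Complex.I) ^ (2 * k)).re =
      ∑ j ∈ range (k + 1), (-1) ^ j * ((2 * k).choose (2 * j) : ℝ) * x ^ (2 * j) *
        t ^ (2 * (k - j)) := by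
  have hterm (i : ℕ) : ((x * Complex.I) ^ i * (t : ℂ) ^ (2 * k - i) * (2 * k).choose i).re =
      x ^ i * t ^ (2 * k - i) * (2 * k).choose i * (Complex.I ^ i).re := by
    rw [← Complex.re_ofReal_mul]
    push_cast
    rw [mul_pow]
    ring_nf
  rw [add_comm, add_pow, Complex.re_sum, sum_range_two_mul_add_one_of_odd_eq_zero]
  · refine sum_congr rfl fun j _ ↦ ?_
    rw [hterm, pow_mul Complex.I, Complex.I_sq, ← Nat.mul_sub,
      show ((-1 : ℂ) ^ j).re = (-1) ^ j by norm_cast]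
    ring
  · intro j
    rw [hterm, pow_succ Complex.I, pow_mul, Complex.I_sq,
      show ((-1 : ℂ) ^ j) = (((-1) ^ j : ℝ) : ℂ) by norm_cast, Complex.re_ofReal_mul,
      Complex.I_re, mul_zero, mul_zero]

lemma integrableOn_sum_pow_mul_exp_neg_sq (c : ℕ → ℝ) (k : ℕ) :
    IntegrableOn (fun t : ℝ ↦ (∑ j ∈ range (k + 1), c j * t ^ (2 * (k - j))) * exp (-t ^ 2))
      (Set.Ioi 0) := by
  simp only [sum_mul, mul_assoc]
  exact integrable_finsetSum _ fun j _ ↦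
    (integrableOn_pow_two_mul_mul_exp_neg_sq (k - j)).const_mul (c j)

lemma integral_sum_pow_mul_exp_neg_sq (c : ℕ → ℝ) (k : ℕ) :
    ∫ t in Set.Ioi (0 : ℝ), (∑ j ∈ range (k + 1), c j * t ^ (2 * (k - j))) * exp (-t ^ 2) =
      ∑ j ∈ range (k + 1), c j * gaussianHalfMoment (k - j) := by
  simp only [sum_mul, mul_assoc]
  rw [integral_finsetSum _ fun j _ ↦
    (integrableOn_pow_two_mul_mul_exp_neg_sq (k - j)).const_mul (c j)]
  exact sum_congr rfl fun j _ ↦ integral_const_mul _ _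

lemma normalizedHermite_mul_gaussianHalfMoment (θ : ℝ) (k : ℕ) :
    normalizedHermite θ k * gaussianHalfMoment k =
      ∫ t in Set.Ioi (0 : ℝ),
        (((t : ℂ) + (θ / 2 : ℝ) * Complex.I) ^ (2 * k)).re * exp (-t ^ 2) := by
  simp only [re_add_mul_I_pow_two_mul]
  rw [integral_sum_pow_mul_exp_neg_sq, normalizedHermite, sum_mul]
  refine sum_congr rfl fun j hj ↦ ?_
  obtain ⟨r, rfl⟩ := Nat.exists_eq_add_of_le (mem_range_succ_iff.mp hj)
  rw [gaussianHalfMoment_eq_factorial (j + r), gaussianHalfMoment_eq_factorial (j + r - j),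
    cosCoeff, Nat.cast_choose ℝ (Nat.le_add_right j r),
    Nat.cast_choose ℝ (show 2 * j ≤ 2 * (j + r) by omega), ← Nat.mul_sub, Nat.add_sub_cancel_left,
    div_pow, pow_mul 2 2 j, pow_add]
  norm_num
  field_simp

theorem abs_normalizedHermite_le (θ : ℝ) (k : ℕ) :
    |normalizedHermite θ k| ≤ exp (θ ^ 2 / 2) := by
  have hk := gaussianHalfMoment_pos k
  have hpow (t : ℝ) : |(((t : ℂ) + (θ / 2 : ℝ) * Complex.I) ^ (2 * k)).re| ≤
      ∑ j ∈ range (k + 1), k.choose j * (θ / 2) ^ (2 * j) * t ^ (2 * (k - j)) := by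
    refine (Complex.abs_re_le_norm _).trans_eq ?_
    rw [norm_pow, pow_mul, Complex.norm_add_mul_I, sq_sqrt (by positivity), add_comm, add_pow]
    refine sum_congr rfl fun j _ ↦ ?_
    rw [← pow_mul, ← pow_mul]
    ring
  have hterm : ∀ j ∈ range (k + 1), k.choose j * (θ / 2) ^ (2 * j) * gaussianHalfMoment (k - j) ≤
      (θ ^ 2 / 2) ^ j / j ! * gaussianHalfMoment k := by
    intro j hj
    obtain ⟨r, rfl⟩ := Nat.exists_eq_add_of_le (mem_range_succ_iff.mp hj)
    rw [Nat.add_sub_cancel_left]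
    calc (j + r).choose j * (θ / 2) ^ (2 * j) * gaussianHalfMoment r
        = ((θ / 2) ^ 2) ^ j * ((j + r).choose j * gaussianHalfMoment r) := by rw [pow_mul]; ring
      _ ≤ ((θ / 2) ^ 2) ^ j * (2 ^ j / j ! * gaussianHalfMoment (j + r)) :=
          mul_le_mul_of_nonneg_left (choose_mul_gaussianHalfMoment_le j r) (by positivity)
      _ = (θ ^ 2 / 2) ^ j / j ! * gaussianHalfMoment (j + r) := by
          rw [show θ ^ 2 / 2 = (θ / 2) ^ 2 * 2 by ring, mul_pow]; ring
  refine le_of_mul_le_mul_right ?_ hk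
  calc |normalizedHermite θ k| * gaussianHalfMoment k
      = |normalizedHermite θ k * gaussianHalfMoment k| := by rw [abs_mul, abs_of_pos hk]
    _ ≤ ∫ t in Set.Ioi (0 : ℝ), (∑ j ∈ range (k + 1),
          k.choose j * (θ / 2) ^ (2 * j) * t ^ (2 * (k - j))) * exp (-t ^ 2) := by
        rw [normalizedHermite_mul_gaussianHalfMoment, ← Real.norm_eq_abs]
        refine norm_integral_le_of_norm_le (integrableOn_sum_pow_mul_exp_neg_sq
          (fun j ↦ k.choose j * (θ / 2) ^ (2 * j)) k)
          (Filter.Eventually.of_forall fun t ↦ ?_)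
        rw [norm_mul, norm_of_nonneg (exp_pos _).le]
        exact mul_le_mul_of_nonneg_right (hpow t) (exp_pos _).le
    _ = ∑ j ∈ range (k + 1), k.choose j * (θ / 2) ^ (2 * j) * gaussianHalfMoment (k - j) :=
        integral_sum_pow_mul_exp_neg_sq (fun j ↦ k.choose j * (θ / 2) ^ (2 * j)) k
    _ ≤ ∑ j ∈ range (k + 1), (θ ^ 2 / 2) ^ j / j ! * gaussianHalfMoment k := sum_le_sum hterm
    _ ≤ exp (θ ^ 2 / 2) * gaussianHalfMoment k := by
        rw [← sum_mul]
        exact mul_le_mul_of_nonneg_right (sum_le_exp_of_nonneg (by positivity) _) hk.le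

lemma poissonPMF_nonneg {l : ℝ} (hl : 0 ≤ l) (k : ℕ) : 0 ≤ poissonPMF l k := by
  unfold poissonPMF
  positivity

lemma hasSum_poissonPMF_mul_pow (l z : ℝ) :
    HasSum (fun k ↦ poissonPMF l k * z ^ k) (exp (l * (z - 1))) := by
  have h := (NormedSpace.expSeries_div_hasSum_exp (l * z)).mul_left (exp (-l))
  rw [← Real.exp_eq_exp_ℝ, ← exp_add, show -l + l * z = l * (z - 1) by ring] at h
  refine h.congr_fun fun k ↦ ?_
  rw [poissonPMF, mul_pow]
  ring

lemma hasSum_poissonPMF (l : ℝ) : HasSum (poissonPMF l) 1 := by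
  simpa using hasSum_poissonPMF_mul_pow l 1

/-- The Poisson mean of a binomial transform is the Cauchy product of the exponential generating
function of `a` with `exp (-l) * exp l`. -/
lemma hasSum_poissonPMF_mul_sum_choose {l s : ℝ} {a : ℕ → ℝ}
    (hs : HasSum (fun i ↦ a i * l ^ i / i !) s)
    (ha : Summable fun i ↦ ‖a i * l ^ i / (i ! : ℝ)‖) :
    HasSum (fun k ↦ poissonPMF l k * ∑ i ∈ range (k + 1), k.choose i * a i) s := by
  have h := (hasSum_sum_range_mul_of_summable_norm ha
    (NormedSpace.expSeries_div_summable l).norm).mul_left (exp (-l))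
  rw [hs.tsum_eq, (NormedSpace.expSeries_div_hasSum_exp l).tsum_eq, ← Real.exp_eq_exp_ℝ,
    mul_left_comm, ← exp_add, neg_add_cancel, exp_zero, mul_one] at h
  refine h.congr_fun fun k ↦ ?_
  rw [poissonPMF, mul_sum, mul_sum]
  refine sum_congr rfl fun i hi ↦ ?_
  obtain ⟨r, rfl⟩ := Nat.exists_eq_add_of_le (mem_range_succ_iff.mp hi)
  rw [Nat.cast_choose ℝ (Nat.le_add_right i r), Nat.add_sub_cancel_left, pow_add]
  field_simp

lemma hasSum_poissonPMF_mul_choose (l : ℝ) (j : ℕ) :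
    HasSum (fun k ↦ poissonPMF l k * k.choose j) (l ^ j / j !) := by
  have hsupp : ∀ i ≠ j, (Pi.single j 1 : ℕ → ℝ) i * l ^ i / i ! = 0 := fun i hi ↦ by simp [hi]
  have hsum : Summable fun i ↦ ‖(Pi.single j 1 : ℕ → ℝ) i * l ^ i / (i ! : ℝ)‖ :=
    (hasSum_single j fun i hi ↦ by rw [hsupp i hi, norm_zero]).summable
  have h := hasSum_poissonPMF_mul_sum_choose (hasSum_single j hsupp) hsum
  rw [Pi.single_eq_same, one_mul] at h
  refine h.congr_fun fun k ↦ ?_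
  rcases le_or_gt j k with hjk | hjk
  · simp [Pi.single_apply, Nat.lt_succ_iff.mpr hjk]
  · simp [Pi.single_apply, Nat.choose_eq_zero_of_lt hjk]

lemma hasSum_poissonPMF_mul_id (l : ℝ) : HasSum (fun k ↦ poissonPMF l k * k) l := by
  simpa using hasSum_poissonPMF_mul_choose l 1

lemma hasSum_poissonPMF_mul_sub_sq (l : ℝ) :
    HasSum (fun k ↦ poissonPMF l k * ((k : ℝ) - l) ^ 2) l := by
  have h := (((hasSum_poissonPMF_mul_choose l 2).mul_left 2).add
    ((hasSum_poissonPMF_mul_id l).mul_left (1 - 2 * l))).add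
      ((hasSum_poissonPMF l).mul_left (l ^ 2))
  rw [show 2 * (l ^ 2 / 2 !) + (1 - 2 * l) * l + l ^ 2 * 1 = l by simp; ring] at h
  refine h.congr_fun fun k ↦ ?_
  rw [Nat.cast_choose_two]
  ring

/-- The statistic whose mean under `Poisson(y²)` is `∫₀^y 2u cos (θu) du`; its increments are the
normalised Hermite polynomials. -/
noncomputable def cosStatistic (θ : ℝ) (k : ℕ) : ℝ :=
  ∑ i ∈ range k, k.choose (i + 1) * cosCoeff θ i

lemma cosStatistic_succ (θ : ℝ) (k : ℕ) :
    cosStatistic θ (k + 1) = cosStatistic θ k + normalizedHermite θ k := by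
  have h : cosStatistic θ k = ∑ i ∈ range (k + 1), k.choose (i + 1) * cosCoeff θ i := by
    rw [sum_range_succ, Nat.choose_succ_self]
    simp [cosStatistic]
  rw [h, cosStatistic, normalizedHermite, ← sum_add_distrib]
  refine sum_congr rfl fun i _ ↦ ?_
  rw [Nat.choose_succ_succ]
  push_cast
  ring

lemma integral_two_mul_mul_cosSeries_term (θ y : ℝ) (i : ℕ) :
    ∫ u in (0 : ℝ)..y, 2 * u * ((-1) ^ i * (θ * u) ^ (2 * i) / (2 * i)!) =
      cosCoeff θ i * (y ^ 2) ^ (i + 1) / (i + 1)! := by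
  have hmonomial (u : ℝ) : 2 * u * ((-1) ^ i * (θ * u) ^ (2 * i) / (2 * i)!) =
      2 * (-1) ^ i * θ ^ (2 * i) / (2 * i)! * u ^ (2 * i + 1) := by
    rw [mul_pow, pow_succ]
    ring
  simp_rw [hmonomial]
  rw [intervalIntegral.integral_const_mul, integral_pow, cosCoeff, Nat.factorial_succ,
    zero_pow (Nat.succ_ne_zero _)]
  push_cast
  field_simp
  ring

lemma norm_two_mul_mul_cosSeries_term_le {u y : ℝ} (hu : 0 ≤ u) (huy : u ≤ y) (θ : ℝ) (i : ℕ) :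
    ‖2 * u * ((-1) ^ i * (θ * u) ^ (2 * i) / (2 * i)!)‖ ≤
      2 * y * ((θ * y) ^ (2 * i) / (2 * i)!) := by
  have hpow : (θ * u) ^ (2 * i) ≤ (θ * y) ^ (2 * i) := by
    rw [mul_pow, mul_pow]
    have : 0 ≤ θ ^ (2 * i) := (even_two_mul i).pow_nonneg θ
    gcongr
  have hnonneg : 0 ≤ (θ * u) ^ (2 * i) := (even_two_mul i).pow_nonneg _
  rw [norm_mul, norm_div, norm_mul ((-1) ^ i), norm_pow (-1), norm_neg, norm_one, one_pow, one_mul,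
    norm_of_nonneg (by positivity), norm_of_nonneg hnonneg, norm_of_nonneg (by positivity)]
  have : 0 ≤ y := hu.trans huy
  gcongr

lemma hasSum_cosCoeff_mul_pow {y : ℝ} (hy : 0 ≤ y) (θ : ℝ) :
    HasSum (fun i ↦ cosCoeff θ i * (y ^ 2) ^ (i + 1) / (i + 1)!)
      (∫ u in (0 : ℝ)..y, 2 * u * cos (θ * u)) := by
  simp_rw [← integral_two_mul_mul_cosSeries_term]
  refine intervalIntegral.hasSum_integral_of_dominated_convergence
    (fun i _ ↦ 2 * y * ((θ * y) ^ (2 * i) / (2 * i)!))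
    (fun i ↦ Continuous.aestronglyMeasurable (by fun_prop))
    (fun i ↦ Filter.Eventually.of_forall fun u hu ↦ ?_)
    (Filter.Eventually.of_forall fun _ _ ↦ (Real.hasSum_cosh (θ * y)).summable.mul_left _)
    intervalIntegrable_const
    (Filter.Eventually.of_forall fun u _ ↦ (Real.hasSum_cos (θ * u)).mul_left _)
  rw [Set.uIoc_of_le hy] at hu
  exact norm_two_mul_mul_cosSeries_term_le hu.1.le hu.2 θ i

lemma summable_norm_cosCoeff_mul_pow (θ y : ℝ) :
    Summable fun i ↦ ‖cosCoeff θ i * (y ^ 2) ^ (i + 1) / (i + 1)!‖ := by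
  refine .of_nonneg_of_le (fun _ ↦ norm_nonneg _) (fun i ↦ ?_)
    ((Real.hasSum_cosh (θ * y)).summable.mul_left (y ^ 2))
  have hθ : 0 ≤ θ ^ (2 * i) := (even_two_mul i).pow_nonneg θ
  have hθy : 0 ≤ (θ * y) ^ (2 * i) := (even_two_mul i).pow_nonneg _
  have hterm : ‖cosCoeff θ i * (y ^ 2) ^ (i + 1) / (i + 1)!‖ =
      y ^ 2 * ((θ * y) ^ (2 * i) / (2 * i)!) / (i + 1) := by
    rw [cosCoeff, norm_div, norm_mul, norm_div, norm_mul, norm_mul, norm_pow, norm_neg, norm_one,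
      one_pow, one_mul, norm_of_nonneg hθ, norm_of_nonneg (by positivity),
      norm_of_nonneg (by positivity), norm_of_nonneg (by positivity),
      norm_of_nonneg (by positivity), Nat.factorial_succ]
    push_cast
    field_simp
    ring
  rw [hterm]
  exact div_le_self (by positivity) (by linarith [Nat.cast_nonneg (α := ℝ) i])

lemma hasSum_poissonPMF_mul_cosStatistic {y : ℝ} (hy : 0 ≤ y) (θ : ℝ) :
    HasSum (fun k ↦ poissonPMF (y ^ 2) k * cosStatistic θ k)
      (∫ u in (0 : ℝ)..y, 2 * u * cos (θ * u)) := by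
  let a : ℕ → ℝ := fun i ↦ i.casesOn 0 (cosCoeff θ)
  have hs : HasSum (fun i ↦ a i * (y ^ 2) ^ i / i !) (∫ u in (0 : ℝ)..y, 2 * u * cos (θ * u)) := by
    rw [← hasSum_nat_add_iff' 1]
    simpa [a] using hasSum_cosCoeff_mul_pow hy θ
  have ha : Summable fun i ↦ ‖a i * (y ^ 2) ^ i / (i ! : ℝ)‖ := by
    rw [← summable_nat_add_iff 1]
    exact summable_norm_cosCoeff_mul_pow θ y
  refine (hasSum_poissonPMF_mul_sum_choose hs ha).congr_fun fun k ↦ ?_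
  rw [sum_range_succ']
  simp [a, cosStatistic]

/-! ### The Jackson kernel -/

lemma norm_sum_exp_mul_I_sq {ι : Type*} (s : Finset ι) (f : ι → ℝ) :
    ‖∑ a ∈ s, Complex.exp (f a * Complex.I)‖ ^ 2 = ∑ p ∈ s ×ˢ s, cos (f p.1 - f p.2) := by
  have hconj (x : ℝ) : (starRingEnd ℂ) (Complex.exp (x * Complex.I)) =
      Complex.exp (-x * Complex.I) := by
    rw [← Complex.exp_conj]
    simp
  have hphase (p : ι × ι) : (f p.1 : ℂ) * Complex.I + -f p.2 * Complex.I =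
      (f p.1 - f p.2 : ℝ) * Complex.I := by
    push_cast
    ring
  rw [← Complex.normSq_eq_norm_sq, ← Complex.ofReal_re (Complex.normSq _), ← Complex.mul_conj,
    map_sum, sum_mul_sum, ← sum_product', Complex.re_sum]
  refine sum_congr rfl fun p _ ↦ ?_
  rw [hconj, ← Complex.exp_add, hphase, Complex.exp_ofReal_mul_I_re]

/-- The Fejér kernel without its normalising factor, `|∑_{a < M} exp (iat)|²`. -/
noncomputable def fejerKernel (M : ℕ) (t : ℝ) : ℝ :=
  ‖∑ a ∈ range M, Complex.exp ((a * t : ℝ) * Complex.I)‖ ^ 2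

lemma fejerKernel_nonneg (M : ℕ) (t : ℝ) : 0 ≤ fejerKernel M t := sq_nonneg _

lemma continuous_fejerKernel (M : ℕ) : Continuous (fejerKernel M) := by
  unfold fejerKernel
  fun_prop

lemma fejerKernel_eq_sum_cos (M : ℕ) (t : ℝ) :
    fejerKernel M t = ∑ p ∈ range M ×ˢ range M, cos ((p.1 - p.2) * t) := by
  simp only [fejerKernel, norm_sum_exp_mul_I_sq, sub_mul]

lemma fejerKernel_neg (M : ℕ) (t : ℝ) : fejerKernel M (-t) = fejerKernel M t := by
  simp only [fejerKernel_eq_sum_cos, mul_neg, cos_neg]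

lemma fejerKernel_two_pi_sub (M : ℕ) (t : ℝ) : fejerKernel M (2 * π - t) = fejerKernel M t := by
  simp only [fejerKernel_eq_sum_cos]
  refine sum_congr rfl fun p _ ↦ ?_
  rw [mul_sub]
  exact_mod_cast cos_int_mul_two_pi_sub ((p.1 - p.2) * t) (p.1 - p.2)

lemma fejerKernel_mul_sin_sq (M : ℕ) (t : ℝ) :
    fejerKernel M t * sin (t / 2) ^ 2 = sin (M * t / 2) ^ 2 := by
  have hnorm (x : ℝ) : ‖Complex.exp (x * Complex.I) - 1‖ ^ 2 = 4 * sin (x / 2) ^ 2 := by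
    rw [mul_comm, Complex.norm_exp_I_mul_ofReal_sub_one, norm_mul, mul_pow, norm_eq_abs,
      norm_eq_abs, sq_abs, sq_abs]
    norm_num
  have hgeom : (∑ a ∈ range M, Complex.exp ((a * t : ℝ) * Complex.I)) *
      (Complex.exp (t * Complex.I) - 1) = Complex.exp ((M * t : ℝ) * Complex.I) - 1 := by
    have hpow (a : ℕ) :
        Complex.exp ((a * t : ℝ) * Complex.I) = Complex.exp (t * Complex.I) ^ a := by
      rw [← Complex.exp_nat_mul]
      push_cast
      ring_nf
    simp only [hpow, geom_sum_mul]
  have h := congrArg (‖·‖ ^ 2) hgeom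
  simp only [norm_mul, mul_pow, hnorm] at h
  rw [fejerKernel]
  linarith

lemma fejerKernel_le_pi_div_sq (M : ℕ) {t : ℝ} (h0 : 0 < t) (hpi : t ≤ π) :
    fejerKernel M t ≤ (π / t) ^ 2 := by
  have hsin : t / π ≤ sin (t / 2) := by
    refine le_of_eq_of_le ?_ (mul_le_sin (x := t / 2) (by positivity) (by linarith))
    field_simp
  have hle : fejerKernel M t * (t / π) ^ 2 ≤ 1 :=
    calc fejerKernel M t * (t / π) ^ 2 ≤ fejerKernel M t * sin (t / 2) ^ 2 :=
          mul_le_mul_of_nonneg_left (by gcongr) (fejerKernel_nonneg M t)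
      _ ≤ 1 := fejerKernel_mul_sin_sq M t ▸ sin_sq_le_one _
  rwa [← inv_div, inv_pow, ← one_div, le_div_iff₀ (by positivity)]

lemma half_sq_le_fejerKernel {M : ℕ} (hM : 1 ≤ M) {t : ℝ} (ht : |t| ≤ 1 / M) :
    (M / 2 : ℝ) ^ 2 ≤ fejerKernel M t := by
  have hcos : ∀ a ∈ range M, 1 / 2 ≤ cos (a * t) := fun a ha ↦ by
    have haM : (a : ℝ) ≤ M := by exact_mod_cast (mem_range.mp ha).le
    have hat : |a * t| ≤ 1 := by
      rw [abs_mul, Nat.abs_cast]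
      calc (a : ℝ) * |t| ≤ M * (1 / M) := by gcongr
        _ = 1 := mul_one_div_cancel (by positivity)
    linarith [one_sub_sq_div_two_le_cos (x := a * t), (sq_le_one_iff_abs_le_one _).mpr hat]
  have hre : (M / 2 : ℝ) ≤ (∑ a ∈ range M, Complex.exp ((a * t : ℝ) * Complex.I)).re := by
    simp only [Complex.re_sum, Complex.exp_ofReal_mul_I_re]
    refine le_of_eq_of_le ?_ (card_nsmul_le_sum _ _ _ hcos)
    simp [div_eq_mul_inv]
  have hnorm := hre.trans (Complex.re_le_norm _)
  unfold fejerKernel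
  gcongr

/-- The frequencies occurring in the square of the Fejér kernel. -/
def jacksonFreq (x : (ℕ × ℕ) × ℕ × ℕ) : ℤ := x.1.1 + x.1.2 - (x.2.1 + x.2.2)

/-- The index set of the cosine expansion of the square of the Fejér kernel. -/
def jacksonIndex (M : ℕ) : Finset ((ℕ × ℕ) × ℕ × ℕ) :=
  (range M ×ˢ range M) ×ˢ range M ×ˢ range M

lemma fejerKernel_sq_eq_sum_cos (M : ℕ) (t : ℝ) :
    fejerKernel M t ^ 2 = ∑ x ∈ jacksonIndex M, cos (jacksonFreq x * t) := by
  have hsq : (∑ a ∈ range M, Complex.exp ((a * t : ℝ) * Complex.I)) ^ 2 =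
      ∑ p ∈ range M ×ˢ range M, Complex.exp (((p.1 + p.2) * t : ℝ) * Complex.I) := by
    rw [sq, sum_mul_sum, ← sum_product']
    refine sum_congr rfl fun p _ ↦ ?_
    rw [← Complex.exp_add]
    push_cast
    ring_nf
  rw [fejerKernel, ← norm_pow, hsq, norm_sum_exp_mul_I_sq]
  refine sum_congr rfl fun x _ ↦ ?_
  rw [jacksonFreq, ← sub_mul]
  push_cast
  rfl

lemma abs_jacksonFreq_lt {M : ℕ} {x : (ℕ × ℕ) × ℕ × ℕ} (hx : x ∈ jacksonIndex M) :
    |jacksonFreq x| < 2 * M := by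
  simp only [jacksonIndex, mem_product, mem_range] at hx
  rw [jacksonFreq, abs_lt]
  omega

/-- The total mass `∫_{-π}^π` of the Jackson kernel, the square of the Fejér kernel. -/
noncomputable def jacksonMass (M : ℕ) : ℝ := ∫ t in -π..π, fejerKernel M t ^ 2

lemma intervalIntegrable_fejerKernel_sq (M : ℕ) (a b : ℝ) :
    IntervalIntegrable (fun t ↦ fejerKernel M t ^ 2) volume a b :=
  ((continuous_fejerKernel M).pow 2).intervalIntegrable a b

lemma cube_div_eight_le_jacksonMass {M : ℕ} (hM : 1 ≤ M) : (M : ℝ) ^ 3 / 8 ≤ jacksonMass M := by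
  have hM1 : (1 : ℝ) ≤ M := by exact_mod_cast hM
  have h0 : (0 : ℝ) < 1 / M := by positivity
  have hpi : 1 / (M : ℝ) ≤ π := by
    linarith [(div_le_one (by linarith)).mpr hM1, pi_gt_three]
  calc (M : ℝ) ^ 3 / 8 = ∫ _ in -(1 / (M : ℝ))..1 / M, ((M / 2 : ℝ) ^ 2) ^ 2 := by
        rw [intervalIntegral.integral_const, smul_eq_mul]
        field_simp
        norm_num
    _ ≤ ∫ t in -(1 / (M : ℝ))..1 / M, fejerKernel M t ^ 2 := by
        refine intervalIntegral.integral_mono_on (by linarith) intervalIntegrable_const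
          (intervalIntegrable_fejerKernel_sq M _ _) fun t ht ↦ ?_
        have := half_sq_le_fejerKernel hM (abs_le.mpr ht)
        gcongr
    _ ≤ jacksonMass M :=
        intervalIntegral.integral_mono_interval (by linarith) (by linarith) hpi
          (Filter.Eventually.of_forall fun t ↦ sq_nonneg _)
          (intervalIntegrable_fejerKernel_sq M _ _)

/-- The mass of the Jackson kernel on `[x, π]`. -/
noncomputable def jacksonTail (M : ℕ) (x : ℝ) : ℝ := ∫ t in x..π, fejerKernel M t ^ 2

lemma integral_fejerKernel_sq_neg_pi_neg (M : ℕ) (x : ℝ) :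
    ∫ t in -π..-x, fejerKernel M t ^ 2 = jacksonTail M x := by
  rw [jacksonTail, ← intervalIntegral.integral_comp_neg]
  simp only [fejerKernel_neg]

lemma integral_fejerKernel_sq_add_jacksonTail (M : ℕ) (x y : ℝ) :
    (∫ t in x..y, fejerKernel M t ^ 2) + jacksonTail M y = jacksonTail M x :=
  intervalIntegral.integral_add_adjacent_intervals (intervalIntegrable_fejerKernel_sq M _ _)
    (intervalIntegrable_fejerKernel_sq M _ _)

lemma integral_fejerKernel_sq_nonneg (M : ℕ) {x y : ℝ} (h : x ≤ y) :
    0 ≤ ∫ t in x..y, fejerKernel M t ^ 2 :=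
  intervalIntegral.integral_nonneg h fun _ _ ↦ sq_nonneg _

lemma jacksonTail_nonneg (M : ℕ) {x : ℝ} (h : x ≤ π) : 0 ≤ jacksonTail M x :=
  integral_fejerKernel_sq_nonneg M h

lemma jacksonTail_antitone (M : ℕ) : Antitone (jacksonTail M) := fun x y h ↦ by
  linarith [integral_fejerKernel_sq_add_jacksonTail M x y, integral_fejerKernel_sq_nonneg M h]

lemma jacksonTail_neg_add_jacksonTail (M : ℕ) (x : ℝ) :
    jacksonTail M (-x) + jacksonTail M x = jacksonMass M := by
  rw [add_comm, ← integral_fejerKernel_sq_neg_pi_neg]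
  exact integral_fejerKernel_sq_add_jacksonTail M (-π) (-x)

lemma jacksonTail_le_pi_pow_div_cube (M : ℕ) {x : ℝ} (h0 : 0 < x) (hpi : x ≤ π) :
    jacksonTail M x ≤ π ^ 4 / x ^ 3 := by
  have hnot : (0 : ℝ) ∉ Set.uIcc x π := by
    rw [Set.uIcc_of_le hpi]
    exact fun h ↦ h0.not_ge h.1
  have hint : IntervalIntegrable (fun t : ℝ ↦ t ^ (-4 : ℤ)) volume x π :=
    intervalIntegral.intervalIntegrable_zpow (Or.inr hnot)
  have hcube : 0 < (π ^ 3)⁻¹ := by positivity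
  calc jacksonTail M x ≤ ∫ t in x..π, π ^ 4 * t ^ (-4 : ℤ) := by
        refine intervalIntegral.integral_mono_on hpi (intervalIntegrable_fejerKernel_sq M _ _)
          (hint.const_mul _) fun t ht ↦ ?_
        have hnonneg := fejerKernel_nonneg M t
        have hle := fejerKernel_le_pi_div_sq M (h0.trans_le ht.1) ht.2
        calc fejerKernel M t ^ 2 ≤ ((π / t) ^ 2) ^ 2 := by gcongr
          _ = π ^ 4 * t ^ (-4 : ℤ) := by
            rw [zpow_neg, ← pow_mul, div_pow, div_eq_mul_inv]
            rfl
    _ = π ^ 4 * (((x ^ 3)⁻¹ - (π ^ 3)⁻¹) / 3) := by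
        rw [intervalIntegral.integral_const_mul, integral_zpow (Or.inr ⟨by norm_num, hnot⟩),
          show (-4 : ℤ) + 1 = -(3 : ℕ) by norm_num, zpow_neg, zpow_neg, zpow_natCast, zpow_natCast]
        push_cast
        ring
    _ ≤ π ^ 4 * (x ^ 3)⁻¹ := by
        have : 0 < (x ^ 3)⁻¹ := by positivity
        gcongr
        linarith
    _ = π ^ 4 / x ^ 3 := (div_eq_mul_inv _ _).symm

lemma jacksonMass_pos {M : ℕ} (hM : 1 ≤ M) : 0 < jacksonMass M :=
  lt_of_lt_of_le (by positivity) (cube_div_eight_le_jacksonMass hM)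

lemma two_mul_jacksonTail_div_jacksonMass_le {M : ℕ} (hM : 1 ≤ M) {x : ℝ} (h0 : 0 ≤ x)
    (hpi : x ≤ π) :
    2 * jacksonTail M x / jacksonMass M ≤ 32 * π ^ 4 * (1 + (M * x) ^ 2)⁻¹ := by
  have hmass := cube_div_eight_le_jacksonMass hM
  have hmass0 := jacksonMass_pos hM
  have hpi1 : 1 ≤ π ^ 4 := one_le_pow₀ (by linarith [pi_gt_three])
  rw [← div_eq_mul_inv, le_div_iff₀ (by positivity)]
  rcases le_or_gt (M * x) 1 with hx | hx
  · have hratio : 2 * jacksonTail M x / jacksonMass M ≤ 1 := by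
      rw [div_le_one hmass0, ← jacksonTail_neg_add_jacksonTail M x]
      linarith [jacksonTail_antitone M (show -x ≤ x by linarith)]
    calc 2 * jacksonTail M x / jacksonMass M * (1 + (M * x) ^ 2) ≤ 1 * (1 + 1) := by
          gcongr
          exact pow_le_one₀ (by positivity) hx
      _ ≤ 32 * π ^ 4 := by linarith
  · have hx0 : 0 < x := pos_of_mul_pos_right (one_pos.trans hx) (Nat.cast_nonneg M)
    have htail := jacksonTail_le_pi_pow_div_cube M hx0 hpi
    set z := (M : ℝ) * x with hz
    calc 2 * jacksonTail M x / jacksonMass M * (1 + z ^ 2)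
        ≤ 2 * (π ^ 4 / x ^ 3) / ((M : ℝ) ^ 3 / 8) * (2 * z ^ 3) := by
          gcongr
          nlinarith [sq_nonneg z]
      _ = 32 * π ^ 4 := by
          rw [hz]
          field_simp
          norm_num

/-- A trigonometric polynomial approximation of the indicator of `[-β, β]`: its convolution with
the normalised Jackson kernel. -/
noncomputable def smoothedStep (M : ℕ) (β u : ℝ) : ℝ :=
  (∫ t in u - β..u + β, fejerKernel M t ^ 2) / jacksonMass M

/-- The weight of the frequency `e` in the cosine expansion of `smoothedStep`. -/
noncomputable def stepCoeff (M : ℕ) (β : ℝ) (e : ℤ) : ℝ :=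
  (∫ s in -β..β, cos (e * s)) / jacksonMass M

lemma integral_cos_mul_mul_cos (e β u : ℝ) :
    (∫ s in -β..β, cos (e * s)) * cos (e * u) = ∫ t in u - β..u + β, cos (e * t) := by
  have hsin : ∫ s in -β..β, sin (e * s) = 0 := by
    have h := intervalIntegral.integral_comp_neg (a := -β) (b := β) fun s ↦ sin (e * s)
    simp only [neg_neg, mul_neg, sin_neg, intervalIntegral.integral_neg] at h
    linarith
  have hadd (s : ℝ) :
      cos (e * (u + s)) = cos (e * s) * cos (e * u) - sin (e * s) * sin (e * u) := by
    rw [mul_add, cos_add]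
    ring
  rw [sub_eq_add_neg, ← intervalIntegral.integral_comp_add_left fun t ↦ cos (e * t)]
  simp_rw [hadd]
  rw [intervalIntegral.integral_sub (Continuous.intervalIntegrable (by fun_prop) _ _)
    (Continuous.intervalIntegrable (by fun_prop) _ _), intervalIntegral.integral_mul_const,
    intervalIntegral.integral_mul_const, hsin, zero_mul, sub_zero]

lemma smoothedStep_eq_sum (M : ℕ) (β u : ℝ) :
    smoothedStep M β u =
      ∑ x ∈ jacksonIndex M, stepCoeff M β (jacksonFreq x) * cos (jacksonFreq x * u) := by
  simp_rw [smoothedStep, fejerKernel_sq_eq_sum_cos]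
  rw [intervalIntegral.integral_finsetSum
    fun x _ ↦ Continuous.intervalIntegrable (by fun_prop) _ _, sum_div]
  refine sum_congr rfl fun x _ ↦ ?_
  rw [← integral_cos_mul_mul_cos, stepCoeff, div_mul_eq_mul_div]

lemma continuous_smoothedStep (M : ℕ) (β : ℝ) : Continuous (smoothedStep M β) := by
  simp_rw [funext (smoothedStep_eq_sum M β)]
  fun_prop

lemma abs_smoothedStep_sub_one_le {M : ℕ} (hM : 1 ≤ M) {β u : ℝ} (hβ : β ≤ 1) (hu : 0 ≤ u)
    (huβ : u ≤ β) :
    |smoothedStep M β u - 1| ≤ 32 * π ^ 4 * (1 + (M * (u - β)) ^ 2)⁻¹ := by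
  have hmass := jacksonMass_pos hM
  have hpi := pi_gt_three
  have hsplit : ∫ t in u - β..u + β, fejerKernel M t ^ 2 =
      jacksonMass M - jacksonTail M (β - u) - jacksonTail M (u + β) := by
    rw [← jacksonTail_neg_add_jacksonTail M (β - u), neg_sub,
      ← integral_fejerKernel_sq_add_jacksonTail M (u - β) (u + β)]
    ring
  have hdiff : smoothedStep M β u - 1 =
      -((jacksonTail M (β - u) + jacksonTail M (u + β)) / jacksonMass M) := by
    rw [smoothedStep, hsplit]
    field_simp
    ring
  have hnonneg := jacksonTail_nonneg M (x := β - u) (by linarith)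
  have hnonneg' := jacksonTail_nonneg M (x := u + β) (by linarith)
  have hanti := jacksonTail_antitone M (show β - u ≤ u + β by linarith)
  rw [hdiff, abs_neg, abs_of_nonneg (by positivity), ← neg_sub β u, mul_neg, neg_sq]
  refine le_trans ?_
    (two_mul_jacksonTail_div_jacksonMass_le hM (x := β - u) (by linarith) (by linarith))
  gcongr
  linarith

lemma abs_smoothedStep_le {M : ℕ} (hM : 1 ≤ M) {β u : ℝ} (hβ : 0 ≤ β) (hβu : β ≤ u) (hu : u ≤ 1) :
    |smoothedStep M β u| ≤ 32 * π ^ 4 * (1 + (M * (u - β)) ^ 2)⁻¹ := by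
  have hmass := jacksonMass_pos hM
  have hpi := pi_gt_three
  have hsplit := integral_fejerKernel_sq_add_jacksonTail M (u - β) (u + β)
  have htail := jacksonTail_nonneg M (x := u - β) (by linarith)
  have htail' := jacksonTail_nonneg M (x := u + β) (by linarith)
  have hnonneg := integral_fejerKernel_sq_nonneg M (show u - β ≤ u + β by linarith)
  rw [smoothedStep, abs_of_nonneg (by positivity)]
  refine le_trans ?_
    (two_mul_jacksonTail_div_jacksonMass_le hM (x := u - β) (by linarith) (by linarith))
  gcongr
  linarith

lemma integral_inv_one_add_mul_sub_sq_le {M : ℝ} (hM : 0 < M) (β a b : ℝ) :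
    ∫ u in a..b, (1 + (M * (u - β)) ^ 2)⁻¹ ≤ π / M := by
  simp_rw [mul_sub]
  rw [intervalIntegral.integral_comp_mul_sub (fun v ↦ (1 + v ^ 2)⁻¹) hM.ne' (M * β),
    integral_inv_one_add_sq, smul_eq_mul, inv_mul_eq_div]
  gcongr
  linarith [arctan_lt_pi_div_two (M * b - M * β), neg_pi_div_two_lt_arctan (M * a - M * β)]

lemma abs_integral_two_mul_mul_le {M : ℝ} (hM : 0 < M) {β a b y K : ℝ} {f : ℝ → ℝ} (ha : 0 ≤ a)
    (hab : a ≤ b) (hby : b ≤ y) (hK : 0 ≤ K)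
    (hf : ∀ u, a ≤ u → u ≤ b → |f u| ≤ K * (1 + (M * (u - β)) ^ 2)⁻¹) :
    |∫ u in a..b, 2 * u * f u| ≤ 2 * y * K * (π / M) := by
  have hcont : Continuous fun u : ℝ ↦ (1 + (M * (u - β)) ^ 2)⁻¹ :=
    Continuous.inv₀ (by fun_prop) fun u ↦ by positivity
  have hy : 0 ≤ y := ha.trans (hab.trans hby)
  calc |∫ u in a..b, 2 * u * f u| ≤ ∫ u in a..b, 2 * y * K * (1 + (M * (u - β)) ^ 2)⁻¹ := by
        rw [← norm_eq_abs]
        refine intervalIntegral.norm_integral_le_of_norm_le hab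
          (Filter.Eventually.of_forall fun u hu ↦ ?_)
          ((hcont.const_mul _).intervalIntegrable _ _)
        have hu0 : 0 ≤ u := ha.trans hu.1.le
        rw [norm_mul, norm_of_nonneg (by positivity), mul_assoc (2 * y)]
        have hfu := hf u hu.1.le hu.2
        have huy := hu.2.trans hby
        gcongr
        exact hfu
    _ = 2 * y * K * ∫ u in a..b, (1 + (M * (u - β)) ^ 2)⁻¹ :=
        intervalIntegral.integral_const_mul _ _
    _ ≤ 2 * y * K * (π / M) := by
        gcongr
        exact integral_inv_one_add_mul_sub_sq_le hM β a b

lemma integral_two_mul_mul_sub_sq {f : ℝ → ℝ} (hf : Continuous f) (z : ℝ) :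
    (∫ u in (0 : ℝ)..z, 2 * u * f u) - z ^ 2 = ∫ u in (0 : ℝ)..z, 2 * u * (f u - 1) := by
  have hsq : ∫ u in (0 : ℝ)..z, 2 * u = z ^ 2 := by
    rw [intervalIntegral.integral_const_mul, integral_id]
    ring
  rw [← hsq, ← intervalIntegral.integral_sub (Continuous.intervalIntegrable (by fun_prop) _ _)
    (Continuous.intervalIntegrable (by fun_prop) _ _)]
  simp only [mul_sub, mul_one]

lemma abs_integral_smoothedStep_sub_min_sq_le {M : ℕ} (hM : 1 ≤ M) {β y : ℝ} (hβ : 0 ≤ β)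
    (hβ1 : β ≤ 1) (hy : 0 ≤ y) (hy1 : y ≤ 1) :
    |(∫ u in (0 : ℝ)..y, 2 * u * smoothedStep M β u) - min y β ^ 2| ≤ 128 * π ^ 5 * y / M := by
  have hM0 : (0 : ℝ) < M := by exact_mod_cast hM
  have hcont := continuous_smoothedStep M β
  have hbound : 128 * π ^ 5 * y / M = 2 * (2 * y * (32 * π ^ 4) * (π / M)) := by ring
  have hpos : 0 ≤ 2 * y * (32 * π ^ 4) * (π / M) := by positivity
  have hbelow {z : ℝ} (hz : 0 ≤ z) (hzβ : z ≤ β) (hzy : z ≤ y) :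
      |(∫ u in (0 : ℝ)..z, 2 * u * smoothedStep M β u) - z ^ 2| ≤
        2 * y * (32 * π ^ 4) * (π / M) := by
    rw [integral_two_mul_mul_sub_sq hcont]
    exact abs_integral_two_mul_mul_le hM0 le_rfl hz hzy (by positivity)
      fun u h0 hu ↦ abs_smoothedStep_sub_one_le hM hβ1 h0 (hu.trans hzβ)
  rw [hbound]
  rcases le_total y β with hyβ | hβy
  · rw [min_eq_left hyβ]
    linarith [hbelow hy hyβ le_rfl]
  · have habove : |∫ u in β..y, 2 * u * smoothedStep M β u| ≤ 2 * y * (32 * π ^ 4) * (π / M) :=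
      abs_integral_two_mul_mul_le hM0 hβ hβy le_rfl (by positivity)
        fun u hu huy ↦ abs_smoothedStep_le hM hβ hu (huy.trans hy1)
    rw [min_eq_right hβy, ← intervalIntegral.integral_add_adjacent_intervals (b := β)
      (Continuous.intervalIntegrable (by fun_prop) _ _)
      (Continuous.intervalIntegrable (by fun_prop) _ _), add_sub_right_comm]
    exact (abs_add_le _ _).trans (by linarith [hbelow hβ le_rfl hβy])

lemma abs_integral_cos_int_mul_le (e : ℤ) {β : ℝ} (hβ : 0 ≤ β) (hβ1 : β ≤ 1) :
    |∫ s in -β..β, cos (e * s)| ≤ 4 / (1 + |(e : ℝ)|) := by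
  rcases eq_or_ne e 0 with rfl | he
  · simp only [Int.cast_zero, zero_mul, cos_zero, intervalIntegral.integral_const, abs_zero,
      add_zero, div_one, smul_eq_mul, mul_one, sub_neg_eq_add]
    rw [abs_of_nonneg (by linarith)]
    linarith
  · have he1 : (1 : ℝ) ≤ |(e : ℝ)| := by exact_mod_cast Int.one_le_abs he
    rw [intervalIntegral.integral_comp_mul_left cos (Int.cast_ne_zero.mpr he), integral_cos,
      smul_eq_mul, abs_mul, abs_inv, inv_mul_eq_div, div_le_div_iff₀ (by linarith) (by linarith)]
    have hsin : |sin (e * β) - sin (e * -β)| ≤ 2 :=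
      (abs_sub _ _).trans (by linarith [abs_sin_le_one (e * β), abs_sin_le_one (e * -β)])
    nlinarith [abs_nonneg (sin (e * β) - sin (e * -β))]

lemma abs_stepCoeff_le {M : ℕ} (hM : 1 ≤ M) {β : ℝ} (hβ : 0 ≤ β) (hβ1 : β ≤ 1) (e : ℤ) :
    |stepCoeff M β e| ≤ 8 / M ^ 3 * (4 / (1 + |(e : ℝ)|)) := by
  rw [stepCoeff, abs_div, abs_of_pos (jacksonMass_pos hM)]
  calc |∫ s in -β..β, cos (e * s)| / jacksonMass M
      ≤ 4 / (1 + |(e : ℝ)|) / ((M : ℝ) ^ 3 / 8) := by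
        gcongr
        exacts [abs_integral_cos_int_mul_le e hβ hβ1, cube_div_eight_le_jacksonMass hM]
    _ = 8 / M ^ 3 * (4 / (1 + |(e : ℝ)|)) := by field_simp

lemma sum_Icc_four_div_one_add_abs_le {M : ℕ} (hM : 1 ≤ M) :
    ∑ k ∈ Icc (-((2 * M : ℕ) : ℤ)) (2 * M : ℕ), 4 / (1 + |(k : ℝ)|) ≤ 24 * (1 + log M) := by
  have hM1 : (1 : ℝ) ≤ M := by exact_mod_cast hM
  have heven : Function.Even fun k : ℤ ↦ 4 / (1 + |(k : ℝ)|) := fun k ↦ by simp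
  have hharmonic : ∑ i ∈ range (2 * M + 1), 4 / (1 + |((i : ℤ) : ℝ)|) =
      4 * (harmonic (2 * M + 1) : ℝ) := by
    rw [harmonic]
    push_cast
    rw [mul_sum]
    refine sum_congr rfl fun i _ ↦ ?_
    rw [Nat.abs_cast, add_comm, div_eq_mul_inv]
  have hlog : log (2 * M + 1 : ℕ) ≤ 2 + log M := by
    calc log (2 * M + 1 : ℕ) ≤ log (3 * M) := by
          refine log_le_log (by positivity) ?_
          push_cast
          linarith
      _ = log 3 + log M := log_mul (by norm_num) (by positivity)
      _ ≤ 2 + log M := by linarith [log_le_sub_one_of_pos (show (0 : ℝ) < 3 by norm_num)]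
  rw [sum_Icc_of_even_eq_range heven, hharmonic]
  simp only [Int.cast_zero, abs_zero, nsmul_eq_mul]
  push_cast
  linarith [harmonic_le_one_add_log (2 * M + 1), log_natCast_nonneg M]

lemma sum_range_four_div_one_add_abs_sub_le {M : ℕ} (hM : 1 ≤ M) {s : ℤ} (hs : -M ≤ s)
    (hs' : s ≤ 2 * M) :
    ∑ d ∈ range M, 4 / (1 + |((s - d : ℤ) : ℝ)|) ≤ 24 * (1 + log M) := by
  rw [← sum_image (f := fun k : ℤ ↦ 4 / (1 + |(k : ℝ)|)) (g := fun d : ℕ ↦ s - d)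
    fun d _ d' _ h ↦ by simpa using h]
  refine le_trans (sum_le_sum_of_subset_of_nonneg (fun k hk ↦ ?_) fun k _ _ ↦ by positivity)
    (sum_Icc_four_div_one_add_abs_le hM)
  obtain ⟨d, hd, rfl⟩ := mem_image.mp hk
  rw [mem_range] at hd
  rw [mem_Icc]
  omega

lemma sum_abs_stepCoeff_le {M : ℕ} (hM : 1 ≤ M) {β : ℝ} (hβ : 0 ≤ β) (hβ1 : β ≤ 1) :
    ∑ x ∈ jacksonIndex M, |stepCoeff M β (jacksonFreq x)| ≤ 192 * (1 + log M) := by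
  have hsum : ∑ x ∈ jacksonIndex M, 4 / (1 + |(jacksonFreq x : ℝ)|) ≤
      M ^ 3 * (24 * (1 + log M)) := by
    have hinner : ∀ p ∈ range M ×ˢ range M, ∀ c ∈ range M,
        ∑ d ∈ range M, 4 / (1 + |(jacksonFreq (p, (c, d)) : ℝ)|) ≤ 24 * (1 + log M) := by
      intro p hp c hc
      rw [mem_product, mem_range, mem_range] at hp
      rw [mem_range] at hc
      simp only [jacksonFreq, ← sub_sub]
      exact sum_range_four_div_one_add_abs_sub_le hM (by omega) (by omega)
    rw [jacksonIndex, sum_product]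
    refine (sum_le_sum fun p hp ↦ (sum_product _ _ _).trans_le
      (sum_le_sum fun c hc ↦ hinner p hp c hc)).trans_eq ?_
    simp only [sum_const, card_product, card_range, nsmul_eq_mul]
    push_cast
    ring
  calc ∑ x ∈ jacksonIndex M, |stepCoeff M β (jacksonFreq x)|
      ≤ ∑ x ∈ jacksonIndex M, 8 / (M : ℝ) ^ 3 * (4 / (1 + |(jacksonFreq x : ℝ)|)) :=
        sum_le_sum fun x _ ↦ abs_stepCoeff_le hM hβ hβ1 _
    _ = 8 / (M : ℝ) ^ 3 * ∑ x ∈ jacksonIndex M, 4 / (1 + |(jacksonFreq x : ℝ)|) := by rw [mul_sum]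
    _ ≤ 8 / (M : ℝ) ^ 3 * (M ^ 3 * (24 * (1 + log M))) := by gcongr
    _ = 192 * (1 + log M) := by
        field_simp
        norm_num

/-! ### Mean squared error of sums of statistics with bounded increments -/

lemma abs_sub_le_mul_abs_sub_of_succ {g : ℕ → ℝ} {B : ℝ} (hg : ∀ k, |g (k + 1) - g k| ≤ B)
    (i j : ℕ) : |g i - g j| ≤ B * |(i : ℝ) - j| := by
  wlog hij : i ≤ j generalizing i j
  · rw [abs_sub_comm, abs_sub_comm (i : ℝ)]
    exact this j i (le_of_not_ge hij)
  have h := dist_le_Ico_sum_of_dist_le hij (f := g) (d := fun _ ↦ B)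
    fun {k} _ _ ↦ by rw [dist_comm]; exact hg k
  rw [sum_const, Nat.card_Ico, nsmul_eq_mul, Nat.cast_sub hij, mul_comm] at h
  rwa [abs_sub_comm (i : ℝ), abs_of_nonneg (sub_nonneg.mpr (Nat.cast_le.mpr hij))]

/-- The centring constant is the value at `l` of a Lipschitz extension of `g` to the real line. -/
lemma exists_forall_abs_sub_le_mul_abs_sub {g : ℕ → ℝ} {B : ℝ} (hg : ∀ k, |g (k + 1) - g k| ≤ B)
    (l : ℝ) : ∃ c, ∀ k : ℕ, |g k - c| ≤ B * |k - l| := by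
  lift B to NNReal using (abs_nonneg _).trans (hg 0)
  have hlip : LipschitzOnWith B (fun x : ℝ ↦ g ⌊x⌋₊) (Set.range ((↑) : ℕ → ℝ)) := by
    refine LipschitzOnWith.of_dist_le_mul ?_
    rintro _ ⟨i, rfl⟩ _ ⟨j, rfl⟩
    simpa [Real.dist_eq] using abs_sub_le_mul_abs_sub_of_succ hg i j
  obtain ⟨G, hG, hGg⟩ := hlip.extend_real
  refine ⟨G l, fun k ↦ ?_⟩
  have hGk : g k = G k := by simpa using hGg (Set.mem_range_self k)
  simpa [hGk, Real.dist_eq] using hG.dist_le_mul k l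

/-- The Poisson law of real mean `l`, as a measure on `ℕ`; it is `Poisson(0)` for `l < 0`. -/
noncomputable abbrev poissonLaw (l : ℝ) : Measure ℕ := ProbabilityTheory.poissonMeasure l.toNNReal

lemma exp_neg_toNNReal_mul_pow_div_factorial {l : ℝ} (hl : 0 ≤ l) (k : ℕ) :
    exp (-(l.toNNReal : ℝ)) * (l.toNNReal : ℝ) ^ k / k ! = poissonPMF l k := by
  rw [coe_toNNReal l hl, poissonPMF]

lemma integral_poissonLaw_of_hasSum {l e : ℝ} (hl : 0 ≤ l) {g : ℕ → ℝ}
    (h : HasSum (fun k ↦ poissonPMF l k * g k) e) : ∫ k, g k ∂poissonLaw l = e := by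
  rw [ProbabilityTheory.integral_poissonMeasure]
  simp_rw [exp_neg_toNNReal_mul_pow_div_factorial hl, smul_eq_mul]
  exact h.tsum_eq

lemma integrable_poissonLaw_of_summable {l : ℝ} (hl : 0 ≤ l) {g : ℕ → ℝ}
    (h : Summable fun k ↦ poissonPMF l k * ‖g k‖) : Integrable g (poissonLaw l) := by
  rw [ProbabilityTheory.integrable_poissonMeasure_iff]
  simpa only [exp_neg_toNNReal_mul_pow_div_factorial hl] using h

lemma integrable_sub_sq_poissonLaw {l : ℝ} (hl : 0 ≤ l) :
    Integrable (fun k : ℕ ↦ ((k : ℝ) - l) ^ 2) (poissonLaw l) :=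
  integrable_poissonLaw_of_summable hl <| by
    simpa only [norm_of_nonneg (sq_nonneg _)] using (hasSum_poissonPMF_mul_sub_sq l).summable

section BoundedIncrements

variable {l B : ℝ} {g : ℕ → ℝ}

lemma exists_forall_sub_sq_le_mul_sub_sq (hg : ∀ k, |g (k + 1) - g k| ≤ B) (l : ℝ) :
    ∃ c, ∀ k : ℕ, (g k - c) ^ 2 ≤ B ^ 2 * (k - l) ^ 2 := by
  obtain ⟨c, hc⟩ := exists_forall_abs_sub_le_mul_abs_sub hg l
  refine ⟨c, fun k ↦ ?_⟩
  rw [← sq_abs (g k - c), ← sq_abs ((k : ℝ) - l), ← mul_pow]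
  exact pow_le_pow_left₀ (abs_nonneg _) (hc k) 2

lemma memLp_two_poissonLaw (hl : 0 ≤ l) (hg : ∀ k, |g (k + 1) - g k| ≤ B) :
    MemLp g 2 (poissonLaw l) := by
  obtain ⟨c, hc⟩ := exists_forall_sub_sq_le_mul_sub_sq hg l
  have hint : Integrable (fun k ↦ (g k - c) ^ 2) (poissonLaw l) :=
    ((integrable_sub_sq_poissonLaw hl).const_mul (B ^ 2)).mono' .of_discrete
      (Filter.Eventually.of_forall fun k ↦ by
        rw [norm_of_nonneg (sq_nonneg _)]
        exact hc k)
  have hadd := ((memLp_two_iff_integrable_sq .of_discrete).mpr hint).add (memLp_const c)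
  have hfun : (fun k ↦ g k - c) + (fun _ ↦ c) = g := funext fun k ↦ sub_add_cancel (g k) c
  rwa [hfun] at hadd

lemma variance_poissonLaw_le (hl : 0 ≤ l) (hg : ∀ k, |g (k + 1) - g k| ≤ B) :
    Var[g; poissonLaw l] ≤ B ^ 2 * l := by
  obtain ⟨c, hc⟩ := exists_forall_sub_sq_le_mul_sub_sq hg l
  have hint := (integrable_sub_sq_poissonLaw hl).const_mul (B ^ 2)
  calc Var[g; poissonLaw l] = Var[fun k ↦ g k - c; poissonLaw l] :=
        (ProbabilityTheory.variance_sub_const .of_discrete c).symm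
    _ ≤ ∫ k, (g k - c) ^ 2 ∂poissonLaw l :=
        ProbabilityTheory.variance_le_expectation_sq .of_discrete
    _ ≤ ∫ k : ℕ, B ^ 2 * ((k : ℝ) - l) ^ 2 ∂poissonLaw l :=
        integral_mono_of_nonneg (Filter.Eventually.of_forall fun _ ↦ sq_nonneg _) hint
          (Filter.Eventually.of_forall hc)
    _ = B ^ 2 * l := by
        rw [integral_const_mul, integral_poissonLaw_of_hasSum hl (hasSum_poissonPMF_mul_sub_sq l)]

end BoundedIncrements

section ProductLaw

variable {S n : ℕ} {p : Fin S → ℝ}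

/-- The law of the observations in the Poisson sampling model with sample size `n`. -/
noncomputable abbrev poissonSampleLaw (n : ℕ) (p : Fin S → ℝ) : Measure (Fin S → ℕ) :=
  Measure.pi fun i ↦ poissonLaw (n * p i)

lemma poissonSampleLaw_singleton (hp : ∀ i, 0 ≤ p i) (x : Fin S → ℕ) :
    poissonSampleLaw n p {x} = ENNReal.ofReal (prodPMF n p x) := by
  have hl (i : Fin S) : 0 ≤ n * p i := mul_nonneg n.cast_nonneg (hp i)
  rw [Measure.pi_singleton, prodPMF,
    ENNReal.ofReal_prod_of_nonneg fun i _ ↦ poissonPMF_nonneg (hl i) _]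
  refine prod_congr rfl fun i _ ↦ ?_
  rw [ProbabilityTheory.poissonMeasure_singleton, exp_neg_toNNReal_mul_pow_div_factorial (hl i)]

lemma risk_eq_ofReal_integral (hp : ∀ i, 0 ≤ p i) (L : ℝ) {est : (Fin S → ℕ) → ℝ}
    (hest : MemLp est 2 (poissonSampleLaw n p)) :
    risk n p L est = ENNReal.ofReal (∫ x, (est x - L) ^ 2 ∂poissonSampleLaw n p) := by
  have hint : Integrable (fun x ↦ (est x - L) ^ 2) (poissonSampleLaw n p) :=
    (hest.sub (memLp_const L)).integrable_sq
  rw [ofReal_integral_eq_lintegral_ofReal hint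
    (Filter.Eventually.of_forall fun x ↦ sq_nonneg _), lintegral_countable', risk]
  refine tsum_congr fun x ↦ ?_
  rw [poissonSampleLaw_singleton hp, mul_comm, ENNReal.ofReal_mul (sq_nonneg _)]

lemma integral_sub_sq_eq_sq_add_variance {Ω : Type*} [MeasurableSpace Ω] {μ : Measure Ω}
    [IsProbabilityMeasure μ] {X : Ω → ℝ} (hX : MemLp X 2 μ) (L : ℝ) :
    ∫ ω, (X ω - L) ^ 2 ∂μ = (∫ ω, X ω ∂μ - L) ^ 2 + Var[X; μ] := by
  have hXL : MemLp (fun ω ↦ X ω - L) 2 μ := hX.sub (memLp_const L)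
  have hmean : ∫ ω, X ω - L ∂μ = ∫ ω, X ω ∂μ - L := by
    simp [integral_sub (hX.integrable one_le_two) (integrable_const L)]
  rw [← ProbabilityTheory.variance_sub_const hX.aestronglyMeasurable L,
    ProbabilityTheory.variance_eq_sub hXL, hmean]
  simp

variable {B : ℝ} {g : Fin S → ℕ → ℝ}

lemma memLp_sum_poissonSampleLaw (hp : ∀ i, 0 ≤ p i)
    (hg : ∀ i k, |g i (k + 1) - g i k| ≤ B) :
    MemLp (fun x ↦ ∑ i, g i (x i)) 2 (poissonSampleLaw n p) :=
  memLp_finsetSum _ fun i _ ↦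
    (memLp_two_poissonLaw (mul_nonneg n.cast_nonneg (hp i)) (hg i)).comp_measurePreserving
      (measurePreserving_eval _ i)

lemma integral_sum_poissonSampleLaw (hp : ∀ i, 0 ≤ p i)
    (hg : ∀ i k, |g i (k + 1) - g i k| ≤ B) {e : Fin S → ℝ}
    (he : ∀ i, HasSum (fun k ↦ poissonPMF (n * p i) k * g i k) (e i)) :
    ∫ x, ∑ i, g i (x i) ∂poissonSampleLaw n p = ∑ i, e i := by
  have hl (i : Fin S) : 0 ≤ n * p i := mul_nonneg n.cast_nonneg (hp i)
  rw [integral_finsetSum]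
  · refine sum_congr rfl fun i _ ↦ ?_
    rw [integral_comp_eval (μ := fun i ↦ poissonLaw (n * p i)) (f := g i) .of_discrete,
      integral_poissonLaw_of_hasSum (hl i) (he i)]
  · exact fun i _ ↦ ((memLp_two_poissonLaw (hl i) (hg i)).comp_measurePreserving
      (measurePreserving_eval (fun i ↦ poissonLaw (n * p i)) i)).integrable one_le_two

lemma variance_sum_poissonSampleLaw_le (hp : ∀ i, 0 ≤ p i)
    (hg : ∀ i k, |g i (k + 1) - g i k| ≤ B) :
    Var[fun x ↦ ∑ i, g i (x i); poissonSampleLaw n p] ≤ ∑ i, B ^ 2 * (n * p i) := by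
  have hl (i : Fin S) : 0 ≤ n * p i := mul_nonneg n.cast_nonneg (hp i)
  have hsum := ProbabilityTheory.variance_sum_pi (μ := fun i ↦ poissonLaw (n * p i)) (X := g)
    fun i ↦ memLp_two_poissonLaw (hl i) (hg i)
  have hfun : (∑ i, fun x : Fin S → ℕ ↦ g i (x i)) = fun x ↦ ∑ i, g i (x i) := by
    ext x
    simp
  rw [← hfun, hsum]
  exact sum_le_sum fun i _ ↦ variance_poissonLaw_le (hl i) (hg i)

theorem risk_sum_le (hp : ∀ i, 0 ≤ p i) (hg : ∀ i k, |g i (k + 1) - g i k| ≤ B) {e : Fin S → ℝ}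
    (he : ∀ i, HasSum (fun k ↦ poissonPMF (n * p i) k * g i k) (e i)) (L : ℝ) :
    risk n p L (fun x ↦ ∑ i, g i (x i)) ≤
      ENNReal.ofReal ((∑ i, e i - L) ^ 2 + ∑ i, B ^ 2 * (n * p i)) := by
  have hmem := memLp_sum_poissonSampleLaw (n := n) hp hg
  rw [risk_eq_ofReal_integral hp L hmem, integral_sub_sq_eq_sq_add_variance hmem,
    integral_sum_poissonSampleLaw hp hg he]
  have := variance_sum_poissonSampleLaw_le (n := n) hp hg
  gcongr

end ProductLaw

/-! ### The upper bound -/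

/-- The statistic of a Poisson observation `k` of mean `l` that estimates `|l - m|`. Since
`|l - m| = m + l - 2 * min l m`, it replaces `min l m` by the unbiased estimator of
`n * ∫ u in 0..√(l / n), 2 * u * smoothedStep M √(m / n) u`. -/
noncomputable def absDevStatistic (n M : ℕ) (m : ℝ) (k : ℕ) : ℝ :=
  m + k - 2 * ∑ x ∈ jacksonIndex M,
    stepCoeff M √(m / n) (jacksonFreq x) * cosStatistic (jacksonFreq x / √n) k

/-- A bound on the increments of `absDevStatistic n M m`, uniform in `m ∈ [0, n]`. -/
noncomputable def incrementBound (n M : ℕ) : ℝ :=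
  1 + 2 * (192 * (1 + log M) * exp (2 * M ^ 2 / n))

lemma incrementBound_nonneg (n M : ℕ) : 0 ≤ incrementBound n M := by
  have := log_natCast_nonneg M
  unfold incrementBound
  positivity

section AbsDevStatistic

variable {n M : ℕ} {l m : ℝ}

lemma sqrt_div_le_one (h : l ≤ n) : √(l / n) ≤ 1 := by
  rw [sqrt_le_one]
  exact div_le_one_of_le₀ h n.cast_nonneg

lemma mul_sqrt_div_sq (hn : 1 ≤ n) (hl : 0 ≤ l) : n * √(l / n) ^ 2 = l := by
  rw [sq_sqrt (by positivity)]
  field_simp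

lemma abs_normalizedHermite_jacksonFreq_le {x : (ℕ × ℕ) × ℕ × ℕ} (hx : x ∈ jacksonIndex M)
    (n k : ℕ) :
    |normalizedHermite (jacksonFreq x / √n) k| ≤ exp (2 * M ^ 2 / n) := by
  refine (abs_normalizedHermite_le _ k).trans (exp_le_exp.mpr ?_)
  have hfreq : (jacksonFreq x : ℝ) ^ 2 ≤ (2 * M) ^ 2 := by
    rw [← sq_abs]
    gcongr
    exact_mod_cast (abs_jacksonFreq_lt hx).le
  rw [div_pow, sq_sqrt n.cast_nonneg]
  calc (jacksonFreq x : ℝ) ^ 2 / n / 2 ≤ (2 * (M : ℝ)) ^ 2 / n / 2 := by gcongr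
    _ = 2 * (M : ℝ) ^ 2 / n := by ring

lemma abs_absDevStatistic_succ_sub_le (hM : 1 ≤ M) (hmn : m ≤ n) (k : ℕ) :
    |absDevStatistic n M m (k + 1) - absDevStatistic n M m k| ≤ incrementBound n M := by
  set β := √(m / n)
  have hinc : absDevStatistic n M m (k + 1) - absDevStatistic n M m k = 1 - 2 *
      ∑ x ∈ jacksonIndex M,
        stepCoeff M β (jacksonFreq x) * normalizedHermite (jacksonFreq x / √n) k := by
    simp only [absDevStatistic, cosStatistic_succ, mul_add, sum_add_distrib]
    push_cast
    ring
  have hsum : |∑ x ∈ jacksonIndex M,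
      stepCoeff M β (jacksonFreq x) * normalizedHermite (jacksonFreq x / √n) k| ≤
      192 * (1 + log M) * exp (2 * M ^ 2 / n) :=
    calc _ ≤ ∑ x ∈ jacksonIndex M, |stepCoeff M β (jacksonFreq x)| * exp (2 * M ^ 2 / n) := by
          refine (abs_sum_le_sum_abs _ _).trans (sum_le_sum fun x hx ↦ ?_)
          rw [abs_mul]
          gcongr
          exact abs_normalizedHermite_jacksonFreq_le hx n k
      _ ≤ 192 * (1 + log M) * exp (2 * M ^ 2 / n) := by
          rw [← sum_mul]
          gcongr
          exact sum_abs_stepCoeff_le hM (sqrt_nonneg _) (sqrt_div_le_one hmn)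
  rw [hinc, incrementBound]
  refine (abs_sub _ _).trans ?_
  rw [abs_one, abs_mul, abs_two]
  gcongr

lemma hasSum_poissonPMF_mul_cosStatistic_div_sqrt (hn : 1 ≤ n) (hl : 0 ≤ l) (θ : ℝ) :
    HasSum (fun k ↦ poissonPMF l k * cosStatistic (θ / √n) k)
      (n * ∫ v in (0 : ℝ)..√(l / n), 2 * v * cos (θ * v)) := by
  have hsqrt : 0 < √(n : ℝ) := by positivity
  have hscale : √n * √(l / n) = √l := by
    rw [sqrt_div' _ n.cast_nonneg]
    field_simp
  have hsubst : ∫ u in (0 : ℝ)..√l, 2 * u * cos (θ / √n * u) =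
      √n * ∫ v in (0 : ℝ)..√(l / n), 2 * (√n * v) * cos (θ / √n * (√n * v)) := by
    rw [intervalIntegral.mul_integral_comp_mul_left (f := fun u ↦ 2 * u * cos (θ / √n * u)),
      mul_zero, hscale]
  have hint (v : ℝ) : 2 * (√n * v) * cos (θ / √n * (√n * v)) = √n * (2 * v * cos (θ * v)) := by
    rw [← mul_assoc (θ / √n), div_mul_cancel₀ θ hsqrt.ne']
    ring
  have h := hasSum_poissonPMF_mul_cosStatistic (sqrt_nonneg l) (θ / √n)
  simp_rw [sq_sqrt hl, hsubst, hint, intervalIntegral.integral_const_mul, ← mul_assoc,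
    mul_self_sqrt n.cast_nonneg] at h
  simpa only [mul_assoc] using h

lemma integral_two_mul_mul_smoothedStep (M : ℕ) (β y : ℝ) :
    ∫ v in (0 : ℝ)..y, 2 * v * smoothedStep M β v = ∑ x ∈ jacksonIndex M,
      stepCoeff M β (jacksonFreq x) * ∫ v in (0 : ℝ)..y, 2 * v * cos (jacksonFreq x * v) := by
  simp_rw [smoothedStep_eq_sum, mul_sum, mul_left_comm (2 * _) (stepCoeff _ _ _)]
  rw [intervalIntegral.integral_finsetSum fun x _ ↦
    Continuous.intervalIntegrable (by fun_prop) _ _]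
  simp_rw [intervalIntegral.integral_const_mul]

lemma hasSum_poissonPMF_mul_absDevStatistic (hn : 1 ≤ n) (hl : 0 ≤ l) (M : ℕ) (m : ℝ) :
    HasSum (fun k ↦ poissonPMF l k * absDevStatistic n M m k)
      (m + l - 2 * (n * ∫ v in (0 : ℝ)..√(l / n), 2 * v * smoothedStep M √(m / n) v)) := by
  have hcos := hasSum_sum fun x (_ : x ∈ jacksonIndex M) ↦
    (hasSum_poissonPMF_mul_cosStatistic_div_sqrt hn hl (jacksonFreq x)).mul_left
      (stepCoeff M √(m / n) (jacksonFreq x))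
  simp_rw [mul_left_comm _ (poissonPMF l _), mul_left_comm _ (n : ℝ), ← mul_sum,
    ← integral_two_mul_mul_smoothedStep] at hcos
  have h := (((hasSum_poissonPMF l).mul_right m).add (hasSum_poissonPMF_mul_id l)).sub
    (hcos.mul_left 2)
  simp_rw [mul_left_comm (2 : ℝ) (poissonPMF l _), ← mul_add, ← mul_sub, one_mul] at h
  exact h

lemma abs_sub_eq_add_sub_mul_min_sq (hn : 1 ≤ n) (hl : 0 ≤ l) (hm : 0 ≤ m) :
    |l - m| = m + l - 2 * (n * min √(l / n) √(m / n) ^ 2) := by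
  rcases le_total l m with h | h
  · rw [min_eq_left (by gcongr), mul_sqrt_div_sq hn hl, abs_of_nonpos (sub_nonpos.mpr h)]
    ring
  · rw [min_eq_right (by gcongr), mul_sqrt_div_sq hn hm, abs_of_nonneg (sub_nonneg.mpr h)]
    ring

lemma exists_hasSum_poissonPMF_mul_absDevStatistic (hn : 1 ≤ n) (hM : 1 ≤ M) (hm : 0 ≤ m)
    (hmn : m ≤ n) (hl : 0 ≤ l) (hln : l ≤ n) :
    ∃ e, HasSum (fun k ↦ poissonPMF l k * absDevStatistic n M m k) e ∧
      |e - (|l - m|)| ≤ 256 * π ^ 5 * (n * √(l / n)) / M := by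
  refine ⟨_, hasSum_poissonPMF_mul_absDevStatistic hn hl M m, ?_⟩
  have hstep := abs_integral_smoothedStep_sub_min_sq_le hM (sqrt_nonneg _) (sqrt_div_le_one hmn)
    (sqrt_nonneg _) (sqrt_div_le_one hln)
  rw [abs_sub_eq_add_sub_mul_min_sq hn hl hm, sub_sub_sub_cancel_left, ← mul_sub, ← mul_sub,
    abs_mul, abs_mul, abs_two, Nat.abs_cast, abs_sub_comm]
  calc 2 * (n * |_|) ≤ 2 * ((n : ℝ) * (128 * π ^ 5 * √(l / n) / M)) := by gcongr
    _ = 256 * π ^ 5 * (n * √(l / n)) / M := by ring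

end AbsDevStatistic

lemma IsDist.le_one {S : ℕ} {p : Fin S → ℝ} (hp : IsDist p) (i : Fin S) : p i ≤ 1 := by
  rw [← hp.2]
  exact single_le_sum (fun j _ ↦ hp.1 j) (mem_univ i)

lemma IsDist.sum_sqrt_le {S : ℕ} {p : Fin S → ℝ} (hp : IsDist p) : ∑ i, √(p i) ≤ √S := by
  refine le_sqrt_of_sq_le (sq_sum_le_card_mul_sum_sq.trans_eq ?_)
  simp_rw [sq_sqrt (hp.1 _), hp.2, card_univ, Fintype.card_fin, mul_one]

/-- The estimator of `L1dist p q` that sums the estimates of `|p i - q i|`. -/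
noncomputable def l1Estimator {S : ℕ} (n M : ℕ) (q : Fin S → ℝ) (x : Fin S → ℕ) : ℝ :=
  ∑ i, absDevStatistic n M (n * q i) (x i) / n

section L1Estimator

variable {S n M : ℕ} {p q : Fin S → ℝ}

lemma exists_hasSum_bias_le (hn : 1 ≤ n) (hM : 1 ≤ M) (hp : IsDist p) (hq : IsDist q) (i : Fin S) :
    ∃ e, HasSum (fun k ↦ poissonPMF (n * p i) k * (absDevStatistic n M (n * q i) k / n)) e ∧
      |e - (|p i - q i|)| ≤ 256 * π ^ 5 / M * √(p i) := by
  have hrange {r : Fin S → ℝ} (hr : IsDist r) : 0 ≤ n * r i ∧ n * r i ≤ n :=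
    ⟨mul_nonneg n.cast_nonneg (hr.1 i), mul_le_of_le_one_right n.cast_nonneg (hr.le_one i)⟩
  obtain ⟨e, he, hbias⟩ := exists_hasSum_poissonPMF_mul_absDevStatistic hn hM
    (hrange hq).1 (hrange hq).2 (hrange hp).1 (hrange hp).2
  refine ⟨e / n, by simpa only [mul_div_assoc] using he.div_const (n : ℝ), ?_⟩
  have hn0 : (0 : ℝ) < n := by exact_mod_cast hn
  rw [← mul_sub, abs_mul, Nat.abs_cast, mul_div_cancel_left₀ _ hn0.ne'] at hbias
  calc |e / n - (|p i - q i|)| = |e - n * (|p i - q i|)| / n := by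
        rw [← abs_of_pos hn0, ← abs_div, abs_of_pos hn0, sub_div, mul_div_cancel_left₀ _ hn0.ne']
    _ ≤ 256 * π ^ 5 * (n * √(p i)) / M / n := by gcongr
    _ = 256 * π ^ 5 / M * √(p i) := by field_simp

lemma risk_l1Estimator_le (hn : 1 ≤ n) (hM : 1 ≤ M) (hp : IsDist p) (hq : IsDist q) :
    risk n p (L1dist p q) (l1Estimator n M q) ≤
      ENNReal.ofReal ((256 * π ^ 5) ^ 2 * S / M ^ 2 + incrementBound n M ^ 2 / n) := by
  choose e he hbias using exists_hasSum_bias_le hn hM hp hq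
  have hinc (i : Fin S) (k : ℕ) : |absDevStatistic n M (n * q i) (k + 1) / n -
      absDevStatistic n M (n * q i) k / n| ≤ incrementBound n M / n := by
    rw [← sub_div, abs_div, Nat.abs_cast]
    gcongr
    exact abs_absDevStatistic_succ_sub_le hM
      (mul_le_of_le_one_right n.cast_nonneg (hq.le_one i)) k
  refine (risk_sum_le hp.1 hinc he _).trans (ENNReal.ofReal_le_ofReal ?_)
  have hsum : |∑ i, e i - L1dist p q| ≤ 256 * π ^ 5 / M * √S :=
    calc |∑ i, e i - L1dist p q| ≤ ∑ i, |e i - (|p i - q i|)| := by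
          rw [L1dist, ← sum_sub_distrib]
          exact abs_sum_le_sum_abs _ _
      _ ≤ ∑ i, 256 * π ^ 5 / M * √(p i) := sum_le_sum fun i _ ↦ hbias i
      _ ≤ 256 * π ^ 5 / M * √S := by
          rw [← mul_sum]
          gcongr
          exact hp.sum_sqrt_le
  have hsq : (∑ i, e i - L1dist p q) ^ 2 ≤ (256 * π ^ 5) ^ 2 * S / M ^ 2 :=
    calc (∑ i, e i - L1dist p q) ^ 2 ≤ (256 * π ^ 5 / M * √S) ^ 2 := sq_le_sq' (abs_le.mp hsum).1
          (abs_le.mp hsum).2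
      _ = (256 * π ^ 5) ^ 2 * S / M ^ 2 := by
          rw [mul_pow, sq_sqrt S.cast_nonneg]
          ring
  have hvar : ∑ i, (incrementBound n M / n) ^ 2 * (n * p i) = incrementBound n M ^ 2 / n := by
    rw [← mul_sum, ← mul_sum, hp.2]
    field_simp
  rw [hvar]
  gcongr

end L1Estimator

lemma exists_nat_sq_mem_Icc {z : ℝ} (hz : 1 ≤ z) :
    ∃ M : ℕ, 1 ≤ M ∧ z / 4 ≤ (M : ℝ) ^ 2 ∧ (M : ℝ) ^ 2 ≤ z := by
  have hsqrt : 1 ≤ √z := one_le_sqrt.mpr hz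
  have hfloor : 1 ≤ ⌊√z⌋₊ := Nat.le_floor (by simpa using hsqrt)
  have hlower : √z / 2 ≤ ⌊√z⌋₊ := by
    have : (1 : ℝ) ≤ ⌊√z⌋₊ := by exact_mod_cast hfloor
    linarith [Nat.lt_floor_add_one √z]
  refine ⟨⌊√z⌋₊, hfloor, ?_, ?_⟩
  · calc z / 4 = (√z / 2) ^ 2 := by
          rw [div_pow, sq_sqrt (by linarith)]
          norm_num
      _ ≤ (⌊√z⌋₊ : ℝ) ^ 2 := by gcongr
  · calc (⌊√z⌋₊ : ℝ) ^ 2 ≤ √z ^ 2 := by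
          gcongr
          exact Nat.floor_le (sqrt_nonneg z)
      _ = z := sq_sqrt (by linarith)

lemma one_le_log {x : ℝ} (hx : 3 ≤ x) : 1 ≤ log x := by
  rw [le_log_iff_exp_le (by linarith)]
  linarith [exp_one_lt_d9]

section Degree

variable {A : ℝ} {n M : ℕ}

lemma incrementBound_le (hA : 1 ≤ A) (hn : 3 ≤ n) (hM : 1 ≤ M)
    (hMn : (M : ℝ) ^ 2 ≤ n * log n / (8 * A)) :
    incrementBound n M ≤ 769 * log n * (n : ℝ) ^ (1 / (4 * A)) := by
  have hn3 : (3 : ℝ) ≤ n := by exact_mod_cast hn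
  have hlog : 1 ≤ log (n : ℝ) := one_le_log hn3
  have hM_le : (M : ℝ) ≤ n := by
    refine le_of_sq_le_sq ?_ n.cast_nonneg
    calc (M : ℝ) ^ 2 ≤ n * log n / (8 * A) := hMn
      _ ≤ n * log n := div_le_self (by positivity) (by linarith)
      _ ≤ n ^ 2 := by
          rw [sq]
          gcongr
          exact log_le_self n.cast_nonneg
  have hlogM : log M ≤ log n := log_le_log (by exact_mod_cast hM) hM_le
  have hexp : exp (2 * M ^ 2 / n) ≤ (n : ℝ) ^ (1 / (4 * A)) := by
    rw [rpow_def_of_pos (by linarith), exp_le_exp, div_le_iff₀ (by linarith)]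
    calc 2 * (M : ℝ) ^ 2 ≤ 2 * (n * log n / (8 * A)) := by gcongr
      _ = log n * (1 / (4 * A)) * n := by
          field_simp
          norm_num
  have hpow : 1 ≤ (n : ℝ) ^ (1 / (4 * A)) := one_le_rpow (by linarith) (by positivity)
  calc incrementBound n M ≤ 1 + 2 * (192 * (log n + log n) * (n : ℝ) ^ (1 / (4 * A))) := by
        unfold incrementBound
        gcongr
    _ ≤ 769 * log n * (n : ℝ) ^ (1 / (4 * A)) := by
        linarith [one_le_mul_of_one_le_of_one_le hlog hpow]

lemma log_pow_three_le (hA : 0 < A) {x : ℝ} (hx : 1 ≤ x) :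
    log x ^ 3 ≤ (6 * A) ^ 3 * x ^ (1 / (2 * A)) := by
  have hlog : log x ≤ 6 * A * x ^ (1 / (6 * A)) := by
    refine (log_le_rpow_div (by linarith) (by positivity : 0 < 1 / (6 * A))).trans_eq ?_
    field_simp
  calc log x ^ 3 ≤ (6 * A * x ^ (1 / (6 * A))) ^ 3 := pow_le_pow_left₀ (log_nonneg hx) hlog 3
    _ = (6 * A) ^ 3 * x ^ (1 / (2 * A)) := by
        rw [mul_pow, ← rpow_mul_natCast (by linarith)]
        congr 2
        field_simp
        norm_num

lemma incrementBound_sq_mul_log_le (hA : 1 ≤ A) (hn : 3 ≤ n) (hM : 1 ≤ M)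
    (hMn : (M : ℝ) ^ 2 ≤ n * log n / (8 * A)) :
    incrementBound n M ^ 2 * log n ≤ 769 ^ 2 * (6 * A) ^ 3 * (n : ℝ) ^ (1 / A) := by
  have hn1 : (1 : ℝ) ≤ n := by exact_mod_cast (by omega : 1 ≤ n)
  have hn0 : (0 : ℝ) < n := by linarith
  calc incrementBound n M ^ 2 * log n
      ≤ (769 * log n * (n : ℝ) ^ (1 / (4 * A))) ^ 2 * log n := by
        have := incrementBound_nonneg n M
        gcongr
        exact incrementBound_le hA hn hM hMn
    _ = 769 ^ 2 * log n ^ 3 * (n : ℝ) ^ (1 / (2 * A)) := by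
        rw [mul_pow, ← rpow_mul_natCast hn0.le,
          (by field_simp; norm_num : 1 / (4 * A) * (2 : ℕ) = 1 / (2 * A))]
        ring
    _ ≤ 769 ^ 2 * ((6 * A) ^ 3 * (n : ℝ) ^ (1 / (2 * A))) * (n : ℝ) ^ (1 / (2 * A)) := by
        gcongr
        exact log_pow_three_le (by linarith) hn1
    _ = 769 ^ 2 * (6 * A) ^ 3 * (n : ℝ) ^ (1 / A) := by
        rw [(by field_simp; norm_num : 1 / A = 1 / (2 * A) + 1 / (2 * A)), rpow_add hn0]
        ring

end Degree

lemma rpow_one_div_le_of_le_rpow {A x y : ℝ} (hA : 0 < A) (hx : 0 ≤ x) (hy : 0 ≤ y)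
    (h : x ≤ y ^ A) : x ^ (1 / A) ≤ y := by
  rw [one_div]
  exact (rpow_inv_le_iff_of_pos hx hy hA).mpr h

theorem exists_estimator_risk_le {A : ℝ} (hA : 1 ≤ A) :
    ∃ C : ℝ, ∃ N₀ : ℕ, ∀ S n : ℕ, N₀ ≤ n → (n : ℝ) ≤ (S : ℝ) ^ A →
      ∀ q : Fin S → ℝ, IsDist q → ∃ est : (Fin S → ℕ) → ℝ, ∀ p, IsDist p →
        risk n p (L1dist p q) est ≤ ENNReal.ofReal (C * S / (n * log n)) := by
  refine ⟨(256 * π ^ 5) ^ 2 * (32 * A) + 769 ^ 2 * (6 * A) ^ 3,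
    max 3 ⌈8 * A⌉₊, fun S n hn hnS q hq ↦ ?_⟩
  have hn3 : 3 ≤ n := (le_max_left _ _).trans hn
  have hn8 : 8 * A ≤ n := (Nat.le_ceil _).trans (by exact_mod_cast (le_max_right _ _).trans hn)
  have hlog : 1 ≤ log (n : ℝ) := one_le_log (by exact_mod_cast hn3)
  obtain ⟨M, hM, hM_ge, hM_le⟩ := exists_nat_sq_mem_Icc (z := n * log n / (8 * A)) <| by
    rw [one_le_div (by positivity)]
    nlinarith
  have hM_ge' : n * log n / (32 * A) ≤ (M : ℝ) ^ 2 := hM_ge.trans_eq' <| by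
    field_simp
    norm_num
  refine ⟨l1Estimator n M q, fun p hp ↦ (risk_l1Estimator_le (by omega) hM hp hq).trans
    (ENNReal.ofReal_le_ofReal ?_)⟩
  have hbias : (256 * π ^ 5) ^ 2 * S / (M : ℝ) ^ 2 ≤
      (256 * π ^ 5) ^ 2 * (32 * A) * S / (n * log n) :=
    calc _ ≤ (256 * π ^ 5) ^ 2 * S / (n * log n / (32 * A)) := by gcongr
      _ = _ := by field_simp
  have hvar : incrementBound n M ^ 2 / n ≤ 769 ^ 2 * (6 * A) ^ 3 * S / (n * log n) :=
    calc incrementBound n M ^ 2 / n = incrementBound n M ^ 2 * log n / (n * log n) := by field_simp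
      _ ≤ 769 ^ 2 * (6 * A) ^ 3 * (n : ℝ) ^ (1 / A) / (n * log n) := by
          refine div_le_div_of_nonneg_right ?_ (by positivity)
          exact incrementBound_sq_mul_log_le hA hn3 hM hM_le
      _ ≤ 769 ^ 2 * (6 * A) ^ 3 * S / (n * log n) := by
          gcongr
          exact rpow_one_div_le_of_le_rpow (by linarith) n.cast_nonneg S.cast_nonneg hnS
  exact (add_le_add hbias hvar).trans_eq (by ring)

/-! ### Poisson mixtures with matching moments -/

lemma poissonPMF_add {m : ℝ} (hm : 0 < m) (x : ℝ) (y : ℕ) :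
    poissonPMF (m + x) y = poissonPMF m y * (exp (-x) * (1 + x / m) ^ y) := by
  have hpow : (m + x) ^ y = m ^ y * (1 + x / m) ^ y := by
    rw [← mul_pow, mul_one_add, mul_div_cancel₀ x hm.ne']
  rw [poissonPMF, poissonPMF, hpow, neg_add, exp_add]
  ring

lemma sum_poissonPMF_le_one {l : ℝ} (hl : 0 ≤ l) (K : Finset ℕ) : ∑ y ∈ K, poissonPMF l y ≤ 1 :=
  sum_le_hasSum K (fun y _ ↦ poissonPMF_nonneg hl y) (hasSum_poissonPMF l)

section SignedMixture

variable {ι : Type*} [Fintype ι] {m : ℝ}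

lemma hasSum_poissonPMF_mul_sum_sq (hm : 0 < m) (s x : ι → ℝ) :
    HasSum (fun y ↦ poissonPMF m y * (∑ k, s k * (exp (-x k) * (1 + x k / m) ^ y)) ^ 2)
      (∑ k, ∑ k', s k * s k' * exp (x k * x k' / m)) := by
  have h : HasSum (fun y ↦ ∑ k, ∑ k', s k * s k' * exp (-x k) * exp (-x k') *
        (poissonPMF m y * ((1 + x k / m) * (1 + x k' / m)) ^ y))
      (∑ k, ∑ k', s k * s k' * exp (-x k) * exp (-x k') *
        exp (m * ((1 + x k / m) * (1 + x k' / m) - 1))) :=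
    hasSum_sum fun k _ ↦ hasSum_sum fun k' _ ↦ (hasSum_poissonPMF_mul_pow _ _).mul_left _
  convert h using 1
  · funext y
    rw [sq, sum_mul_sum, mul_sum]
    refine sum_congr rfl fun k _ ↦ ?_
    rw [mul_sum]
    refine sum_congr rfl fun k' _ ↦ ?_
    rw [mul_pow]
    ring
  · refine sum_congr rfl fun k _ ↦ sum_congr rfl fun k' _ ↦ ?_
    rw [mul_assoc (s k * s k'), mul_assoc (s k * s k'), ← exp_add, ← exp_add]
    congr 2
    field_simp
    ring

/-- The `χ²`-bound: Cauchy–Schwarz for the density with respect to `Poisson(m)`. -/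
lemma sum_abs_sum_mul_poissonPMF_sq_le (hm : 0 < m) (s x : ι → ℝ) (K : Finset ℕ) :
    (∑ y ∈ K, |∑ k, s k * poissonPMF (m + x k) y|) ^ 2 ≤
      ∑ k, ∑ k', s k * s k' * exp (x k * x k' / m) := by
  set h : ℕ → ℝ := fun y ↦ ∑ k, s k * (exp (-x k) * (1 + x k / m) ^ y) with hh
  have hP (y : ℕ) : 0 ≤ poissonPMF m y := poissonPMF_nonneg hm.le y
  have hdensity (y : ℕ) : |∑ k, s k * poissonPMF (m + x k) y| = poissonPMF m y * |h y| := by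
    suffices ∑ k, s k * poissonPMF (m + x k) y = poissonPMF m y * h y by
      rw [this, abs_mul, abs_of_nonneg (hP y)]
    rw [hh, mul_sum]
    refine sum_congr rfl fun k _ ↦ ?_
    rw [poissonPMF_add hm]
    ring
  calc (∑ y ∈ K, |∑ k, s k * poissonPMF (m + x k) y|) ^ 2
    _ = (∑ y ∈ K, poissonPMF m y * |h y|) ^ 2 := by simp only [hdensity]
    _ ≤ (∑ y ∈ K, poissonPMF m y) * ∑ y ∈ K, poissonPMF m y * |h y| ^ 2 :=
        sum_sq_le_sum_mul_sum_of_sq_le_mul K (fun y _ ↦ hP y)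
          (fun y _ ↦ mul_nonneg (hP y) (sq_nonneg _)) fun y _ ↦ le_of_eq (by ring)
    _ ≤ 1 * ∑ y ∈ K, poissonPMF m y * h y ^ 2 := by
        simp only [sq_abs]
        exact mul_le_mul_of_nonneg_right (sum_poissonPMF_le_one hm.le K)
          (sum_nonneg fun y _ ↦ mul_nonneg (hP y) (sq_nonneg _))
    _ ≤ _ := by
        rw [one_mul]
        exact sum_le_hasSum K (fun y _ ↦ mul_nonneg (hP y) (sq_nonneg _))
          (hasSum_poissonPMF_mul_sum_sq hm s x)

lemma sum_abs_poissonPMF_sub_poissonPMF_sq_le {a b : ℝ} (hb : 0 < b) (K : Finset ℕ) :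
    (∑ y ∈ K, |poissonPMF a y - poissonPMF b y|) ^ 2 ≤ exp ((a - b) ^ 2 / b) - 1 := by
  have h := sum_abs_sum_mul_poissonPMF_sq_le hb ![1, -1] ![a - b, 0] K
  simp only [Fin.sum_univ_two, Matrix.cons_val_zero, Matrix.cons_val_one, one_mul, neg_one_mul,
    add_sub_cancel, add_zero, mul_zero, zero_mul, zero_div, exp_zero, mul_one, mul_neg,
    ← sub_eq_add_neg] at h
  rw [sq (a - b)]
  linarith

lemma sum_sum_mul_mul_pow_div (s x : ι → ℝ) (m : ℝ) (l : ℕ) :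
    ∑ k, ∑ k', s k * s k' * ((x k * x k' / m) ^ l / l !) =
      (∑ k, s k * x k ^ l) ^ 2 / (m ^ l * l !) := by
  simp only [sq, sum_mul_sum, sum_div, div_pow, mul_pow]
  refine sum_congr rfl fun k _ ↦ sum_congr rfl fun k' _ ↦ ?_
  rw [div_div]
  ring

lemma sum_mul_pow_sq_le {s x : ι → ℝ} {B R : ℝ} (hx : ∀ k, |x k| ≤ R) (hs : ∑ k, |s k| ≤ B)
    (l : ℕ) : (∑ k, s k * x k ^ l) ^ 2 ≤ B ^ 2 * (R ^ 2) ^ l := by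
  have h : |∑ k, s k * x k ^ l| ≤ B * |R| ^ l :=
    calc |∑ k, s k * x k ^ l|
      _ ≤ ∑ k, |s k * x k ^ l| := abs_sum_le_sum_abs _ _
      _ ≤ ∑ k, |s k| * |R| ^ l := sum_le_sum fun k _ ↦ by
          rw [abs_mul, abs_pow]
          exact mul_le_mul_of_nonneg_left
            (pow_le_pow_left₀ (abs_nonneg _) ((hx k).trans (le_abs_self R)) l) (abs_nonneg _)
      _ ≤ B * |R| ^ l := by rw [← sum_mul]; gcongr
  calc (∑ k, s k * x k ^ l) ^ 2
    _ = |∑ k, s k * x k ^ l| ^ 2 := (sq_abs _).symm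
    _ ≤ (B * |R| ^ l) ^ 2 := by gcongr
    _ = B ^ 2 * (R ^ 2) ^ l := by rw [mul_pow, ← pow_mul, mul_comm l, pow_mul, sq_abs]

theorem sum_abs_sum_mul_poissonPMF_sq_le_of_moments_eq_zero (hm : 0 < m) {s x : ι → ℝ} {B R : ℝ}
    (hx : ∀ k, |x k| ≤ R) (hs : ∑ k, |s k| ≤ B) {D : ℕ}
    (hmoments : ∀ l ≤ D, ∑ k, s k * x k ^ l = 0) (K : Finset ℕ) :
    (∑ y ∈ K, |∑ k, s k * poissonPMF (m + x k) y|) ^ 2 ≤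
      B ^ 2 * exp (exp 1 * (R ^ 2 / m) - D) := by
  have hexp (z : ℝ) : HasSum (fun l : ℕ ↦ z ^ l / l !) (exp z) := by
    rw [Real.exp_eq_exp_ℝ]
    exact NormedSpace.expSeries_div_hasSum_exp z
  have hseries : HasSum (fun l : ℕ ↦ ∑ k, ∑ k', s k * s k' * ((x k * x k' / m) ^ l / l !))
      (∑ k, ∑ k', s k * s k' * exp (x k * x k' / m)) :=
    hasSum_sum fun k _ ↦ hasSum_sum fun k' _ ↦ (hexp _).mul_left _
  have hmajorant := (hexp (exp 1 * (R ^ 2 / m))).mul_left (B ^ 2 * exp (-D))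
  rw [mul_assoc, ← exp_add, neg_add_eq_sub] at hmajorant
  refine (sum_abs_sum_mul_poissonPMF_sq_le hm s x K).trans
    (hasSum_le (fun l ↦ ?_) hseries hmajorant)
  rw [sum_sum_mul_mul_pow_div]
  rcases le_or_gt l D with hl | hl
  · rw [hmoments l hl, zero_pow two_ne_zero, zero_div]
    positivity
  · have hgain : 1 ≤ exp (-D) * exp 1 ^ l := by
      rw [← exp_nat_mul, ← exp_add, mul_one]
      have : (D : ℝ) ≤ l := by exact_mod_cast hl.le
      exact one_le_exp (by linarith)
    calc (∑ k, s k * x k ^ l) ^ 2 / (m ^ l * l !)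
      _ ≤ B ^ 2 * (R ^ 2) ^ l / (m ^ l * l !) := by gcongr; exact sum_mul_pow_sq_le hx hs l
      _ ≤ B ^ 2 * (R ^ 2) ^ l / (m ^ l * l !) * (exp (-D) * exp 1 ^ l) :=
          le_mul_of_one_le_right (by positivity) hgain
      _ = B ^ 2 * exp (-D) * ((exp 1 * (R ^ 2 / m)) ^ l / l !) := by
          rw [mul_pow, div_pow]
          field_simp

end SignedMixture

/-! ### Alternating weights on cosine nodes -/

lemma sum_range_neg_one_pow_mul_cos_eq_zero {N : ℕ} {d : ℤ} (hd : |d| < N) (c : ℝ) :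
    ∑ j ∈ range (2 * N), (-1) ^ j * cos (d * (j * (π / N)) + c) = 0 := by
  have hN : (0 : ℝ) < N := by exact_mod_cast (abs_nonneg d).trans_lt hd
  set τ := π / N
  have hτN : N * τ = π := mul_div_cancel₀ π hN.ne'
  set h : ℕ → ℝ := fun j ↦ (-1) ^ j * cos (d * ((j - 1 / 2) * τ) + c)
  have hcos : 0 < cos (d * τ / 2) := by
    have hlt : |(d : ℝ)| * τ < N * τ :=
      mul_lt_mul_of_pos_right (by exact_mod_cast hd) (div_pos pi_pos hN)
    refine cos_pos_of_mem_Ioo (abs_lt.mp ?_)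
    rw [abs_div, abs_mul, abs_two, abs_of_pos (div_pos pi_pos hN)]
    linarith
  have hstep (j : ℕ) :
      (-1) ^ j * cos (d * (j * τ) + c) * (2 * cos (d * τ / 2)) = h j - h (j + 1) := by
    have hleft : d * ((j - 1 / 2) * τ) + c = d * (j * τ) + c - d * τ / 2 := by ring
    have hright : d * (((j + 1 : ℕ) - 1 / 2) * τ) + c = d * (j * τ) + c + d * τ / 2 := by
      push_cast
      ring
    simp only [h]
    rw [hleft, hright, cos_sub (d * (j * τ) + c), cos_add (d * (j * τ) + c), pow_succ]
    ring
  have hperiod : h (2 * N) = h 0 := by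
    have hshift : d * (((2 * N : ℕ) - 1 / 2) * τ) + c =
        d * (((0 : ℕ) - 1 / 2) * τ) + c + d * (2 * π) := by
      push_cast
      rw [← hτN]
      ring
    simp only [h]
    rw [hshift, cos_add_int_mul_two_pi, (even_two_mul N).neg_one_pow, pow_zero]
  refine (mul_eq_zero_iff_right (mul_pos two_pos hcos).ne').mp ?_
  rw [sum_mul, sum_congr rfl fun j _ ↦ hstep j, sum_range_sub', hperiod, sub_self]

lemma sum_range_neg_one_pow_mul_cos_mul_cos_pow_eq_zero {N : ℕ} (α : ℝ) (l : ℕ) {d : ℤ}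
    (hd : |d| + l < N) (c : ℝ) :
    ∑ j ∈ range (2 * N),
      (-1) ^ j * (cos (d * (j * (π / N)) + c) * cos (α + j * (π / N)) ^ l) = 0 := by
  induction l generalizing d c with
  | zero => simpa using sum_range_neg_one_pow_mul_cos_eq_zero (by simpa using hd) c
  | succ l ih =>
    push_cast at hd
    have hadd := ih (d := d + 1) (by have := abs_add_le d 1; rw [abs_one] at this; omega) (c + α)
    have hsub := ih (d := d - 1) (by have := abs_sub d 1; rw [abs_one] at this; omega) (c - α)
    have hprod (j : ℕ) :
        (-1) ^ j * (cos (d * (j * (π / N)) + c) * cos (α + j * (π / N)) ^ (l + 1)) =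
          ((-1) ^ j * (cos ((d + 1 : ℤ) * (j * (π / N)) + (c + α)) * cos (α + j * (π / N)) ^ l) +
          (-1) ^ j * (cos ((d - 1 : ℤ) * (j * (π / N)) + (c - α)) * cos (α + j * (π / N)) ^ l))
            / 2 := by
      have hplus : (d + 1 : ℤ) * (j * (π / N)) + (c + α) =
          d * (j * (π / N)) + c + (α + j * (π / N)) := by push_cast; ring
      have hminus : (d - 1 : ℤ) * (j * (π / N)) + (c - α) =
          d * (j * (π / N)) + c - (α + j * (π / N)) := by push_cast; ring
      rw [hplus, hminus, cos_add (d * (j * (π / N)) + c), cos_sub (d * (j * (π / N)) + c)]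
      ring
    rw [sum_congr rfl fun j _ ↦ hprod j, ← sum_div, sum_add_distrib, hadd, hsub, add_zero,
      zero_div]

lemma sum_range_le_add_sum_Ioc_half {b : ℕ → ℝ} (hb : ∀ i, 0 ≤ b i) (N : ℕ) :
    ∑ i ∈ range N, b i ≤ b 0 + ∑ i ∈ Ioc 0 (N / 2), (b i + b (N - i)) := by
  have hreflect : ∑ i ∈ Ioc 0 (N / 2), b (N - i) = ∑ i ∈ Ico (N - N / 2) N, b i := by
    rw [show Ioc 0 (N / 2) = Ico 1 (N / 2 + 1) by ext; simp; omega,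
      sum_Ico_reflect b 1 (by omega)]
    congr 2
    omega
  have hcover : range N ⊆ insert 0 (Ioc 0 (N / 2) ∪ Ico (N - N / 2) N) := fun i hi ↦ by
    simp only [mem_insert, mem_union, mem_Ioc, mem_Ico, mem_range] at hi ⊢
    omega
  rw [sum_add_distrib, hreflect, ← sum_union_inter]
  calc ∑ i ∈ range N, b i
    _ ≤ ∑ i ∈ insert 0 (Ioc 0 (N / 2) ∪ Ico (N - N / 2) N), b i :=
        sum_le_sum_of_subset_of_nonneg hcover fun i _ _ ↦ hb i
    _ = b 0 + ∑ i ∈ Ioc 0 (N / 2) ∪ Ico (N - N / 2) N, b i :=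
        sum_insert (by simp only [mem_union, mem_Ioc, mem_Ico]; omega)
    _ ≤ _ := by
        have := sum_nonneg fun i (_ : i ∈ Ioc 0 (N / 2) ∩ Ico (N - N / 2) N) ↦ hb i
        linarith

lemma sum_range_two_mul_neg_one_pow_mul_le {a : ℕ → ℝ} (ha : ∀ j, 0 ≤ a j) {N : ℕ} (hN : 2 ≤ N) :
    ∑ j ∈ range (2 * N), (-1) ^ j * a j ≤
      a 0 + ∑ i ∈ Ioc 0 (N / 2), (a (2 * i) + a (2 * N - 2 * i)) - (a 1 + a (2 * N - 1)) := by
  have hsplit (n : ℕ) : ∑ j ∈ range (2 * n), (-1) ^ j * a j =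
      ∑ i ∈ range n, a (2 * i) - ∑ i ∈ range n, a (2 * i + 1) := by
    induction n with
    | zero => simp
    | succ n ih =>
      rw [mul_add_one, sum_range_succ, sum_range_succ, ih, sum_range_succ, sum_range_succ,
        (even_two_mul n).neg_one_pow, (odd_two_mul_add_one n).neg_one_pow]
      ring
  have heven := sum_range_le_add_sum_Ioc_half (b := fun i ↦ a (2 * i)) (fun i ↦ ha _) N
  simp only [Nat.mul_sub, mul_zero] at heven
  have hodd : a 1 + a (2 * N - 1) ≤ ∑ i ∈ range N, a (2 * i + 1) := by
    have hpair : ({0, N - 1} : Finset ℕ) ⊆ range N := fun i hi ↦ by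
      simp only [mem_insert, mem_singleton, mem_range] at hi ⊢
      omega
    refine le_trans (le_of_eq ?_) (sum_le_sum_of_subset_of_nonneg hpair fun i _ _ ↦ ha _)
    rw [sum_pair (by omega), show 2 * (N - 1) + 1 = 2 * N - 1 by omega]
  rw [hsplit]
  linarith

lemma sum_Ioc_zero_inv_sq_le_two (n : ℕ) : ∑ i ∈ Ioc 0 n, ((i : ℝ) ^ 2)⁻¹ ≤ 2 := by
  have h := sum_Ioo_inv_sq_le (α := ℝ) 0 (n + 1)
  rwa [Ioo_add_one_right_eq_Ioc, Nat.cast_zero, zero_add, div_one] at h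

lemma sum_Ioc_inv_cube_le {k : ℕ} (hk : k ≠ 0) (n : ℕ) :
    ∑ i ∈ Ioc k n, ((i : ℝ) ^ 3)⁻¹ ≤ (2 * k * (k + 1) : ℝ)⁻¹ := by
  rcases lt_or_ge n k with hn | hn
  · rw [Ioc_eq_empty_of_le hn.le, sum_empty]
    positivity
  suffices ∑ i ∈ Ioc k n, ((i : ℝ) ^ 3)⁻¹ ≤
      (2 * k * (k + 1) : ℝ)⁻¹ - (2 * n * (n + 1) : ℝ)⁻¹ from
    this.trans (sub_le_self _ (by positivity))
  induction n, hn using Nat.le_induction with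
  | base => simp
  | succ n hn ih =>
    have hn : (0 : ℝ) < n := by exact_mod_cast (Nat.pos_of_ne_zero hk).trans_le hn
    have htelescope : (((n + 1 : ℕ) : ℝ) ^ 3)⁻¹ ≤
        (2 * n * (n + 1) : ℝ)⁻¹ - (2 * (n + 1 : ℕ) * ((n + 1 : ℕ) + 1) : ℝ)⁻¹ := by
      push_cast
      have : (2 * n * (n + 1) : ℝ)⁻¹ - (2 * (n + 1) * (n + 1 + 1) : ℝ)⁻¹ =
          (n * (n + 1) * (n + 2) : ℝ)⁻¹ := by
        field_simp
        ring
      rw [this]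
      exact inv_anti₀ (by positivity) (by nlinarith)
    rw [sum_Ioc_succ_top (by omega)]
    linarith

lemma fejerKernel_two_mul {M : ℕ} {t : ℝ} (ht : sin (t / 2) ≠ 0) :
    fejerKernel M (2 * t) * cos (t / 2) ^ 2 = fejerKernel M t * cos (M * t / 2) ^ 2 := by
  have h1 := fejerKernel_mul_sin_sq M t
  have h2 := fejerKernel_mul_sin_sq M (2 * t)
  rw [show 2 * t / 2 = 2 * (t / 2) by ring, show M * (2 * t) / 2 = 2 * (M * t / 2) by ring,
    sin_two_mul, sin_two_mul] at h2
  refine mul_left_cancel₀ (pow_ne_zero 2 ht) ?_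
  linear_combination (1 / 4) * h2 - cos (M * t / 2) ^ 2 * h1

/-- The angular spacing of the alternation nodes `cos (α + j * nodeStep D)`, `j < 2 * (51 * D)`:
`51 * D` exceeds `D` plus the degree of the square of the Fejér kernel of order `25 * D`. -/
noncomputable def nodeStep (D : ℕ) : ℝ := π / (51 * D : ℕ)

/-- The weight of the `j`-th alternation node: the square of the Fejér kernel of order `25 * D`,
normalised to be `1` at `j = 0`. -/
noncomputable def nodeWeight (D j : ℕ) : ℝ :=
  fejerKernel (25 * D) (j * nodeStep D) ^ 2 / (25 * D : ℕ) ^ 4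

/-- The distance of the `j`-th alternation node to the point `cos α`. -/
noncomputable def nodeDist (D : ℕ) (α : ℝ) (j : ℕ) : ℝ := |cos (α + j * nodeStep D) - cos α|

lemma nodeWeight_nonneg (D j : ℕ) : 0 ≤ nodeWeight D j := by
  unfold nodeWeight
  positivity

lemma nodeDist_nonneg (D : ℕ) (α : ℝ) (j : ℕ) : 0 ≤ nodeDist D α j := abs_nonneg _

lemma nodeDist_zero (D : ℕ) (α : ℝ) : nodeDist D α 0 = 0 := by simp [nodeDist]

lemma abs_cos_add_sub_cos_le {α : ℝ} (hα : 0 ≤ sin α) (t : ℝ) :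
    |cos (α + t) - cos α| ≤ sin α * |t| + t ^ 2 / 2 := by
  have hexpand : cos (α + t) - cos α = -(sin α * sin t + cos α * (1 - cos t)) := by
    rw [cos_add]
    ring
  have hcos : 0 ≤ 1 - cos t := sub_nonneg.mpr (cos_le_one t)
  calc |cos (α + t) - cos α|
    _ ≤ sin α * |sin t| + |cos α| * (1 - cos t) := by
        rw [hexpand, abs_neg]
        refine (abs_add_le _ _).trans (le_of_eq ?_)
        rw [abs_mul, abs_mul, abs_of_nonneg hα, abs_of_nonneg hcos]
    _ ≤ sin α * |t| + 1 * (t ^ 2 / 2) := by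
        refine add_le_add (mul_le_mul_of_nonneg_left abs_sin_le_abs hα)
          (mul_le_mul (abs_cos_le_one α) ?_ hcos zero_le_one)
        linarith [one_sub_sq_div_two_le_cos (x := t)]
    _ = _ := by rw [one_mul]

section NodeWeight

variable {D : ℕ}

lemma sum_range_neg_one_pow_mul_nodeWeight_mul_cos_pow_eq_zero (α : ℝ) {l : ℕ} (hl : l ≤ D) :
    ∑ j ∈ range (2 * (51 * D)), (-1) ^ j * (nodeWeight D j * cos (α + j * nodeStep D) ^ l) = 0 := by
  have hexpand (j : ℕ) : (-1) ^ j * (nodeWeight D j * cos (α + j * nodeStep D) ^ l) =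
      ∑ x ∈ jacksonIndex (25 * D), (-1) ^ j * (cos (jacksonFreq x * (j * nodeStep D) + 0) *
        cos (α + j * nodeStep D) ^ l) / (25 * D : ℕ) ^ 4 := by
    rw [nodeWeight, fejerKernel_sq_eq_sum_cos, sum_div, sum_mul, mul_sum]
    refine sum_congr rfl fun x _ ↦ ?_
    rw [add_zero]
    ring
  rw [sum_congr rfl fun j _ ↦ hexpand j, sum_comm]
  refine sum_eq_zero fun x hx ↦ ?_
  have hfreq := abs_jacksonFreq_lt hx
  push_cast at hfreq
  rw [← sum_div, nodeStep,
    sum_range_neg_one_pow_mul_cos_mul_cos_pow_eq_zero α l (by push_cast; omega) 0, zero_div]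

lemma nodeStep_pos (hD : 1 ≤ D) : 0 < nodeStep D :=
  div_pos pi_pos (Nat.cast_pos.mpr (by omega))

lemma mul_nodeStep (hD : 1 ≤ D) : 51 * D * nodeStep D = π := by
  unfold nodeStep
  push_cast
  field_simp

lemma nodeStep_le (hD : 1 ≤ D) : nodeStep D ≤ 0.0617 := by
  have := nodeStep_pos hD
  have hD' : (1 : ℝ) ≤ D := by exact_mod_cast hD
  have := mul_nodeStep hD
  nlinarith [pi_lt_d4]

lemma cast_reflect_mul_nodeStep (hD : 1 ≤ D) {j : ℕ} (hj : j ≤ 2 * (51 * D)) :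
    ((2 * (51 * D) - j : ℕ) : ℝ) * nodeStep D = 2 * π - j * nodeStep D := by
  rw [Nat.cast_sub hj, ← mul_nodeStep hD]
  push_cast
  ring

lemma nodeWeight_reflect (hD : 1 ≤ D) {j : ℕ} (hj : j ≤ 2 * (51 * D)) :
    nodeWeight D (2 * (51 * D) - j) = nodeWeight D j := by
  rw [nodeWeight, nodeWeight, cast_reflect_mul_nodeStep hD hj, fejerKernel_two_pi_sub]

lemma nodeDist_reflect (hD : 1 ≤ D) (α : ℝ) {j : ℕ} (hj : j ≤ 2 * (51 * D)) :
    nodeDist D α (2 * (51 * D) - j) = |cos (α + -(j * nodeStep D)) - cos α| := by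
  rw [nodeDist, cast_reflect_mul_nodeStep hD hj,
    show α + (2 * π - j * nodeStep D) = α + -(j * nodeStep D) + 2 * π by ring, cos_add_two_pi]

lemma nodeDist_le (hD : 1 ≤ D) {α : ℝ} (hα : 0 ≤ sin α) (j : ℕ) :
    nodeDist D α j ≤ sin α * (j * nodeStep D) + (j * nodeStep D) ^ 2 / 2 := by
  have h := abs_cos_add_sub_cos_le hα (j * nodeStep D)
  rwa [abs_of_nonneg (mul_nonneg j.cast_nonneg (nodeStep_pos hD).le)] at h

lemma nodeDist_reflect_le (hD : 1 ≤ D) {α : ℝ} (hα : 0 ≤ sin α) {j : ℕ}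
    (hj : j ≤ 2 * (51 * D)) :
    nodeDist D α (2 * (51 * D) - j) ≤
      sin α * (j * nodeStep D) + (j * nodeStep D) ^ 2 / 2 := by
  have h := abs_cos_add_sub_cos_le hα (-(j * nodeStep D))
  rwa [abs_neg, neg_sq, abs_of_nonneg (mul_nonneg j.cast_nonneg (nodeStep_pos hD).le),
    ← nodeDist_reflect hD α hj] at h

lemma two_mul_sin_mul_sin_nodeStep_le (hD : 1 ≤ D) (α : ℝ) :
    2 * sin α * sin (nodeStep D) ≤ nodeDist D α 1 + nodeDist D α (2 * (51 * D) - 1) := by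
  rw [nodeDist_reflect hD α (by omega), nodeDist, Nat.cast_one, one_mul, ← sub_eq_add_neg]
  have hdiff : cos (α - nodeStep D) - cos (α + nodeStep D) = 2 * sin α * sin (nodeStep D) := by
    rw [cos_sub, cos_add]
    ring
  linarith [neg_abs_le (cos (α + nodeStep D) - cos α),
    le_abs_self (cos (α - nodeStep D) - cos α)]

lemma nodeWeight_zero (hD : 1 ≤ D) : nodeWeight D 0 = 1 := by
  simp only [nodeWeight, fejerKernel, Nat.cast_zero, zero_mul, mul_zero, Complex.ofReal_zero,
    Complex.exp_zero, sum_const, card_range, nsmul_eq_mul, mul_one, Complex.norm_natCast]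
  rw [← pow_mul]
  exact div_self (pow_ne_zero 4 (Nat.cast_ne_zero.mpr (by omega)))

lemma nodeWeight_le (hD : 1 ≤ D) {j : ℕ} (hj : j ≠ 0) (hjD : j ≤ 51 * D) :
    nodeWeight D j ≤ (51 / 25) ^ 4 / j ^ 4 := by
  have : (0 : ℝ) < j := by positivity
  have : (0 : ℝ) < D := by exact_mod_cast hD
  have hτ := nodeStep_pos hD
  have hpi : j * nodeStep D ≤ π := by
    rw [← mul_nodeStep hD]
    gcongr
    exact_mod_cast hjD
  have hratio : π / (j * nodeStep D) = 51 * D / j := by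
    rw [← mul_nodeStep hD]
    field_simp
  calc nodeWeight D j
    _ ≤ ((51 * D / j : ℝ) ^ 2) ^ 2 / (25 * D : ℕ) ^ 4 := by
        rw [nodeWeight, ← hratio]
        gcongr
        · exact fejerKernel_nonneg _ _
        · exact fejerKernel_le_pi_div_sq _ (by positivity) hpi
    _ = (51 / 25) ^ 4 / j ^ 4 := by
        push_cast
        field_simp

lemma order_mul_nodeStep_div_two (hD : 1 ≤ D) :
    ((25 * D : ℕ) : ℝ) * nodeStep D / 2 = 25 * π / 102 := by
  rw [← mul_nodeStep hD]
  push_cast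
  ring

lemma le_nodeWeight_one (hD : 1 ≤ D) : 0.65 ≤ nodeWeight D 1 := by
  have hτ := nodeStep_pos hD
  have hM : (0 : ℝ) < (25 * D : ℕ) := Nat.cast_pos.mpr (by omega)
  set M : ℝ := ((25 * D : ℕ) : ℝ)
  set x := M * nodeStep D / 2
  have hx0 : 0 < x := by positivity
  have hx1 : x ≤ 0.77002 := by
    rw [show x = 25 * π / 102 from order_mul_nodeStep_div_two hD]
    linarith [pi_lt_d4]
  have hsin : 0.9 * x ≤ sin x := by nlinarith [sin_gt_sub_cube hx0, mul_pos hx0 hx0]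
  have hfejer : 0.81 * M ^ 2 ≤ fejerKernel (25 * D) (nodeStep D) := by
    refine le_of_mul_le_mul_right ?_ (pow_pos (half_pos hτ) 2)
    calc 0.81 * M ^ 2 * (nodeStep D / 2) ^ 2
      _ = (0.9 * x) ^ 2 := by ring
      _ ≤ sin x ^ 2 := by gcongr
      _ = fejerKernel (25 * D) (nodeStep D) * sin (nodeStep D / 2) ^ 2 :=
          (fejerKernel_mul_sin_sq _ _).symm
      _ ≤ fejerKernel (25 * D) (nodeStep D) * (nodeStep D / 2) ^ 2 :=
          mul_le_mul_of_nonneg_left sin_sq_le_sq (fejerKernel_nonneg _ _)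
  rw [nodeWeight, Nat.cast_one, one_mul, le_div_iff₀ (by positivity)]
  calc 0.65 * M ^ 4
    _ ≤ (0.81 * M ^ 2) ^ 2 := by nlinarith [pow_pos hM 4]
    _ ≤ fejerKernel (25 * D) (nodeStep D) ^ 2 := by gcongr

lemma nodeWeight_two_le (hD : 1 ≤ D) : nodeWeight D 2 ≤ 0.268 * nodeWeight D 1 := by
  have hτ := nodeStep_pos hD
  have hτ' := nodeStep_le hD
  have hsin0 : 0 < sin (nodeStep D / 2) :=
    sin_pos_of_pos_of_lt_pi (by positivity) (by linarith [pi_gt_d4])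
  have hdouble := fejerKernel_two_mul (M := 25 * D) hsin0.ne'
  rw [order_mul_nodeStep_div_two hD] at hdouble
  have hcos_small : 0.999 ≤ cos (nodeStep D / 2) ^ 2 := by
    have : sin (nodeStep D / 2) ^ 2 ≤ (nodeStep D / 2) ^ 2 := sin_sq_le_sq
    rw [cos_sq']
    nlinarith
  have hcos_large : cos (25 * π / 102) ^ 2 ≤ 0.5155 := by
    rw [cos_sq, show 2 * (25 * π / 102) = π / 2 - π / 102 by ring, cos_pi_div_two_sub]
    linarith [sin_le (by positivity : 0 ≤ π / 102), pi_lt_d4]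
  have hfejer : fejerKernel (25 * D) (2 * nodeStep D) ≤
      0.5166 * fejerKernel (25 * D) (nodeStep D) := by
    nlinarith [fejerKernel_nonneg (25 * D) (nodeStep D),
      fejerKernel_nonneg (25 * D) (2 * nodeStep D)]
  rw [nodeWeight, nodeWeight, Nat.cast_two, Nat.cast_one, one_mul, ← mul_div_assoc]
  gcongr
  calc fejerKernel (25 * D) (2 * nodeStep D) ^ 2
    _ ≤ (0.5166 * fejerKernel (25 * D) (nodeStep D)) ^ 2 :=
        pow_le_pow_left₀ (fejerKernel_nonneg _ _) hfejer 2
    _ ≤ 0.268 * fejerKernel (25 * D) (nodeStep D) ^ 2 := by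
        nlinarith [sq_nonneg (fejerKernel (25 * D) (nodeStep D))]

lemma nodeWeight_four_le (hD : 1 ≤ D) : nodeWeight D 4 ≤ 0.0001 := by
  have hτ := nodeStep_pos hD
  have hτ' := nodeStep_le hD
  have hM : (0 : ℝ) < (25 * D : ℕ) := Nat.cast_pos.mpr (by omega)
  set M : ℝ := ((25 * D : ℕ) : ℝ) with hMdef
  have hnear_pi : sin (M * (4 * nodeStep D) / 2) ^ 2 ≤ 0.0617 ^ 2 := by
    rw [show M * (4 * nodeStep D) / 2 = π - nodeStep D * D by
      rw [← mul_nodeStep hD, hMdef]; push_cast; ring, sin_pi_sub]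
    have : nodeStep D * D = π / 51 := by
      rw [← mul_nodeStep hD]
      ring
    refine sin_sq_le_sq.trans ?_
    rw [this]
    have := pi_lt_d4
    gcongr
    linarith
  have hsin : 1.9 / M ≤ sin (4 * nodeStep D / 2) := by
    refine le_trans ?_ (mul_le_sin (by positivity) (by linarith [pi_gt_d4]))
    rw [← mul_nodeStep hD, hMdef]
    push_cast
    field_simp
    norm_num
  have hfejer : fejerKernel (25 * D) (4 * nodeStep D) ≤ 0.01 * M ^ 2 := by
    have hmul : fejerKernel (25 * D) (4 * nodeStep D) * (1.9 / M) ^ 2 ≤ 0.0617 ^ 2 :=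
      calc fejerKernel (25 * D) (4 * nodeStep D) * (1.9 / M) ^ 2
        _ ≤ fejerKernel (25 * D) (4 * nodeStep D) * sin (4 * nodeStep D / 2) ^ 2 :=
            mul_le_mul_of_nonneg_left (by gcongr) (fejerKernel_nonneg _ _)
        _ ≤ 0.0617 ^ 2 := (fejerKernel_mul_sin_sq _ _).trans_le hnear_pi
    rw [div_pow, mul_div_assoc', div_le_iff₀ (by positivity)] at hmul
    linarith [pow_pos hM 2]
  rw [nodeWeight, Nat.cast_ofNat, div_le_iff₀ (by positivity)]
  calc fejerKernel (25 * D) (4 * nodeStep D) ^ 2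
    _ ≤ (0.01 * M ^ 2) ^ 2 := pow_le_pow_left₀ (fejerKernel_nonneg _ _) hfejer 2
    _ = 0.0001 * M ^ 4 := by ring

end NodeWeight

lemma sum_range_two_mul_le_of_le_inv_sq {b : ℕ → ℝ} (hb : ∀ i, 0 ≤ b i) {N : ℕ} {C E : ℝ}
    (hC : 0 ≤ C) (hle : ∀ i ∈ Ioc 0 N, b i ≤ C * ((i : ℝ) ^ 2)⁻¹ + E)
    (hle_reflect : ∀ i ∈ Ioc 0 N, b (2 * N - i) ≤ C * ((i : ℝ) ^ 2)⁻¹ + E) :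
    ∑ i ∈ range (2 * N), b i ≤ b 0 + (4 * C + 2 * N * E) := by
  have hfold := sum_range_le_add_sum_Ioc_half hb (2 * N)
  rw [Nat.mul_div_cancel_left N two_pos] at hfold
  refine hfold.trans (add_le_add_right ?_ _)
  calc ∑ i ∈ Ioc 0 N, (b i + b (2 * N - i))
    _ ≤ ∑ i ∈ Ioc 0 N, (2 * C * ((i : ℝ) ^ 2)⁻¹ + 2 * E) :=
        sum_le_sum fun i hi ↦ by linarith [hle i hi, hle_reflect i hi]
    _ = 2 * C * ∑ i ∈ Ioc 0 N, ((i : ℝ) ^ 2)⁻¹ + 2 * N * E := by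
        rw [sum_add_distrib, ← mul_sum, sum_const, Nat.card_Ioc, Nat.sub_zero, nsmul_eq_mul]
        ring
    _ ≤ 2 * C * 2 + 2 * N * E := by
        gcongr
        exact sum_Ioc_zero_inv_sq_le_two N
    _ = 4 * C + 2 * N * E := by ring

section NodeSums

variable {D : ℕ} {α : ℝ}

lemma nodeWeight_le_inv_pow_four (hD : 1 ≤ D) {j : ℕ} (hj : j ∈ Ioc 0 (51 * D)) :
    nodeWeight D j ≤ 18 * ((j : ℝ) ^ 4)⁻¹ := by
  obtain ⟨hj0, hjD⟩ := mem_Ioc.mp hj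
  refine (nodeWeight_le hD hj0.ne' hjD).trans ?_
  rw [div_eq_mul_inv]
  gcongr
  norm_num

lemma one_le_sum_nodeWeight (hD : 1 ≤ D) : 1 ≤ ∑ j ∈ range (2 * (51 * D)), nodeWeight D j := by
  rw [← nodeWeight_zero hD]
  exact single_le_sum (fun j _ ↦ nodeWeight_nonneg D j) (mem_range.mpr (by omega))

lemma sum_nodeWeight_le (hD : 1 ≤ D) : ∑ j ∈ range (2 * (51 * D)), nodeWeight D j ≤ 73 := by
  have hle (j : ℕ) (hj : j ∈ Ioc 0 (51 * D)) : nodeWeight D j ≤ 18 * ((j : ℝ) ^ 2)⁻¹ + 0 := by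
    have hj0 : (1 : ℝ) ≤ j := by exact_mod_cast (mem_Ioc.mp hj).1
    rw [add_zero]
    refine (nodeWeight_le_inv_pow_four hD hj).trans ?_
    gcongr
    norm_num
  have h := sum_range_two_mul_le_of_le_inv_sq (nodeWeight_nonneg D) (by norm_num) hle
    fun j hj ↦ by
      rw [nodeWeight_reflect hD ((mem_Ioc.mp hj).2.trans (by omega))]
      exact hle j hj
  rw [nodeWeight_zero hD] at h
  linarith

lemma nodeWeight_mul_le (hD : 1 ≤ D) (hα : 0 ≤ sin α) {j : ℕ} (hj : j ∈ Ioc 0 (51 * D)) {x : ℝ}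
    (hx : x ≤ sin α * (j * nodeStep D) + (j * nodeStep D) ^ 2 / 2) :
    nodeWeight D j * x ≤ 18 * (sin α * nodeStep D + nodeStep D ^ 2) * ((j : ℝ) ^ 2)⁻¹ := by
  have hj1 : (1 : ℝ) ≤ j := by exact_mod_cast (mem_Ioc.mp hj).1
  have hτ := nodeStep_pos hD
  have hx' : x ≤ (j : ℝ) ^ 2 * (sin α * nodeStep D + nodeStep D ^ 2) := by
    have : sin α * nodeStep D * j ≤ sin α * nodeStep D * (j : ℝ) ^ 2 := by
      gcongr
      nlinarith
    nlinarith [sq_nonneg (j * nodeStep D)]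
  calc nodeWeight D j * x
    _ ≤ nodeWeight D j * ((j : ℝ) ^ 2 * (sin α * nodeStep D + nodeStep D ^ 2)) :=
        mul_le_mul_of_nonneg_left hx' (nodeWeight_nonneg D j)
    _ ≤ 18 * ((j : ℝ) ^ 4)⁻¹ * ((j : ℝ) ^ 2 * (sin α * nodeStep D + nodeStep D ^ 2)) := by
        gcongr
        exact nodeWeight_le_inv_pow_four hD hj
    _ = _ := by field_simp

lemma sum_nodeWeight_mul_nodeDist_le (hD : 1 ≤ D) (hα : 0 ≤ sin α) :
    ∑ j ∈ range (2 * (51 * D)), nodeWeight D j * nodeDist D α j ≤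
      72 * (sin α * nodeStep D + nodeStep D ^ 2) := by
  have hτ := nodeStep_pos hD
  have h := sum_range_two_mul_le_of_le_inv_sq (b := fun j ↦ nodeWeight D j * nodeDist D α j)
    (fun j ↦ mul_nonneg (nodeWeight_nonneg D j) (nodeDist_nonneg D α j)) (E := 0)
    (C := 18 * (sin α * nodeStep D + nodeStep D ^ 2)) (by positivity)
    (fun j hj ↦ by
      rw [add_zero]
      exact nodeWeight_mul_le hD hα hj (nodeDist_le hD hα j))
    (fun j hj ↦ by
      have hj' : j ≤ 2 * (51 * D) := (mem_Ioc.mp hj).2.trans (by omega)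
      rw [add_zero, nodeWeight_reflect hD hj']
      exact nodeWeight_mul_le hD hα hj (nodeDist_reflect_le hD hα hj'))
  rw [nodeDist_zero, mul_zero] at h
  linarith

lemma nodeWeight_mul_sq_le (hD : 1 ≤ D) {j : ℕ} (hj : j ∈ Ioc 0 (51 * D))
    {x : ℝ} (hx0 : 0 ≤ x) (hx : x ≤ sin α * (j * nodeStep D) + (j * nodeStep D) ^ 2 / 2) :
    nodeWeight D j * x ^ 2 ≤
      36 * (sin α ^ 2 * nodeStep D ^ 2) * ((j : ℝ) ^ 2)⁻¹ + 9 * nodeStep D ^ 4 := by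
  have hj0 : (0 : ℝ) < j := by exact_mod_cast (mem_Ioc.mp hj).1
  have hsq : x ^ 2 ≤ 2 * (sin α * (j * nodeStep D)) ^ 2 + (j * nodeStep D) ^ 4 / 2 :=
    calc x ^ 2
      _ ≤ (sin α * (j * nodeStep D) + (j * nodeStep D) ^ 2 / 2) ^ 2 := by gcongr
      _ ≤ 2 * ((sin α * (j * nodeStep D)) ^ 2 + ((j * nodeStep D) ^ 2 / 2) ^ 2) := add_sq_le
      _ = _ := by ring
  calc nodeWeight D j * x ^ 2
    _ ≤ 18 * ((j : ℝ) ^ 4)⁻¹ *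
          (2 * (sin α * (j * nodeStep D)) ^ 2 + (j * nodeStep D) ^ 4 / 2) := by
        gcongr
        exact nodeWeight_le_inv_pow_four hD hj
    _ = _ := by
        field_simp
        ring

lemma sum_nodeWeight_mul_nodeDist_sq_le (hD : 1 ≤ D) (hα : 0 ≤ sin α) :
    ∑ j ∈ range (2 * (51 * D)), nodeWeight D j * nodeDist D α j ^ 2 ≤
      144 * (sin α ^ 2 * nodeStep D ^ 2 + nodeStep D ^ 3) := by
  have hτ := nodeStep_pos hD
  have h := sum_range_two_mul_le_of_le_inv_sq (b := fun j ↦ nodeWeight D j * nodeDist D α j ^ 2)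
    (fun j ↦ mul_nonneg (nodeWeight_nonneg D j) (sq_nonneg _))
    (C := 36 * (sin α ^ 2 * nodeStep D ^ 2)) (by positivity)
    (fun j hj ↦ nodeWeight_mul_sq_le hD hj (nodeDist_nonneg D α j) (nodeDist_le hD hα j))
    (fun j hj ↦ by
      have hj' : j ≤ 2 * (51 * D) := (mem_Ioc.mp hj).2.trans (by omega)
      rw [nodeWeight_reflect hD hj']
      exact nodeWeight_mul_sq_le hD hj (nodeDist_nonneg D α _) (nodeDist_reflect_le hD hα hj'))
  have hlength : 2 * ((51 * D : ℕ) : ℝ) * (9 * nodeStep D ^ 4) = 18 * π * nodeStep D ^ 3 := by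
    rw [← mul_nodeStep hD]
    push_cast
    ring
  have hpi : π * nodeStep D ^ 3 ≤ 8 * nodeStep D ^ 3 := by
    gcongr
    linarith [pi_lt_d4]
  rw [nodeDist_zero, zero_pow two_ne_zero, mul_zero, hlength] at h
  linarith

lemma sum_nodeWeight_two_mul_le (hD : 1 ≤ D) :
    ∑ i ∈ Ioc 0 (51 * D / 2), nodeWeight D (2 * i) * (2 * i + (2 * i : ℝ) ^ 2 / 400) ≤
      0.54 * nodeWeight D 1 + 0.19 := by
  have htail : ∑ i ∈ Ioc 2 (51 * D / 2), nodeWeight D (2 * i) * (2 * i + (2 * i : ℝ) ^ 2 / 400) ≤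
      (51 / 25) ^ 4 * (1 / 8 * (1 / 12) + 1 / 1600 * (1 / 2)) :=
    calc _ ≤ ∑ i ∈ Ioc 2 (51 * D / 2),
          (51 / 25) ^ 4 * (1 / 8 * ((i : ℝ) ^ 3)⁻¹ + 1 / 1600 * ((i : ℝ) ^ 2)⁻¹) := by
          refine sum_le_sum fun i hi ↦ ?_
          have hi := mem_Ioc.mp hi
          have hi0 : (0 : ℝ) < i := by exact_mod_cast (by omega : 0 < i)
          refine (mul_le_mul_of_nonneg_right (nodeWeight_le hD (by omega) (by omega))
            (by positivity)).trans (le_of_eq ?_)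
          push_cast
          field_simp
          ring
      _ ≤ _ := by
          have hcube := sum_Ioc_inv_cube_le two_ne_zero (51 * D / 2)
          have hsq := sum_Ioc_inv_sq_le_sub (α := ℝ) two_ne_zero (by omega : 2 ≤ 51 * D / 2)
          have hinv : (0 : ℝ) ≤ ((51 * D / 2 : ℕ) : ℝ)⁻¹ := by positivity
          rw [← mul_sum, sum_add_distrib, ← mul_sum, ← mul_sum]
          push_cast at hcube hsq hinv
          gcongr
          · linarith
          · linarith
  have hsplit : Ioc 0 (51 * D / 2) = insert 1 (insert 2 (Ioc 2 (51 * D / 2))) := by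
    ext i
    simp only [mem_insert, mem_Ioc]
    omega
  rw [hsplit, sum_insert (by simp), sum_insert (by simp)]
  norm_num at htail ⊢
  linarith [nodeWeight_two_le hD, nodeWeight_four_le hD, nodeWeight_nonneg D 1]

lemma nodeDist_add_nodeDist_reflect_le (hD : 1 ≤ D) (hα : 200 * nodeStep D ≤ sin α) {j : ℕ}
    (hj : j ≤ 2 * (51 * D)) :
    nodeDist D α j + nodeDist D α (2 * (51 * D) - j) ≤
      2 * sin α * nodeStep D * (j + (j : ℝ) ^ 2 / 400) := by
  have hτ := nodeStep_pos hD
  have hα0 : 0 ≤ sin α := by linarith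
  have hquad : 200 * nodeStep D * nodeStep D * (j : ℝ) ^ 2 ≤ sin α * nodeStep D * (j : ℝ) ^ 2 := by
    gcongr
  linarith [nodeDist_le hD hα0 j, nodeDist_reflect_le hD hα0 hj]

/-- The term `j = 1` of the alternating sum dominates: the other odd terms have its sign, and the
even ones are controlled by the decay `j⁻⁴` of the weights. -/
lemma sum_neg_one_pow_mul_nodeWeight_mul_nodeDist_le (hD : 1 ≤ D)
    (hα : 200 * nodeStep D ≤ sin α) :
    ∑ j ∈ range (2 * (51 * D)), (-1) ^ j * (nodeWeight D j * nodeDist D α j) ≤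
      -(sin α * nodeStep D / 5) := by
  have hτ := nodeStep_pos hD
  have hτ' := nodeStep_le hD
  have hα0 : 0 ≤ sin α := by linarith
  obtain ⟨T, hT⟩ : ∃ T, T = 2 * sin α * nodeStep D := ⟨_, rfl⟩
  have hT0 : 0 ≤ T := by
    rw [hT]
    positivity
  have hsplit := sum_range_two_mul_neg_one_pow_mul_le
    (a := fun j ↦ nodeWeight D j * nodeDist D α j)
    (fun j ↦ mul_nonneg (nodeWeight_nonneg D j) (nodeDist_nonneg D α j))
    (by omega : 2 ≤ 51 * D)
  have heven : ∑ i ∈ Ioc 0 (51 * D / 2), (nodeWeight D (2 * i) * nodeDist D α (2 * i) +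
      nodeWeight D (2 * (51 * D) - 2 * i) * nodeDist D α (2 * (51 * D) - 2 * i)) ≤
      T * (0.54 * nodeWeight D 1 + 0.19) := by
    refine le_trans ?_ (mul_le_mul_of_nonneg_left (sum_nodeWeight_two_mul_le hD) hT0)
    rw [mul_sum, hT]
    refine sum_le_sum fun i hi ↦ ?_
    have hi : 2 * i ≤ 2 * (51 * D) := by
      have := (mem_Ioc.mp hi).2
      omega
    have hpair := nodeDist_add_nodeDist_reflect_le hD hα hi
    push_cast at hpair
    rw [nodeWeight_reflect hD hi, ← mul_add]
    exact (mul_le_mul_of_nonneg_left hpair (nodeWeight_nonneg D _)).trans_eq (by ring)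
  have hodd : nodeWeight D 1 * (0.999 * T) ≤ nodeWeight D 1 * nodeDist D α 1 +
      nodeWeight D (2 * (51 * D) - 1) * nodeDist D α (2 * (51 * D) - 1) := by
    have hsin : 0.999 * nodeStep D ≤ sin (nodeStep D) := by
      nlinarith [sin_gt_sub_cube hτ, mul_pos hτ hτ]
    rw [nodeWeight_reflect hD (by omega), ← mul_add]
    refine mul_le_mul_of_nonneg_left ?_ (nodeWeight_nonneg D 1)
    refine le_trans ?_ (two_mul_sin_mul_sin_nodeStep_le hD α)
    linarith [mul_le_mul_of_nonneg_left hsin hα0]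
  have hfirst : T * 0.65 ≤ T * nodeWeight D 1 :=
    mul_le_mul_of_nonneg_left (le_nodeWeight_one hD) hT0
  simp only [nodeDist_zero, mul_zero, zero_add] at hsplit
  linarith

end NodeSums

section NodeProb

/-- The two laws on the nodes `cos (α + j * nodeStep D)` used as priors: the normalised weights
`nodeWeight D j * (1 ± (-1) ^ j)`, with the sign `-` (odd nodes) for `true` and `+` (even nodes)
for `false`. -/
noncomputable def nodeProb (D : ℕ) (b : Bool) (j : Fin (2 * (51 * D))) : ℝ :=
  nodeWeight D j * (1 + (if b then -1 else 1) * (-1) ^ (j : ℕ)) /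
    ∑ i ∈ range (2 * (51 * D)), nodeWeight D i

variable {D : ℕ}

lemma sum_nodeWeight_pos (hD : 1 ≤ D) : 0 < ∑ i ∈ range (2 * (51 * D)), nodeWeight D i :=
  one_pos.trans_le (one_le_sum_nodeWeight hD)

lemma one_add_sign_mul_neg_one_pow_mem_Icc (b : Bool) (j : ℕ) :
    1 + (if b then -1 else 1) * (-1) ^ j ∈ Set.Icc (0 : ℝ) 2 := by
  rcases neg_one_pow_eq_or ℝ j with h | h <;> cases b <;> norm_num [h]

lemma nodeProb_nonneg (b : Bool) (j : Fin (2 * (51 * D))) : 0 ≤ nodeProb D b j :=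
  div_nonneg (mul_nonneg (nodeWeight_nonneg D j) (one_add_sign_mul_neg_one_pow_mem_Icc b j).1)
    (sum_nonneg fun i _ ↦ nodeWeight_nonneg D i)

lemma nodeProb_le (hD : 1 ≤ D) (b : Bool) (j : Fin (2 * (51 * D))) :
    nodeProb D b j ≤ 2 * nodeWeight D j := by
  have hj := nodeWeight_nonneg D j
  refine div_le_of_le_mul₀ (sum_nodeWeight_pos hD).le (by positivity) ?_
  calc _ ≤ nodeWeight D j * 2 :=
        mul_le_mul_of_nonneg_left (one_add_sign_mul_neg_one_pow_mem_Icc b j).2 hj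
    _ = 2 * nodeWeight D j * 1 := by ring
    _ ≤ _ := mul_le_mul_of_nonneg_left (one_le_sum_nodeWeight hD) (by positivity)

lemma nodeProb_true_sub_nodeProb_false (j : Fin (2 * (51 * D))) :
    nodeProb D true j - nodeProb D false j =
      -(2 / ∑ i ∈ range (2 * (51 * D)), nodeWeight D i) * ((-1) ^ (j : ℕ) * nodeWeight D j) := by
  simp only [nodeProb, if_true, Bool.false_eq_true, if_false]
  ring

lemma sum_nodeProb_true_sub_nodeProb_false_mul (g : ℕ → ℝ) :
    ∑ j : Fin (2 * (51 * D)), (nodeProb D true j - nodeProb D false j) * g j =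
      -(2 / ∑ i ∈ range (2 * (51 * D)), nodeWeight D i) *
        ∑ j ∈ range (2 * (51 * D)), (-1) ^ j * (nodeWeight D j * g j) := by
  rw [sum_range (fun j ↦ (-1) ^ j * (nodeWeight D j * g j)), mul_sum]
  refine sum_congr rfl fun j _ ↦ ?_
  rw [nodeProb_true_sub_nodeProb_false]
  ring

lemma sum_nodeProb (hD : 1 ≤ D) (b : Bool) : ∑ j, nodeProb D b j = 1 := by
  have halt : ∑ j ∈ range (2 * (51 * D)), (-1) ^ j * nodeWeight D j = 0 := by
    simpa using sum_range_neg_one_pow_mul_nodeWeight_mul_cos_pow_eq_zero 0 (Nat.zero_le D)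
  simp only [nodeProb]
  rw [← sum_div, div_eq_one_iff_eq (sum_nodeWeight_pos hD).ne',
    ← sum_range (fun j ↦ nodeWeight D j * (1 + (if b then -1 else 1) * (-1) ^ j))]
  calc _ = ∑ j ∈ range (2 * (51 * D)),
        (nodeWeight D j + (if b then -1 else 1) * ((-1) ^ j * nodeWeight D j)) :=
        sum_congr rfl fun j _ ↦ by ring
    _ = _ := by rw [sum_add_distrib, ← mul_sum, halt, mul_zero, add_zero]

lemma sum_nodeProb_true_sub_nodeProb_false_mul_cos_pow (α : ℝ) {l : ℕ} (hl : l ≤ D) :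
    ∑ j : Fin (2 * (51 * D)),
      (nodeProb D true j - nodeProb D false j) * cos (α + j * nodeStep D) ^ l = 0 := by
  rw [sum_nodeProb_true_sub_nodeProb_false_mul fun j ↦ cos (α + j * nodeStep D) ^ l,
    sum_range_neg_one_pow_mul_nodeWeight_mul_cos_pow_eq_zero α hl, mul_zero]

lemma le_sum_nodeProb_true_sub_nodeProb_false_mul_nodeDist (hD : 1 ≤ D) {α : ℝ}
    (hα : 200 * nodeStep D ≤ sin α) :
    sin α * nodeStep D / 1000 ≤
      ∑ j, (nodeProb D true j - nodeProb D false j) * nodeDist D α j := by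
  have hτ := nodeStep_pos hD
  have hX : 0 ≤ sin α * nodeStep D := mul_nonneg (by linarith) hτ.le
  have hZ : 2 / 73 ≤ 2 / ∑ i ∈ range (2 * (51 * D)), nodeWeight D i :=
    div_le_div_of_nonneg_left two_pos.le (sum_nodeWeight_pos hD) (sum_nodeWeight_le hD)
  rw [sum_nodeProb_true_sub_nodeProb_false_mul (nodeDist D α)]
  calc _ ≤ 2 / 73 * (sin α * nodeStep D / 5) := by linarith
    _ ≤ 2 / (∑ i ∈ range (2 * (51 * D)), nodeWeight D i) *
        -∑ j ∈ range (2 * (51 * D)), (-1) ^ j * (nodeWeight D j * nodeDist D α j) :=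
        mul_le_mul hZ (by linarith [sum_neg_one_pow_mul_nodeWeight_mul_nodeDist_le hD hα])
          (by positivity) (div_nonneg two_pos.le (sum_nodeWeight_pos hD).le)
    _ = _ := by ring

lemma sum_nodeProb_mul_le (hD : 1 ≤ D) (b : Bool) {g : ℕ → ℝ} (hg : ∀ j, 0 ≤ g j) :
    ∑ j : Fin (2 * (51 * D)), nodeProb D b j * g j ≤
      2 * ∑ j ∈ range (2 * (51 * D)), nodeWeight D j * g j := by
  rw [sum_range (fun j ↦ nodeWeight D j * g j), mul_sum]
  exact sum_le_sum fun j _ ↦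
    (mul_le_mul_of_nonneg_right (nodeProb_le hD b j) (hg j)).trans_eq (mul_assoc _ _ _)

lemma sum_nodeProb_mul_nodeDist_le (hD : 1 ≤ D) {α : ℝ} (hα : 0 ≤ sin α) (b : Bool) :
    ∑ j, nodeProb D b j * nodeDist D α j ≤
      144 * (sin α * nodeStep D + nodeStep D ^ 2) :=
  (sum_nodeProb_mul_le hD b (nodeDist_nonneg D α)).trans
    (by linarith [sum_nodeWeight_mul_nodeDist_le hD hα])

lemma sum_nodeProb_mul_nodeDist_sq_le (hD : 1 ≤ D) {α : ℝ} (hα : 0 ≤ sin α) (b : Bool) :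
    ∑ j, nodeProb D b j * nodeDist D α j ^ 2 ≤
      288 * (sin α ^ 2 * nodeStep D ^ 2 + nodeStep D ^ 3) :=
  (sum_nodeProb_mul_le hD b fun j ↦ sq_nonneg (nodeDist D α j)).trans
    (by linarith [sum_nodeWeight_mul_nodeDist_sq_le hD hα])

end NodeProb

/-! ### The pair of priors -/

/-- The mixed Poisson mass function with intensity `lam k` drawn according to `w`. -/
noncomputable def poissonMixture {ι : Type*} [Fintype ι] (w lam : ι → ℝ) (y : ℕ) : ℝ :=
  ∑ k, w k * poissonPMF (lam k) y

/-- Two laws `w true`, `w false` on a common finite set of Poisson intensities `lam k` with common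
mean. Both are concentrated around `μ`, their mean absolute deviations from `μ` differ by the order
of `√(μ / L)`, and yet the two mixed Poisson laws are within `exp (-3 * L)` in `ℓ¹` distance. -/
structure IsPriorPair {ι : Type*} [Fintype ι] (ε c L μ : ℝ) (w : Bool → ι → ℝ) (lam : ι → ℝ) :
    Prop where
  weight_nonneg : ∀ b k, 0 ≤ w b k
  intensity_nonneg : ∀ k, 0 ≤ lam k
  sum_weight : ∀ b, ∑ k, w b k = 1
  mean_eq : ∑ k, w true k * lam k = ∑ k, w false k * lam k
  sum_abs_sub_le : ∀ b, ∑ k, w b k * |lam k - μ| ≤ μ / 2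
  sum_sq_sub_le : ∀ b, ∑ k, w b k * (lam k - μ) ^ 2 ≤ ε * μ
  separation : c * √(μ / L) ≤ ∑ k, w true k * |lam k - μ| - ∑ k, w false k * |lam k - μ|
  sum_abs_mixture_sub_le : ∀ K : Finset ℕ,
    ∑ y ∈ K, |poissonMixture (w true) lam y - poissonMixture (w false) lam y| ≤ exp (-3 * L)

section NodeIntensity

/-- The nodes `cos (α + j * nodeStep D)` transported to `[m - R, m + R]`, serving as Poisson
intensities; the point `cos α` goes to `m - R * cos α`. -/
noncomputable def nodeIntensity (D : ℕ) (α m R : ℝ) (j : Fin (2 * (51 * D))) : ℝ :=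
  m - R * cos (α + j * nodeStep D)

variable {D : ℕ} {α m R : ℝ}

lemma nodeIntensity_nonneg (hR : 0 ≤ R) (hRm : R ≤ m) (j : Fin (2 * (51 * D))) :
    0 ≤ nodeIntensity D α m R j := by
  have := mul_le_of_le_one_right hR (cos_le_one (α + j * nodeStep D))
  rw [nodeIntensity]
  linarith

lemma abs_nodeIntensity_sub (hR : 0 ≤ R) (j : Fin (2 * (51 * D))) :
    |nodeIntensity D α m R j - (m - R * cos α)| = R * nodeDist D α j := by
  rw [nodeIntensity, nodeDist, ← abs_of_nonneg hR, ← abs_mul, abs_sub_comm, abs_of_nonneg hR]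
  ring_nf

lemma sum_nodeProb_mul_nodeIntensity (hD : 1 ≤ D) :
    ∑ j, nodeProb D true j * nodeIntensity D α m R j =
      ∑ j, nodeProb D false j * nodeIntensity D α m R j := by
  have hmean := sum_nodeProb_true_sub_nodeProb_false_mul_cos_pow α hD
  have hexpand (b : Bool) : ∑ j, nodeProb D b j * nodeIntensity D α m R j =
      m - R * ∑ j, nodeProb D b j * cos (α + (j : ℕ) * nodeStep D) := by
    simp only [nodeIntensity, mul_sub, sum_sub_distrib, ← sum_mul, sum_nodeProb hD, one_mul,
      mul_sum, mul_left_comm R]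
  simp only [pow_one, sub_mul, sum_sub_distrib] at hmean
  rw [hexpand, hexpand, sub_eq_zero.mp hmean]

lemma sum_nodeProb_mul_abs_nodeIntensity_sub (hR : 0 ≤ R) (b : Bool) :
    ∑ j, nodeProb D b j * |nodeIntensity D α m R j - (m - R * cos α)| =
      R * ∑ j, nodeProb D b j * nodeDist D α j := by
  simp only [abs_nodeIntensity_sub hR, mul_sum, mul_left_comm R]

lemma sum_nodeProb_mul_nodeIntensity_sub_sq (hR : 0 ≤ R) (b : Bool) :
    ∑ j, nodeProb D b j * (nodeIntensity D α m R j - (m - R * cos α)) ^ 2 =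
      R ^ 2 * ∑ j, nodeProb D b j * nodeDist D α j ^ 2 := by
  rw [mul_sum]
  refine sum_congr rfl fun j _ ↦ ?_
  rw [← sq_abs, abs_nodeIntensity_sub hR]
  ring

lemma sum_abs_nodeProb_sub_le_two (hD : 1 ≤ D) :
    ∑ j, |nodeProb D true j - nodeProb D false j| ≤ 2 :=
  calc _ ≤ ∑ j, (nodeProb D true j + nodeProb D false j) := sum_le_sum fun j _ ↦ by
        rw [abs_le]
        constructor <;> linarith [nodeProb_nonneg true j, nodeProb_nonneg false j]
    _ = 2 := by
        rw [sum_add_distrib, sum_nodeProb hD, sum_nodeProb hD]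
        norm_num

lemma sum_abs_nodeProb_mixture_sub_sq_le (hD : 1 ≤ D) (hm : 0 < m) (hR : 0 ≤ R) (K : Finset ℕ) :
    (∑ y ∈ K, |poissonMixture (nodeProb D true) (nodeIntensity D α m R) y -
        poissonMixture (nodeProb D false) (nodeIntensity D α m R) y|) ^ 2 ≤
      2 ^ 2 * exp (exp 1 * (R ^ 2 / m) - D) := by
  have hx (j : Fin (2 * (51 * D))) : |-(R * cos (α + (j : ℕ) * nodeStep D))| ≤ R := by
    rw [abs_neg, abs_mul, abs_of_nonneg hR]
    exact mul_le_of_le_one_right hR (abs_cos_le_one _)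
  have hmoments (l : ℕ) (hl : l ≤ D) : ∑ j, (nodeProb D true j - nodeProb D false j) *
      (-(R * cos (α + (j : ℕ) * nodeStep D))) ^ l = 0 := by
    simp only [← neg_mul, mul_pow, mul_left_comm _ ((-R) ^ l)]
    rw [← mul_sum, sum_nodeProb_true_sub_nodeProb_false_mul_cos_pow α hl, mul_zero]
  have h := sum_abs_sum_mul_poissonPMF_sq_le_of_moments_eq_zero hm hx
    (sum_abs_nodeProb_sub_le_two hD) hmoments K
  simpa only [poissonMixture, ← sum_sub_distrib, ← sub_mul, nodeIntensity, ← sub_eq_add_neg] using h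

lemma sum_abs_nodeProb_mixture_sub_le (hD : 1 ≤ D) (hm : 0 < m) (hR : 0 ≤ R) {L : ℝ}
    (hL : 1 ≤ L) (hLD : 13 * L ≤ D) (hRm : R ^ 2 / m ≤ L / 2) (K : Finset ℕ) :
    ∑ y ∈ K, |poissonMixture (nodeProb D true) (nodeIntensity D α m R) y -
        poissonMixture (nodeProb D false) (nodeIntensity D α m R) y| ≤ exp (-3 * L) := by
  refine le_of_sq_le_sq ((sum_abs_nodeProb_mixture_sub_sq_le hD hm hR K).trans ?_) (exp_pos _).le
  have htwo : 2 ≤ exp 1 := by linarith [add_one_le_exp 1]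
  have hrate : exp 1 * (R ^ 2 / m) ≤ 3 * (L / 2) :=
    mul_le_mul (by linarith [exp_one_lt_d9]) hRm (by positivity) (by norm_num)
  calc _ ≤ exp 1 ^ 2 * exp (exp 1 * (R ^ 2 / m) - D) := by gcongr
    _ = exp (2 + (exp 1 * (R ^ 2 / m) - D)) := by rw [exp_add, ← exp_nat_mul, Nat.cast_two, mul_one]
    _ ≤ exp (2 * (-3 * L)) := exp_le_exp.mpr (by linarith)
    _ = exp (-3 * L) ^ 2 := by rw [← exp_nat_mul, Nat.cast_two]

end NodeIntensity

section PriorScale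

lemma mul_nodeStep_ceil_mem_Icc {u : ℝ} (hu : 13 ≤ u) :
    u * nodeStep ⌈u⌉₊ ∈ Set.Icc (1 / 34) (1 / 16) := by
  have hD : 1 ≤ ⌈u⌉₊ := Nat.one_le_ceil_iff.mpr (by linarith)
  have hτ := nodeStep_pos hD
  have hstep := mul_nodeStep hD
  have hlow : u * nodeStep ⌈u⌉₊ ≤ ⌈u⌉₊ * nodeStep ⌈u⌉₊ := by
    gcongr
    exact Nat.le_ceil u
  have hup : ⌈u⌉₊ * nodeStep ⌈u⌉₊ ≤ (u + 1) * nodeStep ⌈u⌉₊ := by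
    gcongr
    exact (Nat.ceil_lt_add_one (by linarith)).le
  have hle : 13 * nodeStep ⌈u⌉₊ ≤ u * nodeStep ⌈u⌉₊ := by gcongr
  constructor <;> linarith [pi_gt_d4, pi_lt_d4]

variable {C g L μ s τ : ℝ}

lemma mul_sq_le_of_mul_mul_le (hCg : 100 ≤ C * g) (hL : 0 < L) (hμ : g ^ 2 ≤ μ * L)
    (hτ : 0 ≤ C * L * τ) (hCLτ : C * L * τ ≤ 1 / 16) : L * τ ^ 2 ≤ μ / 2560000 := by
  have hsq : (C * L * τ) ^ 2 ≤ (1 / 16) ^ 2 := pow_le_pow_left₀ hτ hCLτ 2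
  have hCg2 : (100 : ℝ) ^ 2 ≤ (C * g) ^ 2 := pow_le_pow_left₀ (by norm_num) hCg 2
  refine le_of_mul_le_mul_right ?_ hL
  calc L * τ ^ 2 * L = (L * τ) ^ 2 * 100 ^ 2 / 10000 := by ring
    _ ≤ (L * τ) ^ 2 * (C * g) ^ 2 / 10000 := by gcongr
    _ = (C * L * τ) ^ 2 * g ^ 2 / 10000 := by ring
    _ ≤ (1 / 16) ^ 2 * (μ * L) / 10000 := by gcongr
    _ = μ / 2560000 * L := by ring

lemma mul_le_of_mul_sq_le (hμ : 0 ≤ μ) (hs : s ^ 2 ≤ μ * L) (hLτ : L * τ ^ 2 ≤ μ / 2560000) :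
    s * τ ≤ μ / 1600 := by
  refine le_of_sq_le_sq ?_ (by positivity)
  calc (s * τ) ^ 2 = s ^ 2 * τ ^ 2 := mul_pow s τ 2
    _ ≤ μ * L * τ ^ 2 := by gcongr
    _ = μ * (L * τ ^ 2) := by ring
    _ ≤ μ * (μ / 2560000) := by gcongr
    _ = (μ / 1600) ^ 2 := by ring

lemma sq_mul_sq_add_le {ε R : ℝ} (hC : 13 ≤ C) (hCε : 3 ≤ C * ε) (hL : 1 ≤ L) (hμ : 0 ≤ μ)
    (hτ : 0 ≤ τ) (hτ1 : τ ≤ 1) (hs : s ^ 2 ≤ μ * L) (hR : R ^ 2 ≤ L ^ 2 / 4 + s ^ 2)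
    (hCLτ : C * L * τ ≤ 1 / 16) (hLτ : L * τ ^ 2 ≤ μ / 2560000) :
    288 * (s ^ 2 * τ ^ 2 + R ^ 2 * τ ^ 3) ≤ ε * μ := by
  have hC0 : 0 < C := by linarith
  have hLτ1 : L * τ ≤ 1 / (16 * C) := by
    rw [le_div_iff₀ (by positivity)]
    linarith
  have hs2 : s ^ 2 * τ ^ 2 ≤ μ / C / 3328 :=
    calc s ^ 2 * τ ^ 2 ≤ μ * L * τ ^ 2 * 1 := by
          rw [mul_one]
          gcongr
      _ ≤ μ * L * τ ^ 2 * L := by gcongr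
      _ = μ * (L * τ) * (L * τ) := by ring
      _ ≤ μ * (1 / (16 * C)) * (1 / (16 * 13)) := by
          gcongr
          exact hLτ1.trans (by gcongr)
      _ = μ / C / 3328 := by ring
  have hs3 : s ^ 2 * τ ^ 3 ≤ s ^ 2 * τ ^ 2 := by
    gcongr ?_ * ?_
    exact pow_le_pow_of_le_one hτ hτ1 (by norm_num)
  have hL3 : L ^ 2 * τ ^ 3 ≤ μ / C / 40960000 :=
    calc L ^ 2 * τ ^ 3 = L * τ * (L * τ ^ 2) := by ring
      _ ≤ 1 / (16 * C) * (μ / 2560000) := by gcongr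
      _ = μ / C / 40960000 := by ring
  have hR3 : R ^ 2 * τ ^ 3 ≤ (L ^ 2 / 4 + s ^ 2) * τ ^ 3 := by gcongr
  have hμC : μ / C ≤ ε * μ / 3 := by
    rw [div_le_div_iff₀ hC0 (by norm_num)]
    nlinarith
  linarith [div_nonneg hμ hC0.le]

lemma mul_add_mul_sq_le {R : ℝ} (hμ : 0 ≤ μ) (hs0 : 0 ≤ s) (hL : 0 ≤ L) (hτ : 0 ≤ τ) (hτ1 : τ ≤ 1)
    (hR : R ^ 2 ≤ L ^ 2 / 4 + s ^ 2) (hsτ : s * τ ≤ μ / 1600) (hLτ : L * τ ^ 2 ≤ μ / 2560000) :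
    144 * (s * τ + R * τ ^ 2) ≤ μ / 2 := by
  have hRs : R ≤ L / 2 + s := le_of_sq_le_sq (by nlinarith) (by positivity)
  have hRτ : R * τ ^ 2 ≤ (L / 2 + s) * τ ^ 2 := by gcongr
  have hs2 : s * τ ^ 2 ≤ s * τ := by
    gcongr
    exact pow_le_of_le_one hτ hτ1 two_ne_zero
  linarith

lemma sqrt_div_le_mul (hC : 0 < C) (hL : 0 < L) (hμ : 0 ≤ μ) (hs0 : 0 ≤ s)
    (hs : μ * L / 4 ≤ s ^ 2) (hCLτ : 1 / 34 ≤ C * L * τ) :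
    1 / (68000 * C) * √(μ / L) ≤ s * τ / 1000 := by
  have hsqrt : √(μ / L) ^ 2 * L = μ := by
    rw [sq_sqrt (by positivity)]
    field_simp
  have hτ : 0 ≤ C * τ := by
    refine nonneg_of_mul_nonneg_left (b := L) ?_ hL
    linarith
  have hsL : √(μ / L) * L / 2 ≤ s := by
    refine le_of_sq_le_sq (le_trans (le_of_eq ?_) hs) hs0
    linear_combination L / 4 * hsqrt
  calc 1 / (68000 * C) * √(μ / L) = √(μ / L) / 2 * (1 / 34) / (1000 * C) := by
        field_simp
        ring
    _ ≤ √(μ / L) / 2 * (C * L * τ) / (1000 * C) := by gcongr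
    _ = √(μ / L) * L / 2 * (C * τ) / (1000 * C) := by ring
    _ ≤ s * (C * τ) / (1000 * C) := by gcongr
    _ = s * τ / 1000 := by field_simp

end PriorScale

section ExistsPriorPair

variable {C g ε L : ℝ}

lemma isPriorPair_nodeProb (hC : 13 ≤ C) (hCg : 100 ≤ C * g) (hCε : 3 ≤ C * ε) (hL : 1 ≤ L)
    {α m R : ℝ} (hm : 0 < m) (hR : 0 ≤ R) (hRm : R ≤ m) (hRL : R ^ 2 / m ≤ L / 2)
    (hμ : g ^ 2 ≤ (m - R * cos α) * L)
    (hs : (m - R * cos α) * L / 4 ≤ (R * sin α) ^ 2) (hs' : (R * sin α) ^ 2 ≤ (m - R * cos α) * L)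
    (hR2 : R ^ 2 ≤ L ^ 2 / 4 + (R * sin α) ^ 2) (hα : 12.5 / (C * L) ≤ sin α) :
    IsPriorPair ε (1 / (68000 * C)) L (m - R * cos α) (nodeProb ⌈C * L⌉₊)
      (nodeIntensity ⌈C * L⌉₊ α m R) := by
  have hC0 : 0 < C := by linarith
  have hL0 : 0 < L := by linarith
  have hCL : 13 ≤ C * L := by nlinarith
  have hD : 1 ≤ ⌈C * L⌉₊ := Nat.one_le_ceil_iff.mpr (by linarith)
  have hτ := nodeStep_pos hD
  have hτ1 : nodeStep ⌈C * L⌉₊ ≤ 1 := by linarith [nodeStep_le hD]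
  obtain ⟨hlow, hup⟩ := mul_nodeStep_ceil_mem_Icc hCL
  have hα0 : 0 ≤ sin α := le_trans (by positivity) hα
  have hατ : 200 * nodeStep ⌈C * L⌉₊ ≤ sin α := by
    refine le_trans ?_ hα
    rw [le_div_iff₀ (by positivity)]
    linarith
  have hs0 : 0 ≤ R * sin α := mul_nonneg hR hα0
  have hμ0 : 0 ≤ m - R * cos α := nonneg_of_mul_nonneg_left ((sq_nonneg g).trans hμ) hL0
  have hLτ := mul_sq_le_of_mul_mul_le hCg hL0 hμ (by linarith) hup
  refine ⟨nodeProb_nonneg, nodeIntensity_nonneg hR hRm, sum_nodeProb hD,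
    sum_nodeProb_mul_nodeIntensity hD, fun b ↦ ?_, fun b ↦ ?_, ?_,
    sum_abs_nodeProb_mixture_sub_le hD hm hR hL
      ((mul_le_mul_of_nonneg_right hC hL0.le).trans (Nat.le_ceil _)) hRL⟩
  · have h := mul_add_mul_sq_le hμ0 hs0 hL0.le hτ.le hτ1 hR2 (mul_le_of_mul_sq_le hμ0 hs' hLτ) hLτ
    rw [sum_nodeProb_mul_abs_nodeIntensity_sub hR]
    linarith [mul_le_mul_of_nonneg_left (sum_nodeProb_mul_nodeDist_le hD hα0 b) hR]
  · have h := sq_mul_sq_add_le hC hCε hL hμ0 hτ.le hτ1 hs' hR2 hup hLτ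
    rw [sum_nodeProb_mul_nodeIntensity_sub_sq hR]
    linarith [mul_le_mul_of_nonneg_left (sum_nodeProb_mul_nodeDist_sq_le hD hα0 b) (sq_nonneg R)]
  · rw [sum_nodeProb_mul_abs_nodeIntensity_sub hR, sum_nodeProb_mul_abs_nodeIntensity_sub hR,
      ← mul_sub, ← sum_sub_distrib]
    simp only [← sub_mul]
    refine (sqrt_div_le_mul hC0 hL0 hμ0 hs0 hs hlow).trans ?_
    linarith [mul_le_mul_of_nonneg_left
      (le_sum_nodeProb_true_sub_nodeProb_false_mul_nodeDist hD hατ) hR]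

/-- For small `μ` the intensities fill `[0, L]`, and `μ` sits near the endpoint `0`, where Chebyshev
nodes are denser. -/
lemma exists_isPriorPair_of_le_half (hC : 13 ≤ C) (hg : 0 < g) (hCg : 100 ≤ C * g)
    (hCε : 3 ≤ C * ε) (hL : 1 ≤ L) {μ : ℝ} (hμ : g ^ 2 ≤ μ * L) (hμL : μ ≤ L / 2) :
    ∃ (m : ℕ) (w : Bool → Fin m → ℝ) (lam : Fin m → ℝ),
      IsPriorPair ε (1 / (68000 * C)) L μ w lam := by
  have hL0 : 0 < L := by linarith
  have hC0 : 0 < C := by linarith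
  have hμ0 : 0 < μ := pos_of_mul_pos_left ((by positivity : 0 < g ^ 2).trans_le hμ) hL0.le
  have hq : 2 * μ / L ≤ 1 := (div_le_one hL0).mpr (by linarith)
  have hq0 : 0 < 2 * μ / L := by positivity
  have hcos : cos (arccos (1 - 2 * μ / L)) = 1 - 2 * μ / L := cos_arccos (by linarith) (by linarith)
  have hcenter : L / 2 - L / 2 * cos (arccos (1 - 2 * μ / L)) = μ := by
    rw [hcos]
    field_simp
    ring
  have hsin : (sin (arccos (1 - 2 * μ / L)) * L) ^ 2 = 4 * μ * (L - μ) := by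
    rw [mul_pow, sin_sq, hcos]
    field_simp
    ring
  have hs : (L / 2 * sin (arccos (1 - 2 * μ / L))) ^ 2 = μ * (L - μ) := by
    linear_combination hsin / 4
  refine ⟨_, _, _, hcenter ▸ isPriorPair_nodeProb (α := arccos (1 - 2 * μ / L)) hC hCg hCε hL
    (half_pos hL0) (half_pos hL0).le le_rfl ?_ ?_ ?_ ?_ ?_ ?_⟩
  · exact le_of_eq (by field_simp)
  · rwa [hcenter]
  · rw [hcenter, hs]
    nlinarith
  · rw [hcenter, hs]
    nlinarith
  · rw [hs]
    nlinarith
  · rw [div_le_iff₀ (by positivity), mul_left_comm]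
    refine le_of_sq_le_sq ?_ (mul_nonneg hC0.le (mul_nonneg ?_ hL0.le))
    · calc (12.5 : ℝ) ^ 2 ≤ 2 * (C * g) ^ 2 := by nlinarith
        _ = C ^ 2 * (2 * g ^ 2) := by ring
        _ ≤ C ^ 2 * (4 * μ * (L - μ)) :=
            mul_le_mul_of_nonneg_left (by nlinarith) (sq_nonneg C)
        _ = (C * (sin (arccos (1 - 2 * μ / L)) * L)) ^ 2 := by rw [mul_pow, hsin]
    · exact sin_nonneg_of_nonneg_of_le_pi (arccos_nonneg _) (arccos_le_pi _)

/-- For large `μ` the intensities fill an interval centred at `μ`. -/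
lemma exists_isPriorPair_of_half_lt (hC : 13 ≤ C) (hCg : 100 ≤ C * g) (hCε : 3 ≤ C * ε)
    (hL : 1 ≤ L) {μ : ℝ} (hμ : g ^ 2 ≤ μ * L) (hμL : L / 2 < μ) :
    ∃ (m : ℕ) (w : Bool → Fin m → ℝ) (lam : Fin m → ℝ),
      IsPriorPair ε (1 / (68000 * C)) L μ w lam := by
  have hμ0 : 0 < μ := by linarith
  have hR2 : √(μ * L / 2) ^ 2 = μ * L / 2 := sq_sqrt (by positivity)
  have hcenter : μ - √(μ * L / 2) * cos (π / 2) = μ := by rw [cos_pi_div_two, mul_zero, sub_zero]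
  have hμL0 : 0 < μ * L := by positivity
  refine ⟨_, _, _, hcenter ▸ isPriorPair_nodeProb (α := π / 2) hC hCg hCε hL hμ0 (sqrt_nonneg _)
    ?_ ?_ ?_ ?_ ?_ ?_ ?_⟩
  · refine le_of_sq_le_sq ?_ hμ0.le
    rw [hR2]
    nlinarith
  · rw [hR2]
    exact le_of_eq (by field_simp)
  · rwa [hcenter]
  all_goals rw [sin_pi_div_two]
  · rw [hcenter, mul_one, hR2]
    linarith
  · rw [hcenter, mul_one, hR2]
    linarith
  · rw [mul_one]
    linarith [sq_nonneg L]
  · rw [div_le_one (by positivity)]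
    nlinarith

theorem exists_isPriorPair {κ ε : ℝ} (hκ : 0 < κ) (hε : 0 < ε) :
    ∃ c : ℝ, 0 < c ∧ ∀ L μ : ℝ, 1 ≤ L → κ / L ≤ μ →
      ∃ (m : ℕ) (w : Bool → Fin m → ℝ) (lam : Fin m → ℝ), IsPriorPair ε c L μ w lam := by
  have hg : 0 < √κ := sqrt_pos.mpr hκ
  have hg' : 0 < 100 / √κ := by positivity
  have hε' : 0 < 3 / ε := by positivity
  obtain ⟨C, hC⟩ : ∃ C, C = 13 + 100 / √κ + 3 / ε := ⟨_, rfl⟩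
  have hC13 : 13 ≤ C := by linarith
  have hCg : 100 ≤ C * √κ := (div_le_iff₀ hg).mp (by linarith)
  have hCε : 3 ≤ C * ε := (div_le_iff₀ hε).mp (by linarith)
  refine ⟨1 / (68000 * C), by positivity, fun L μ hL hμ ↦ ?_⟩
  have hμL : √κ ^ 2 ≤ μ * L := by rwa [sq_sqrt hκ.le, ← div_le_iff₀ (by linarith)]
  rcases le_or_gt μ (L / 2) with h | h
  · exact exists_isPriorPair_of_le_half hC13 hg hCg hCε hL hμL h
  · exact exists_isPriorPair_of_half_lt hC13 hCg hCε hL hμL h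

end ExistsPriorPair

/-! ### Independent draws from a prior and two-point testing -/

section ProductSums

lemma abs_prod_sub_prod_le {ι : Type*} [Fintype ι] [LinearOrder ι] {f g : ι → ℝ}
    (hf : ∀ i, 0 ≤ f i) (hg : ∀ i, 0 ≤ g i) :
    |∏ i, f i - ∏ i, g i| ≤
      ∑ i, ∏ j, if j < i then g j else if i < j then f j else |f j - g j| := by
  have htelescope := prod_sub_ordered univ f (f - g)
  simp only [Pi.sub_apply, sub_sub_cancel] at htelescope
  rw [htelescope, sub_sub_cancel]
  refine (abs_sum_le_sum_abs _ _).trans (sum_le_sum fun i _ ↦ le_of_eq ?_)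
  have hpos : 0 ≤ (∏ j with j < i, g j) * ∏ j with i < j, f j :=
    mul_nonneg (prod_nonneg fun j _ ↦ hg j) (prod_nonneg fun j _ ↦ hf j)
  have hi : |f i - g i| = ∏ j, if j = i then |f j - g j| else 1 := by simp
  rw [mul_assoc, abs_mul, abs_of_nonneg hpos, hi, prod_filter, prod_filter, ← prod_mul_distrib,
    ← prod_mul_distrib]
  refine prod_congr rfl fun j _ ↦ ?_
  rcases lt_trichotomy j i with h | rfl | h
  · simp [h, h.ne, h.not_gt]
  · simp
  · simp [h, h.ne', h.not_gt]

lemma sum_piFinset_abs_prod_sub_prod_le {ι α : Type*} [Fintype ι] [LinearOrder ι] (t : Finset α)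
    {f g : ι → α → ℝ} (hf : ∀ i a, 0 ≤ f i a) (hg : ∀ i a, 0 ≤ g i a)
    (hf_sum : ∀ i, ∑ a ∈ t, f i a ≤ 1) (hg_sum : ∀ i, ∑ a ∈ t, g i a ≤ 1) :
    ∑ x ∈ Fintype.piFinset fun _ : ι ↦ t, |∏ i, f i (x i) - ∏ i, g i (x i)| ≤
      ∑ i, ∑ a ∈ t, |f i a - g i a| := by
  let factor (i j : ι) (a : α) : ℝ :=
    if j < i then g j a else if i < j then f j a else |f j a - g j a|
  calc _ ≤ ∑ x ∈ Fintype.piFinset fun _ : ι ↦ t, ∑ i, ∏ j, factor i j (x j) :=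
        sum_le_sum fun x _ ↦ abs_prod_sub_prod_le (fun i ↦ hf i (x i)) fun i ↦ hg i (x i)
    _ = ∑ i, ∏ j, ∑ a ∈ t, factor i j a := by
        rw [sum_comm]
        exact sum_congr rfl fun i _ ↦ (prod_univ_sum (fun _ ↦ t) (factor i)).symm
    _ ≤ ∑ i, ∑ a ∈ t, |f i a - g i a| := sum_le_sum fun i _ ↦ by
        have hfactor_nonneg (j : ι) : 0 ≤ ∑ a ∈ t, factor i j a := sum_nonneg fun a _ ↦ by
          dsimp only [factor]
          split_ifs
          exacts [hg j a, hf j a, abs_nonneg _]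
        have hfactor_le (j : ι) (hj : j ∈ univ.erase i) : ∑ a ∈ t, factor i j a ≤ 1 := by
          rcases (ne_of_mem_erase hj).lt_or_gt with h | h
          · simpa only [factor, if_pos h] using hg_sum j
          · simpa only [factor, if_neg h.not_gt, if_pos h] using hf_sum j
        have hfactor_self : ∑ a ∈ t, factor i i a = ∑ a ∈ t, |f i a - g i a| := by
          simp only [factor, lt_irrefl, if_false]
        rw [← mul_prod_erase univ _ (mem_univ i), ← hfactor_self]
        exact mul_le_of_le_one_right (hfactor_nonneg i)
          (prod_le_one (fun j _ ↦ hfactor_nonneg j) hfactor_le)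

end ProductSums

section IndependentSums

variable {ι α : Type*} [Fintype ι] [DecidableEq ι] [Fintype α] {w : α → ℝ}

lemma sum_prod_eq_one (hw : ∑ a, w a = 1) : ∑ k : ι → α, ∏ i, w (k i) = 1 := by
  rw [← Fintype.piFinset_univ, ← prod_univ_sum (fun _ : ι ↦ univ) fun _ ↦ w]
  simp only [hw, prod_const_one]

lemma sum_prod_mul_mul (hw : ∑ a, w a = 1) {z : α → ℝ} (hz : ∑ a, w a * z a = 0) (i j : ι) :
    ∑ k : ι → α, (∏ l, w (k l)) * (z (k i) * z (k j)) =
      if i = j then ∑ a, w a * z a ^ 2 else 0 := by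
  have hfactor (k : ι → α) : (∏ l, w (k l)) * (z (k i) * z (k j)) =
      ∏ l, w (k l) * ((if l = i then z (k l) else 1) * if l = j then z (k l) else 1) := by
    simp only [prod_mul_distrib, prod_ite_eq', mem_univ, if_true]
  rw [sum_congr rfl fun k _ ↦ hfactor k, ← Fintype.piFinset_univ, ← prod_univ_sum
    (fun _ : ι ↦ univ) fun l a ↦ w a * ((if l = i then z a else 1) * if l = j then z a else 1)]
  split_ifs with h
  · subst h
    rw [prod_eq_single_of_mem i (mem_univ i) fun l _ hl ↦ by simp [hl, hw]]
    simp only [if_true, sq]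
  · refine prod_eq_zero (mem_univ i) ?_
    simp only [if_true, if_neg h, mul_one, hz]

lemma sum_prod_mul_sum_sq (hw : ∑ a, w a = 1) {z : α → ℝ} (hz : ∑ a, w a * z a = 0) :
    ∑ k : ι → α, (∏ i, w (k i)) * (∑ i, z (k i)) ^ 2 =
      Fintype.card ι * ∑ a, w a * z a ^ 2 := by
  have hexpand (k : ι → α) : (∏ i, w (k i)) * (∑ i, z (k i)) ^ 2 =
      ∑ i, ∑ j, (∏ l, w (k l)) * (z (k i) * z (k j)) := by
    rw [sq, sum_mul_sum, mul_sum]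
    exact sum_congr rfl fun i _ ↦ mul_sum _ _ _
  rw [sum_congr rfl fun k _ ↦ hexpand k, sum_comm, sum_congr rfl fun i _ ↦ sum_comm]
  simp only [sum_prod_mul_mul hw hz, sum_ite_eq, mem_univ, if_true, sum_const, card_univ,
    nsmul_eq_mul]

lemma sum_mul_sub_mean_sq_le (hw : ∑ a, w a = 1) (z : α → ℝ) (c : ℝ) :
    ∑ a, w a * (z a - ∑ a', w a' * z a') ^ 2 ≤ ∑ a, w a * (z a - c) ^ 2 := by
  have hexpand (d : ℝ) : ∑ a, w a * (z a - d) ^ 2 =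
      ∑ a, w a * z a ^ 2 - 2 * d * ∑ a, w a * z a + d ^ 2 :=
    calc _ = ∑ a, (w a * z a ^ 2 - 2 * d * (w a * z a) + d ^ 2 * w a) :=
          sum_congr rfl fun a _ ↦ by ring
      _ = _ := by rw [sum_add_distrib, sum_sub_distrib, ← mul_sum, ← mul_sum, hw, mul_one]
  rw [hexpand, hexpand]
  linarith [sq_nonneg (∑ a, w a * z a - c)]

lemma sum_filter_lt_abs_sum_le (hw_nonneg : ∀ a, 0 ≤ w a) (hw : ∑ a, w a = 1) {z : α → ℝ}
    (hz : ∑ a, w a * z a = 0) {s : ℝ} (hs : 0 < s) :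
    ∑ k : ι → α with s < |∑ i, z (k i)|, ∏ i, w (k i) ≤
      Fintype.card ι * (∑ a, w a * z a ^ 2) / s ^ 2 := by
  have hprod (k : ι → α) : 0 ≤ ∏ i, w (k i) := prod_nonneg fun i _ ↦ hw_nonneg (k i)
  rw [le_div_iff₀ (pow_pos hs 2), sum_mul, ← sum_prod_mul_sum_sq hw hz]
  calc ∑ k : ι → α with s < |∑ i, z (k i)|, (∏ i, w (k i)) * s ^ 2
      ≤ ∑ k : ι → α with s < |∑ i, z (k i)|, (∏ i, w (k i)) * (∑ i, z (k i)) ^ 2 := by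
        refine sum_le_sum fun k hk ↦ mul_le_mul_of_nonneg_left ?_ (hprod k)
        rw [← sq_abs (∑ i, z (k i))]
        exact pow_le_pow_left₀ hs.le (mem_filter.mp hk).2.le 2
    _ ≤ ∑ k : ι → α, (∏ i, w (k i)) * (∑ i, z (k i)) ^ 2 :=
        sum_le_sum_of_subset_of_nonneg (filter_subset _ _)
          fun k _ _ ↦ mul_nonneg (hprod k) (sq_nonneg _)

lemma sum_filter_lt_abs_sum_sub_mean_le (hw_nonneg : ∀ a, 0 ≤ w a) (hw : ∑ a, w a = 1)
    (z : α → ℝ) (c : ℝ) {s : ℝ} (hs : 0 < s) :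
    ∑ k : ι → α with s < |∑ i, (z (k i) - ∑ a, w a * z a)|, ∏ i, w (k i) ≤
      Fintype.card ι * (∑ a, w a * (z a - c) ^ 2) / s ^ 2 := by
  have hcentred : ∑ a, w a * (z a - ∑ a', w a' * z a') = 0 := by
    simp only [mul_sub, sum_sub_distrib, ← sum_mul, hw, one_mul, sub_self]
  refine (sum_filter_lt_abs_sum_le (z := fun a ↦ z a - ∑ a', w a' * z a')
    hw_nonneg hw hcentred hs).trans ?_
  exact div_le_div_of_nonneg_right
    (mul_le_mul_of_nonneg_left (sum_mul_sub_mean_sq_le hw z c) (Nat.cast_nonneg _)) (sq_nonneg s)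

end IndependentSums

section TwoPoint

variable {X : Type*}

lemma sum_sub_sum_le_sum_abs_sub (E : Finset X) (P Q : X → ℝ) :
    ∑ x ∈ E, Q x - ∑ x ∈ E, P x ≤ ∑ x ∈ E, |P x - Q x| := by
  rw [← sum_sub_distrib]
  exact sum_le_sum fun x _ ↦ by linarith [neg_abs_le (P x - Q x)]

lemma sum_mixture_le {κ : Type*} [Fintype κ] {W : κ → ℝ} (hW : ∀ k, 0 ≤ W k) (hW_sum : ∑ k, W k = 1)
    (E : Finset X) {P Q : κ → X → ℝ} (hQ : ∀ k, ∑ x ∈ E, Q k x ≤ 1) {G : κ → Prop}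
    [DecidablePred G] {a d η : ℝ} (had : 0 ≤ a + d) (hG : ∑ k with ¬ G k, W k ≤ η)
    (hP : ∀ k, G k → ∑ x ∈ E, P k x ≤ a) (hPQ : ∀ k, G k → ∑ x ∈ E, |P k x - Q k x| ≤ d) :
    ∑ x ∈ E, ∑ k, W k * Q k x ≤ a + d + η := by
  rw [sum_comm]
  simp only [← mul_sum]
  rw [← sum_filter_add_sum_filter_not univ G]
  refine add_le_add ?_ ((sum_le_sum fun k _ ↦ mul_le_of_le_one_right (hW k) (hQ k)).trans hG)
  calc _ ≤ ∑ k with G k, W k * (a + d) := sum_le_sum fun k hk ↦ by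
        have hk := (mem_filter.mp hk).2
        refine mul_le_mul_of_nonneg_left ?_ (hW k)
        linarith [hP k hk, hPQ k hk, sum_sub_sum_le_sum_abs_sub E (P k) (Q k)]
    _ ≤ ∑ k, W k * (a + d) :=
        sum_le_sum_of_subset_of_nonneg (filter_subset _ _) fun k _ _ ↦ mul_nonneg (hW k) had
    _ = a + d := by rw [← sum_mul, hW_sum, one_mul]

lemma sum_le_of_sum_filter_le (F : Finset X) (A : X → Prop) [DecidablePred A] {u v : X → ℝ}
    {a d : ℝ} (hv : ∑ x ∈ F with A x, v x ≤ a) (hu : ∑ x ∈ F with ¬ A x, u x ≤ a)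
    (huv : ∑ x ∈ F, |u x - v x| ≤ d) : ∑ x ∈ F, v x ≤ 2 * a + d := by
  have hsub : ∑ x ∈ F with ¬ A x, |u x - v x| ≤ ∑ x ∈ F, |u x - v x| :=
    sum_le_sum_of_subset_of_nonneg (filter_subset _ _) fun x _ _ ↦ abs_nonneg _
  rw [← sum_filter_add_sum_filter_not F A]
  linarith [sum_sub_sum_le_sum_abs_sub {x ∈ F | ¬ A x} u v]

end TwoPoint

/-! ### The lower bound -/

section DrawDist

/-- The fixed distribution of the lower bound: half of the mass sits on symbol `0`, the other half
is spread evenly over the remaining `N` symbols. -/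
noncomputable def nullDist (N : ℕ) : Fin (N + 1) → ℝ :=
  Fin.cons (1 / 2) fun _ ↦ 1 / (2 * N)

/-- The Poisson intensities of the `N + 1` counts: `b` for symbol `0`, and the drawn intensity
`lam (k i)` for the `i`-th remaining symbol. -/
def drawIntensity {ι : Type*} {N : ℕ} (b : ℝ) (lam : ι → ℝ) (k : Fin N → ι) : Fin (N + 1) → ℝ :=
  Fin.cons b fun i ↦ lam (k i)

/-- The random alternative to `nullDist N`: symbol `i + 1` has mass `lam (k i) / n`, and symbol `0`
takes the remaining mass. -/
noncomputable def drawDist {ι : Type*} {N : ℕ} (n : ℕ) (lam : ι → ℝ) (k : Fin N → ι)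
    (i : Fin (N + 1)) : ℝ :=
  drawIntensity (n - ∑ j, lam (k j)) lam k i / n

variable {ι : Type*} {N n : ℕ} {lam : ι → ℝ} {k : Fin N → ι}

lemma isDist_nullDist (hN : 1 ≤ N) : IsDist (nullDist N) := by
  have : (0 : ℝ) < N := by exact_mod_cast hN
  have hsucc (i : Fin N) : 0 ≤ nullDist N i.succ := by
    rw [nullDist, Fin.cons_succ]
    positivity
  refine ⟨Fin.cases (by norm_num [nullDist]) hsucc, ?_⟩
  · rw [Fin.sum_univ_succ]
    simp only [nullDist, Fin.cons_zero, Fin.cons_succ, sum_const, card_univ, Fintype.card_fin,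
      nsmul_eq_mul]
    field_simp
    norm_num

lemma drawIntensity_nonneg {b : ℝ} (hb : 0 ≤ b) (hlam : ∀ a, 0 ≤ lam a) (i : Fin (N + 1)) :
    0 ≤ drawIntensity b lam k i :=
  Fin.cases hb (fun j ↦ hlam (k j)) i

lemma isDist_drawDist (hn : 1 ≤ n) (hlam : ∀ a, 0 ≤ lam a) (hk : ∑ j, lam (k j) ≤ n) :
    IsDist (drawDist n lam k) := by
  have hn0 : (n : ℝ) ≠ 0 := by exact_mod_cast (by omega : n ≠ 0)
  refine ⟨fun i ↦ div_nonneg (drawIntensity_nonneg (sub_nonneg.mpr hk) hlam i) n.cast_nonneg, ?_⟩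
  simp only [drawDist]
  rw [← sum_div, Fin.sum_univ_succ]
  simp only [drawIntensity, Fin.cons_zero, Fin.cons_succ]
  rw [sub_add_cancel, div_self hn0]

lemma prodPMF_drawDist (hn : 1 ≤ n) (x : Fin (N + 1) → ℕ) :
    prodPMF n (drawDist n lam k) x =
      ∏ i, poissonPMF (drawIntensity (n - ∑ j, lam (k j)) lam k i) (x i) := by
  have hn0 : (n : ℝ) ≠ 0 := by exact_mod_cast (by omega : n ≠ 0)
  simp only [prodPMF, drawDist, mul_div_cancel₀ _ hn0]

lemma L1dist_drawDist_nullDist (hN : 1 ≤ N) (hn : 1 ≤ n) :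
    L1dist (drawDist n lam k) (nullDist N) =
      (∑ j, |lam (k j) - n / (2 * N)| + |∑ j, lam (k j) - n / 2|) / n := by
  have : (0 : ℝ) < N := by exact_mod_cast hN
  have hn0 : (0 : ℝ) < n := by exact_mod_cast hn
  have hzero : (n - ∑ j, lam (k j)) / n - 1 / 2 = -((∑ j, lam (k j) - n / 2) / n) := by
    field_simp
    ring
  have hsucc (j : Fin N) : lam (k j) / n - 1 / (2 * N) = (lam (k j) - n / (2 * N)) / n := by
    field_simp
  rw [L1dist, Fin.sum_univ_succ]
  simp only [drawDist, drawIntensity, nullDist, Fin.cons_zero, Fin.cons_succ, hsucc, hzero, abs_neg,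
    abs_div, abs_of_pos hn0]
  rw [← sum_div, ← add_div, add_comm]

lemma sum_piFinset_abs_prod_drawIntensity_sub_le {a b : ℝ} (ha : 0 ≤ a) (hb : 0 ≤ b)
    (hlam : ∀ a, 0 ≤ lam a) (t : Finset ℕ) :
    ∑ x ∈ Fintype.piFinset fun _ : Fin (N + 1) ↦ t,
        |∏ i, poissonPMF (drawIntensity a lam k i) (x i) -
          ∏ i, poissonPMF (drawIntensity b lam k i) (x i)| ≤
      ∑ y ∈ t, |poissonPMF a y - poissonPMF b y| := by
  have ha' (i : Fin (N + 1)) : 0 ≤ drawIntensity a lam k i := drawIntensity_nonneg ha hlam i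
  have hb' (i : Fin (N + 1)) : 0 ≤ drawIntensity b lam k i := drawIntensity_nonneg hb hlam i
  refine (sum_piFinset_abs_prod_sub_prod_le t (fun i ↦ poissonPMF_nonneg (ha' i))
    (fun i ↦ poissonPMF_nonneg (hb' i)) (fun i ↦ sum_poissonPMF_le_one (ha' i) t)
    fun i ↦ sum_poissonPMF_le_one (hb' i) t).trans_eq ?_
  rw [Fin.sum_univ_succ]
  simp only [drawIntensity, Fin.cons_zero, Fin.cons_succ, sub_self, abs_zero, sum_const_zero,
    add_zero]

end DrawDist

section TypicalDraw

lemma sum_union_le_sum_add_sum {α : Type*} [DecidableEq α] {f : α → ℝ} (hf : ∀ a, 0 ≤ f a)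
    (s t : Finset α) : ∑ a ∈ s ∪ t, f a ≤ ∑ a ∈ s, f a + ∑ a ∈ t, f a := by
  rw [← sum_union_inter]
  exact le_add_of_nonneg_right (sum_nonneg fun a _ ↦ hf a)

variable {ι : Type*} [Fintype ι] {N n : ℕ} {w lam : ι → ℝ} {μ s : ℝ} {k : Fin N → ι}

/-- Both the sum of the drawn intensities and the sum of their absolute deviations from `μ` are
within `s` of their expectations under independent draws from `w`. -/
def IsTypicalDraw (w lam : ι → ℝ) (μ s : ℝ) (k : Fin N → ι) : Prop :=
  |∑ j, (lam (k j) - ∑ a, w a * lam a)| ≤ s ∧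
    |∑ j, (|lam (k j) - μ| - ∑ a, w a * |lam a - μ|)| ≤ s

/-- The approximate `L₁` distance of `drawDist n lam k` to `nullDist N` for draws `k` from `w`,
obtained by replacing the sums over the draws by their expectations. -/
noncomputable def typicalL1dist (N n : ℕ) (w lam : ι → ℝ) : ℝ :=
  (N * ∑ a, w a * |lam a - n / (2 * N)| + |N * ∑ a, w a * lam a - n / 2|) / n

lemma IsTypicalDraw.abs_sum_sub_le (hk : IsTypicalDraw w lam μ s k) :
    |∑ j, lam (k j) - N * ∑ a, w a * lam a| ≤ s := by
  simpa only [sum_sub_distrib, sum_const, card_univ, Fintype.card_fin, nsmul_eq_mul] using hk.1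

lemma IsTypicalDraw.abs_sum_abs_sub_le (hk : IsTypicalDraw w lam μ s k) :
    |(∑ j, |lam (k j) - μ| - N * ∑ a, w a * |lam a - μ|)| ≤ s := by
  simpa only [sum_sub_distrib, sum_const, card_univ, Fintype.card_fin, nsmul_eq_mul] using hk.2

lemma IsTypicalDraw.abs_L1dist_sub_le (hN : 1 ≤ N) (hn : 1 ≤ n)
    (hk : IsTypicalDraw w lam (n / (2 * N)) s k) :
    |L1dist (drawDist n lam k) (nullDist N) - typicalL1dist N n w lam| ≤ 2 * s / n := by
  have hheavy : |(|∑ j, lam (k j) - n / 2| - |N * ∑ a, w a * lam a - n / 2|)| ≤ s := by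
    refine (abs_abs_sub_abs_le_abs_sub _ _).trans ?_
    rw [sub_sub_sub_cancel_right]
    exact hk.abs_sum_sub_le
  rw [L1dist_drawDist_nullDist hN hn, typicalL1dist, ← sub_div, abs_div, Nat.abs_cast,
    add_sub_add_comm, two_mul s]
  gcongr
  exact (abs_add_le _ _).trans (add_le_add hk.abs_sum_abs_sub_le hheavy)

open scoped Classical in
lemma sum_filter_not_isTypicalDraw_le (hw_nonneg : ∀ a, 0 ≤ w a) (hw : ∑ a, w a = 1)
    (hs : 0 < s) :
    ∑ k : Fin N → ι with ¬ IsTypicalDraw w lam μ s k, ∏ i, w (k i) ≤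
      2 * (N * (∑ a, w a * (lam a - μ) ^ 2) / s ^ 2) := by
  have hsum := sum_filter_lt_abs_sum_sub_mean_le (ι := Fin N) hw_nonneg hw lam μ hs
  have hdev := sum_filter_lt_abs_sum_sub_mean_le (ι := Fin N) hw_nonneg hw
    (fun a ↦ |lam a - μ|) 0 hs
  simp only [sub_zero, sq_abs, Fintype.card_fin] at hsum hdev
  have hprod (k : Fin N → ι) : 0 ≤ ∏ i, w (k i) := prod_nonneg fun i _ ↦ hw_nonneg (k i)
  simp only [IsTypicalDraw, not_and_or, not_le, filter_or]
  linarith [sum_union_le_sum_add_sum hprod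
    {k : Fin N → ι | s < |∑ i, (lam (k i) - ∑ a, w a * lam a)|}
    {k : Fin N → ι | s < |∑ i, (|lam (k i) - μ| - ∑ a, w a * |lam a - μ|)|}]

end TypicalDraw

section MixtureLaw

variable {ι : Type*} [Fintype ι] {N n : ℕ} {w w' lam : ι → ℝ}

/-- The marginal laws of the counts when the `N` light intensities are drawn independently from `w`
and the intensity of symbol `0` is frozen at `n` minus the expected sum of the others. Freezing it
makes the counts independent; it costs little because typical draws have nearly that sum. -/
noncomputable def mixtureLaw (n : ℕ) (w lam : ι → ℝ) : Fin (N + 1) → ℕ → ℝ :=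
  Fin.cons (poissonPMF (n - N * ∑ a, w a * lam a)) fun _ ↦ poissonMixture w lam

lemma poissonMixture_nonneg (hw : ∀ a, 0 ≤ w a) (hlam : ∀ a, 0 ≤ lam a) (y : ℕ) :
    0 ≤ poissonMixture w lam y :=
  sum_nonneg fun a _ ↦ mul_nonneg (hw a) (poissonPMF_nonneg (hlam a) y)

lemma hasSum_poissonMixture (hw : ∑ a, w a = 1) : HasSum (poissonMixture w lam) 1 := by
  have h : HasSum (fun y ↦ ∑ a, w a * poissonPMF (lam a) y) (∑ a, w a * 1) :=
    hasSum_sum fun a _ ↦ (hasSum_poissonPMF (lam a)).mul_left (w a)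
  rwa [sum_congr rfl fun a _ ↦ mul_one (w a), hw] at h

lemma mixtureLaw_nonneg (hw : ∀ a, 0 ≤ w a) (hlam : ∀ a, 0 ≤ lam a)
    (hmean : N * ∑ a, w a * lam a ≤ n) (i : Fin (N + 1)) (y : ℕ) : 0 ≤ mixtureLaw n w lam i y :=
  Fin.cases (poissonPMF_nonneg (sub_nonneg.mpr hmean) y)
    (fun _ ↦ poissonMixture_nonneg hw hlam y) i

lemma hasSum_mixtureLaw (hw : ∑ a, w a = 1) (i : Fin (N + 1)) : HasSum (mixtureLaw n w lam i) 1 :=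
  Fin.cases (hasSum_poissonPMF _) (fun _ ↦ hasSum_poissonMixture hw) i

lemma sum_prod_mul_prod_poissonPMF_eq (x : Fin (N + 1) → ℕ) :
    ∑ k : Fin N → ι, (∏ i, w (k i)) *
        ∏ i, poissonPMF (drawIntensity (n - N * ∑ a, w a * lam a) lam k i) (x i) =
      ∏ i, mixtureLaw n w lam i (x i) := by
  have hlight : ∏ i : Fin N, poissonMixture w lam (x i.succ) =
      ∑ k : Fin N → ι, ∏ i, w (k i) * poissonPMF (lam (k i)) (x i.succ) := by
    simp only [poissonMixture, prod_univ_sum, Fintype.piFinset_univ]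
  simp only [Fin.prod_univ_succ, drawIntensity, mixtureLaw, Fin.cons_zero, Fin.cons_succ, hlight]
  rw [mul_sum _ _ (poissonPMF _ _)]
  refine sum_congr rfl fun k _ ↦ ?_
  rw [prod_mul_distrib]
  ring

lemma exists_le_prod_sum_range {κ : Type*} [Fintype κ] {f : κ → ℕ → ℝ} (hf : ∀ i, HasSum (f i) 1)
    {q : ℝ} (hq : q < 1) : ∃ K : ℕ, q ≤ ∏ i, ∑ y ∈ range K, f i y := by
  have hlim : Filter.Tendsto (fun K : ℕ ↦ ∏ i, ∑ y ∈ range K, f i y) Filter.atTop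
      (nhds (∏ _i : κ, (1 : ℝ))) := tendsto_finsetProd _ fun i _ ↦ (hf i).tendsto_sum_nat
  rw [prod_const_one] at hlim
  exact (hlim.eventually (lt_mem_nhds hq)).exists.imp fun K hK ↦ hK.le

lemma sum_piFinset_abs_prod_mixtureLaw_sub_le (hw_nonneg : ∀ a, 0 ≤ w a)
    (hw'_nonneg : ∀ a, 0 ≤ w' a) (hw : ∑ a, w a = 1) (hw' : ∑ a, w' a = 1)
    (hlam : ∀ a, 0 ≤ lam a) (hmean : ∑ a, w a * lam a = ∑ a, w' a * lam a)
    (hmean_le : N * ∑ a, w' a * lam a ≤ n) (t : Finset ℕ) :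
    ∑ x ∈ Fintype.piFinset fun _ : Fin (N + 1) ↦ t,
        |∏ i, mixtureLaw n w lam i (x i) - ∏ i, mixtureLaw n w' lam i (x i)| ≤
      N * ∑ y ∈ t, |poissonMixture w lam y - poissonMixture w' lam y| := by
  have h := mixtureLaw_nonneg hw_nonneg hlam (hmean ▸ hmean_le)
  have h' := mixtureLaw_nonneg hw'_nonneg hlam hmean_le
  refine (sum_piFinset_abs_prod_sub_prod_le t h h'
    (fun i ↦ sum_le_hasSum t (fun y _ ↦ h i y) (hasSum_mixtureLaw hw i))
    fun i ↦ sum_le_hasSum t (fun y _ ↦ h' i y) (hasSum_mixtureLaw hw' i)).trans_eq ?_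
  rw [Fin.sum_univ_succ]
  simp only [mixtureLaw, Fin.cons_zero, Fin.cons_succ, hmean, sub_self, abs_zero, sum_const_zero,
    zero_add, sum_const, card_univ, Fintype.card_fin, nsmul_eq_mul]

end MixtureLaw

lemma sum_prodPMF_le_of_risk_le {S n : ℕ} {p : Fin S → ℝ} (hp : ∀ i, 0 ≤ p i) {L η δ : ℝ}
    {est : (Fin S → ℕ) → ℝ} (hη : 0 ≤ η) (hδ : 0 < δ)
    (hrisk : risk n p L est ≤ ENNReal.ofReal (η * δ ^ 2)) {B : Finset (Fin S → ℕ)}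
    (hB : ∀ x ∈ B, δ ≤ |est x - L|) : ∑ x ∈ B, prodPMF n p x ≤ η := by
  have hprod (x : Fin S → ℕ) : 0 ≤ prodPMF n p x :=
    prod_nonneg fun i _ ↦ poissonPMF_nonneg (mul_nonneg n.cast_nonneg (hp i)) _
  have hsum := (ENNReal.sum_le_tsum B).trans hrisk
  rw [← ENNReal.ofReal_sum_of_nonneg fun x _ ↦ mul_nonneg (hprod x) (sq_nonneg _),
    ENNReal.ofReal_le_ofReal_iff (by positivity)] at hsum
  refine le_of_mul_le_mul_right ?_ (pow_pos hδ 2)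
  calc (∑ x ∈ B, prodPMF n p x) * δ ^ 2 = ∑ x ∈ B, prodPMF n p x * δ ^ 2 := sum_mul _ _ _
    _ ≤ ∑ x ∈ B, prodPMF n p x * (est x - L) ^ 2 := sum_le_sum fun x hx ↦ by
        refine mul_le_mul_of_nonneg_left ?_ (hprod x)
        rw [← sq_abs (est x - L)]
        exact pow_le_pow_left₀ hδ.le (hB x hx) 2
    _ ≤ η * δ ^ 2 := hsum

lemma sum_abs_poissonPMF_sub_poissonPMF_le {a b : ℝ} (hb : 0 < b) (hab : (a - b) ^ 2 ≤ b / 625)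
    (K : Finset ℕ) : ∑ y ∈ K, |poissonPMF a y - poissonPMF b y| ≤ 1 / 10 := by
  refine le_of_sq_le_sq ((sum_abs_poissonPMF_sub_poissonPMF_sq_le hb K).trans ?_) (by norm_num)
  have hexp : exp ((a - b) ^ 2 / b) ≤ exp (1 / 625) :=
    exp_le_exp.mpr ((div_le_iff₀ hb).mpr (by linarith))
  have hneg : 1 - 1 / 625 ≤ exp (-(1 / 625)) := one_sub_le_exp_neg _
  rw [exp_neg, ← one_div, le_div_iff₀ (exp_pos _)] at hneg
  linarith

lemma sum_prod_poissonPMF_le_one {κ : Type*} [Fintype κ] [DecidableEq κ] {l : κ → ℝ}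
    (hl : ∀ i, 0 ≤ l i) {t : Finset ℕ} {E : Finset (κ → ℕ)} (hE : E ⊆ Fintype.piFinset fun _ ↦ t) :
    ∑ x ∈ E, ∏ i, poissonPMF (l i) (x i) ≤ 1 :=
  calc ∑ x ∈ E, ∏ i, poissonPMF (l i) (x i)
    _ ≤ ∑ x ∈ Fintype.piFinset fun _ ↦ t, ∏ i, poissonPMF (l i) (x i) :=
        sum_le_sum_of_subset_of_nonneg hE
          fun x _ _ ↦ prod_nonneg fun i _ ↦ poissonPMF_nonneg (hl i) (x i)
    _ = ∏ i, ∑ y ∈ t, poissonPMF (l i) y :=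
        (prod_univ_sum (fun _ ↦ t) fun i ↦ poissonPMF (l i)).symm
    _ ≤ 1 := prod_le_one (fun i _ ↦ sum_nonneg fun y _ ↦ poissonPMF_nonneg (hl i) y)
        fun i _ ↦ sum_poissonPMF_le_one (hl i) t

lemma sum_abs_prodPMF_drawDist_sub_le {ι : Type*} {N n : ℕ} {lam : ι → ℝ} {k : Fin N → ι}
    (hn : 1 ≤ n) (hlam : ∀ a, 0 ≤ lam a) {b : ℝ} (hb : n / 4 ≤ b) (hk : ∑ j, lam (k j) ≤ n)
    (hkb : |n - ∑ j, lam (k j) - b| ≤ √(n / 2500)) (t : Finset ℕ) :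
    ∑ x ∈ Fintype.piFinset fun _ ↦ t, |prodPMF n (drawDist n lam k) x -
        ∏ i, poissonPMF (drawIntensity b lam k i) (x i)| ≤ 1 / 10 := by
  have hn0 : (0 : ℝ) < n := by exact_mod_cast hn
  have hb0 : 0 < b := by linarith
  simp only [prodPMF_drawDist hn]
  refine (sum_piFinset_abs_prod_drawIntensity_sub_le (sub_nonneg.mpr hk) hb0.le hlam t).trans
    (sum_abs_poissonPMF_sub_poissonPMF_le hb0 ?_ t)
  rw [← sq_abs]
  refine (pow_le_pow_left₀ (abs_nonneg _) hkb 2).trans ?_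
  rw [sq_sqrt (by positivity)]
  linarith

section IsPriorPair

variable {ι : Type*} [Fintype ι] {N n : ℕ} {c L : ℝ} {w : Bool → ι → ℝ} {lam : ι → ℝ}

lemma IsPriorPair.mean_le {ε μ : ℝ} (h : IsPriorPair ε c L μ w lam) (b : Bool) :
    ∑ a, w b a * lam a ≤ 3 / 2 * μ := by
  have hsub : ∑ a, w b a * lam a - μ = ∑ a, w b a * (lam a - μ) := by
    simp only [mul_sub, sum_sub_distrib, ← sum_mul, h.sum_weight, one_mul]
  have hle : ∑ a, w b a * (lam a - μ) ≤ ∑ a, w b a * |lam a - μ| :=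
    sum_le_sum fun a _ ↦ mul_le_mul_of_nonneg_left (le_abs_self _) (h.weight_nonneg b a)
  linarith [h.sum_abs_sub_le b]

lemma IsPriorPair.mul_mean_le (hN : 1 ≤ N) {ε : ℝ} (h : IsPriorPair ε c L (n / (2 * N)) w lam)
    (b : Bool) : N * ∑ a, w b a * lam a ≤ 3 / 4 * n := by
  have hN0 : (0 : ℝ) < N := by exact_mod_cast hN
  refine (mul_le_mul_of_nonneg_left (h.mean_le b) hN0.le).trans_eq ?_
  field_simp
  ring

lemma IsPriorPair.div_le_typicalL1dist_sub (hN : 1 ≤ N) (hn : 1 ≤ n) {ε : ℝ}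
    (h : IsPriorPair ε c L (n / (2 * N)) w lam) :
    N * (c * √(n / (2 * N) / L)) / n ≤
      typicalL1dist N n (w true) lam - typicalL1dist N n (w false) lam := by
  rw [typicalL1dist, typicalL1dist, h.mean_eq, ← sub_div, add_sub_add_right_eq_sub, ← mul_sub]
  gcongr
  exact h.separation

open scoped Classical in
lemma IsPriorPair.sum_atypicalDraw_le (hN : 1 ≤ N) (hn : 1 ≤ n)
    (h : IsPriorPair (1 / 100000) c L (n / (2 * N)) w lam) (b : Bool) :
    ∑ k : Fin N → ι with ¬ IsTypicalDraw (w b) lam (n / (2 * N)) √(n / 2500) k,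
      ∏ i, w b (k i) ≤ 1 / 20 := by
  have hN0 : (0 : ℝ) < N := by exact_mod_cast hN
  have : (0 : ℝ) < n := by exact_mod_cast hn
  refine (sum_filter_not_isTypicalDraw_le (h.weight_nonneg b) (h.sum_weight b)
    (sqrt_pos.mpr (by positivity))).trans ?_
  rw [sq_sqrt (by positivity), ← mul_div_assoc, div_le_iff₀ (by positivity)]
  refine (mul_le_mul_of_nonneg_left (mul_le_mul_of_nonneg_left (h.sum_sq_sub_le b) hN0.le)
    zero_le_two).trans ?_
  field_simp
  norm_num

open scoped Classical in
lemma IsPriorPair.sum_prod_mixtureLaw_le (hN : 1 ≤ N) (hn : 1 ≤ n)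
    (h : IsPriorPair (1 / 100000) c L (n / (2 * N)) w lam) (b : Bool) {t : Finset ℕ}
    {E : Finset (Fin (N + 1) → ℕ)} (hEt : E ⊆ Fintype.piFinset fun _ ↦ t)
    (hE : ∀ k : Fin N → ι, IsTypicalDraw (w b) lam (n / (2 * N)) √(n / 2500) k →
      IsDist (drawDist n lam k) → ∑ x ∈ E, prodPMF n (drawDist n lam k) x ≤ 1 / 10) :
    ∑ x ∈ E, ∏ i, mixtureLaw n (w b) lam i (x i) ≤ 1 / 4 := by
  have hn1 : (1 : ℝ) ≤ n := by exact_mod_cast hn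
  have hsn : √((n : ℝ) / 2500) ≤ n / 4 := sqrt_le_iff.mpr ⟨by positivity, by nlinarith⟩
  have hheavy : n / 4 ≤ n - N * ∑ a, w b a * lam a := by linarith [h.mul_mean_le hN b]
  have hremaining (k : Fin N → ι)
      (hk : IsTypicalDraw (w b) lam (n / (2 * N)) √(n / 2500) k) : ∑ j, lam (k j) ≤ n := by
    linarith [(abs_le.mp hk.abs_sum_sub_le).2]
  simp only [← sum_prod_mul_prod_poissonPMF_eq]
  refine (sum_mixture_le (fun k ↦ prod_nonneg fun i _ ↦ h.weight_nonneg b (k i))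
    (sum_prod_eq_one (h.sum_weight b)) E
    (fun k ↦ sum_prod_poissonPMF_le_one
      (drawIntensity_nonneg (by linarith) h.intensity_nonneg) hEt)
    (by norm_num) (h.sum_atypicalDraw_le hN hn b)
    (fun k hk ↦ hE k hk (isDist_drawDist hn h.intensity_nonneg (hremaining k hk)))
    fun k hk ↦ ?_).trans (by norm_num : (1 : ℝ) / 10 + 1 / 10 + 1 / 20 ≤ 1 / 4)
  refine (sum_le_sum_of_subset_of_nonneg hEt fun x _ _ ↦ abs_nonneg _).trans
    (sum_abs_prodPMF_drawDist_sub_le hn h.intensity_nonneg hheavy (hremaining k hk) ?_ t)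
  rw [sub_sub_sub_cancel_left, abs_sub_comm]
  exact hk.abs_sum_sub_le

lemma IsPriorPair.sum_piFinset_abs_mixtureLaw_sub_le (hN : 1 ≤ N) {ε : ℝ}
    (h : IsPriorPair ε c L (n / (2 * N)) w lam) (t : Finset ℕ) :
    ∑ x ∈ Fintype.piFinset fun _ : Fin (N + 1) ↦ t,
        |∏ i, mixtureLaw n (w true) lam i (x i) - ∏ i, mixtureLaw n (w false) lam i (x i)| ≤
      N * exp (-3 * L) :=
  (sum_piFinset_abs_prod_mixtureLaw_sub_le (h.weight_nonneg true) (h.weight_nonneg false)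
    (h.sum_weight true) (h.sum_weight false) h.intensity_nonneg h.mean_eq
    (by linarith [h.mul_mean_le hN false, (n.cast_nonneg : (0 : ℝ) ≤ n)]) t).trans
    (mul_le_mul_of_nonneg_left (h.sum_abs_mixture_sub_le t) N.cast_nonneg)

/-- Le Cam's two-point method for the mixtures over the two priors: an estimator of smaller risk
would tell them apart by comparing its value with the midpoint of the two typical distances. -/
theorem IsPriorPair.exists_isDist_le_risk (hN : 1 ≤ N) (hn : 1 ≤ n)
    (h : IsPriorPair (1 / 100000) c L (n / (2 * N)) w lam) {δ : ℝ}
    (hδ : 2 * √(n / 2500) / n ≤ δ) (hgap : 4 * δ = N * (c * √(n / (2 * N) / L)) / n)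
    (hsmall : N * exp (-3 * L) ≤ 1 / 10) (est : (Fin (N + 1) → ℕ) → ℝ) :
    ∃ p, IsDist p ∧ ENNReal.ofReal (1 / 10 * δ ^ 2) ≤ risk n p (L1dist p (nullDist N)) est := by
  classical
  by_contra! hrisk
  have : (0 : ℝ) < n := by exact_mod_cast hn
  have hδ0 : 0 < δ := lt_of_lt_of_le (by positivity) hδ
  obtain ⟨T, hT⟩ : ∃ T, T = typicalL1dist N n (w true) lam - 2 * δ := ⟨_, rfl⟩
  have hTfalse : typicalL1dist N n (w false) lam + 2 * δ ≤ T := by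
    linarith [h.div_le_typicalL1dist_sub hN hn]
  obtain ⟨K, hK⟩ := exists_le_prod_sum_range (κ := Fin (N + 1))
    (hasSum_mixtureLaw (n := n) (lam := lam) (h.sum_weight false)) (by norm_num : (9 / 10 : ℝ) < 1)
  let box : Finset (Fin (N + 1) → ℕ) := Fintype.piFinset fun _ ↦ range K
  have hevent (k : Fin N → ι) (hk : IsDist (drawDist n lam k)) {B : Finset (Fin (N + 1) → ℕ)}
      (hB : ∀ x ∈ B, δ ≤ |est x - L1dist (drawDist n lam k) (nullDist N)|) :
      ∑ x ∈ B, prodPMF n (drawDist n lam k) x ≤ 1 / 10 :=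
    sum_prodPMF_le_of_risk_le hk.1 (by norm_num) hδ0 (hrisk _ hk).le hB
  have hfalse : ∑ x ∈ box with T ≤ est x, ∏ i, mixtureLaw n (w false) lam i (x i) ≤ 1 / 4 := by
    refine h.sum_prod_mixtureLaw_le hN hn false (filter_subset _ _) fun k hk hdist ↦
      hevent k hdist fun x hx ↦ le_trans ?_ (le_abs_self _)
    linarith [(mem_filter.mp hx).2, (abs_le.mp (hk.abs_L1dist_sub_le hN hn)).2]
  have htrue : ∑ x ∈ box with ¬ T ≤ est x, ∏ i, mixtureLaw n (w true) lam i (x i) ≤ 1 / 4 := by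
    refine h.sum_prod_mixtureLaw_le hN hn true (filter_subset _ _) fun k hk hdist ↦
      hevent k hdist fun x hx ↦ le_trans ?_ (neg_le_abs _)
    linarith [not_le.mp (mem_filter.mp hx).2, (abs_le.mp (hk.abs_L1dist_sub_le hN hn)).1]
  have hclose := (h.sum_piFinset_abs_mixtureLaw_sub_le hN (range K)).trans hsmall
  rw [prod_univ_sum] at hK
  linarith [sum_le_of_sum_filter_le box (fun x ↦ T ≤ est x) hfalse htrue hclose]

end IsPriorPair

lemma IsPriorPair.exists_isDist_ofReal_le_risk {ι : Type*} [Fintype ι] {N n : ℕ} {c L : ℝ}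
    {w : Bool → ι → ℝ} {lam : ι → ℝ} (hN : 1 ≤ N) (hn : 1 ≤ n) (hL : 0 < L) (hc : 0 ≤ c)
    (h : IsPriorPair (1 / 100000) c L (n / (2 * N)) w lam) (hbig : 3 / 50 * L ≤ c ^ 2 * N)
    (hsmall : N * exp (-3 * L) ≤ 1 / 10) (est : (Fin (N + 1) → ℕ) → ℝ) :
    ∃ p, IsDist p ∧
      ENNReal.ofReal (c ^ 2 * N / (320 * n * L)) ≤ risk n p (L1dist p (nullDist N)) est := by
  have : (0 : ℝ) < N := by exact_mod_cast hN
  have hn0 : (0 : ℝ) < n := by exact_mod_cast hn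
  obtain ⟨δ, hδ⟩ : ∃ δ, δ = N * (c * √(n / (2 * N) / L)) / (4 * n) := ⟨_, rfl⟩
  have hδ2 : δ ^ 2 = c ^ 2 * N / (32 * n * L) := by
    rw [hδ, div_pow, mul_pow, mul_pow, sq_sqrt (by positivity)]
    field_simp
    ring
  have hδ_ge : 2 * √(n / 2500) / n ≤ δ := by
    refine le_of_sq_le_sq ?_ (hδ ▸ by positivity)
    rw [hδ2, div_pow, mul_pow, sq_sqrt (by positivity),
      (by field_simp; norm_num : 2 ^ 2 * ((n : ℝ) / 2500) / n ^ 2 = 4 / 2500 / n),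
      div_le_div_iff₀ hn0 (by positivity)]
    nlinarith
  have hgap : 4 * δ = N * (c * √(n / (2 * N) / L)) / n := by
    rw [hδ]
    field_simp
  obtain ⟨p, hp, hrisk⟩ := h.exists_isDist_le_risk hN hn hδ_ge hgap hsmall est
  refine ⟨p, hp, hrisk.trans' (le_of_eq ?_)⟩
  rw [hδ2]
  congr 1
  field_simp
  ring

lemma log_le_two_mul_sqrt {x : ℝ} (hx : 0 < x) : log x ≤ 2 * √x := by
  have h := log_le_sub_one_of_pos (sqrt_pos.mpr hx)
  rw [log_sqrt hx.le] at h
  linarith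

lemma log_le_mul_of_le_rpow {A d x y : ℝ} (hA : 0 < A) (hd : 0 < d) (hx : 0 < x) (hy : 0 < y)
    (hyx : y ≤ x ^ A) (hy_ge : ((2 * A / d) ^ 2) ^ A ≤ y) : log y ≤ d * x := by
  have hlog : log y ≤ A * log x := (log_le_log hy hyx).trans_eq (log_rpow hx A)
  have hsq : (2 * A / d) ^ 2 ≤ x :=
    (rpow_le_rpow_iff (sq_nonneg _) hx.le hA).mp (hy_ge.trans hyx)
  have hsqrt : 2 * A ≤ √x * d := (div_le_iff₀ hd).mp (le_sqrt_of_sq_le hsq)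
  calc log y ≤ A * (2 * √x) :=
        hlog.trans (mul_le_mul_of_nonneg_left (log_le_two_mul_sqrt hx) hA.le)
    _ = 2 * A * √x := by ring
    _ ≤ √x * d * √x := mul_le_mul_of_nonneg_right hsqrt (sqrt_nonneg x)
    _ = d * x := by rw [mul_right_comm, mul_self_sqrt hx.le, mul_comm]

lemma ten_mul_le_pow_three {c x y : ℝ} (hc : 0 < c) (hx : 1 < x) (hy : 40 / c ^ 2 ≤ y)
    (hxy : c * x / log x ≤ y) : 10 * x ≤ y ^ 3 := by
  have hx0 : 0 < x := one_pos.trans hx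
  have hy0 : 0 < y := (by positivity : 0 < 40 / c ^ 2).trans_le hy
  have hsqrt0 : 0 < √x := sqrt_pos.mpr hx0
  have hsqrt : c * √x ≤ 2 * y := by
    refine le_of_mul_le_mul_right ?_ hsqrt0
    calc c * √x * √x = c * x := by rw [mul_assoc, mul_self_sqrt hx0.le]
      _ ≤ y * log x := (div_le_iff₀ (log_pos hx)).mp hxy
      _ ≤ y * (2 * √x) := mul_le_mul_of_nonneg_left (log_le_two_mul_sqrt hx0) hy0.le
      _ = 2 * y * √x := by ring
  have hsq : c ^ 2 * x ≤ 4 * y ^ 2 := by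
    have := pow_le_pow_left₀ (by positivity) hsqrt 2
    rw [mul_pow, sq_sqrt hx0.le] at this
    linarith
  refine le_of_mul_le_mul_left ?_ (pow_pos hc 2)
  calc c ^ 2 * (10 * x) ≤ 40 * y ^ 2 := by linarith
    _ ≤ y * c ^ 2 * y ^ 2 :=
        mul_le_mul_of_nonneg_right ((div_le_iff₀ (pow_pos hc 2)).mp hy) (sq_nonneg y)
    _ = c ^ 2 * y ^ 3 := by ring

lemma div_log_le_div_of_div_log_le {c N x y : ℝ} (hc : 0 < c) (hN : 0 < N) (hNx : N ≤ x)
    (hx : 1 < x) (hy : 1 < y) (hlog : log x ≤ 3 * log y) (hxy : c * x / log x ≤ y) :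
    c / 6 / log y ≤ y / (2 * N) := by
  have hlogx : 0 < log x := log_pos hx
  have hlogy : 0 < log y := log_pos hy
  calc c / 6 / log y = c * N / (3 * log y) / (2 * N) := by field_simp; norm_num
    _ ≤ c * x / log x / (2 * N) := by gcongr
    _ ≤ y / (2 * N) := by gcongr

lemma mul_exp_neg_three_mul_log_le {x y : ℝ} (hy : 0 < y) (hxy : 10 * x ≤ y ^ 3) :
    x * exp (-3 * log y) ≤ 1 / 10 := by
  have hexp : exp (-3 * log y) = (y ^ 3)⁻¹ := by
    rw [neg_mul, exp_neg, ← exp_log (pow_pos hy 3), log_pow]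
    norm_num
  rw [hexp, ← div_eq_mul_inv, div_le_div_iff₀ (pow_pos hy 3) (by norm_num)]
  linarith

theorem exists_isDist_forall_le_risk {A c₀ : ℝ} (hA : 0 < A) (hc₀ : 0 < c₀) :
    ∃ c : ℝ, 0 < c ∧ ∃ N₀ : ℕ, ∀ S n : ℕ, 2 ≤ S → N₀ ≤ n → (n : ℝ) ≤ (S : ℝ) ^ A →
      c₀ * S / log S ≤ n → ∃ q : Fin S → ℝ, IsDist q ∧ ∀ est : (Fin S → ℕ) → ℝ, ∃ p, IsDist p ∧
        ENNReal.ofReal (c * S / (n * log n)) ≤ risk n p (L1dist p q) est := by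
  obtain ⟨c, hc, hprior⟩ := exists_isPriorPair (κ := c₀ / 6) (ε := 1 / 100000) (by positivity)
    (by norm_num)
  refine ⟨c ^ 2 / 640, by positivity,
    max 3 (max ⌈40 / c₀ ^ 2⌉₊ ⌈((2 * A / (25 / 3 * c ^ 2)) ^ 2) ^ A⌉₊),
    fun S n hS hn hnS hSn ↦ ?_⟩
  rw [max_le_iff, max_le_iff, Nat.ceil_le, Nat.ceil_le] at hn
  obtain ⟨hn3, hn40, hnA⟩ := hn
  obtain ⟨N, rfl⟩ : ∃ N, S = N + 1 := ⟨S - 1, by omega⟩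
  have hN : 1 ≤ N := by omega
  have hN1 : (1 : ℝ) ≤ N := by exact_mod_cast hN
  have hn3' : (3 : ℝ) ≤ n := by exact_mod_cast hn3
  have hlogn : 1 ≤ log (n : ℝ) := one_le_log hn3'
  push_cast at hnS hSn ⊢
  have hcube : 10 * ((N : ℝ) + 1) ≤ (n : ℝ) ^ 3 :=
    ten_mul_le_pow_three hc₀ (by linarith) hn40 hSn
  have hlog : log ((N : ℝ) + 1) ≤ 3 * log n := by
    refine (log_le_log (by linarith) (by linarith : (N : ℝ) + 1 ≤ n ^ 3)).trans_eq ?_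
    rw [log_pow, Nat.cast_ofNat]
  have hbig : log (n : ℝ) ≤ 25 / 3 * c ^ 2 * (N + 1) :=
    log_le_mul_of_le_rpow hA (by positivity) (by linarith) (by linarith) hnS hnA
  obtain ⟨m, w, lam, hpair⟩ := hprior (log n) (n / (2 * N)) hlogn
    (div_log_le_div_of_div_log_le hc₀ (by linarith) (by linarith) (by linarith) (by linarith)
      hlog hSn)
  refine ⟨nullDist N, isDist_nullDist hN, fun est ↦ ?_⟩
  obtain ⟨p, hp, hrisk⟩ := hpair.exists_isDist_ofReal_le_risk hN (by omega) (by linarith) hc.le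
    (by linarith [mul_le_mul_of_nonneg_left hN1 (sq_nonneg c)])
    (mul_exp_neg_three_mul_log_le (by linarith) (by linarith)) est
  refine ⟨p, hp, hrisk.trans' (ENNReal.ofReal_le_ofReal ?_)⟩
  calc c ^ 2 / 640 * (N + 1) / (n * log n) ≤ c ^ 2 / 640 * (2 * N) / (n * log n) := by
        gcongr
        linarith
    _ = c ^ 2 * N / (320 * n * log n) := by field_simp; norm_num

/-- the `Q`-worst-case minimax risk for estimating `L₁(P,Q)` with `Q` known
is of order `S/(n ln n)` when `c₀·S/ln S ≤ n ≤ S^A`. -/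
theorem minimax_rate_knownQ (A c₀ : ℝ) (hA : 1 ≤ A) (hc₀ : 0 < c₀) :
    ∃ c C : ℝ, ∃ N₀ : ℕ, 0 < c ∧ c ≤ C ∧
      ∀ S n : ℕ, 2 ≤ S → N₀ ≤ n → (n : ℝ) ≤ (S : ℝ) ^ A → c₀ * S / Real.log S ≤ n →
        ENNReal.ofReal (c * S / (n * Real.log n)) ≤
          (⨆ q : {q : Fin S → ℝ // IsDist q}, ⨅ est : (Fin S → ℕ) → ℝ,
            ⨆ p : {p : Fin S → ℝ // IsDist p}, risk n p.1 (L1dist p.1 q.1) est) ∧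
        (⨆ q : {q : Fin S → ℝ // IsDist q}, ⨅ est : (Fin S → ℕ) → ℝ,
            ⨆ p : {p : Fin S → ℝ // IsDist p}, risk n p.1 (L1dist p.1 q.1) est) ≤
          ENNReal.ofReal (C * S / (n * Real.log n)) := by
  obtain ⟨c, hc, N₁, hlower⟩ := exists_isDist_forall_le_risk (by linarith : 0 < A) hc₀
  obtain ⟨C, N₂, hupper⟩ := exists_estimator_risk_le hA
  refine ⟨c, max c C, max N₁ N₂, hc, le_max_left _ _, fun S n hS hn hnS hSn ↦ ⟨?_, ?_⟩⟩
  · obtain ⟨q, hq, hest⟩ := hlower S n hS ((le_max_left _ _).trans hn) hnS hSn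
    refine le_iSup_of_le ⟨q, hq⟩ (le_iInf fun est ↦ ?_)
    obtain ⟨p, hp, hrisk⟩ := hest est
    exact le_iSup_of_le ⟨p, hp⟩ hrisk
  · refine iSup_le fun q ↦ ?_
    obtain ⟨est, hest⟩ := hupper S n ((le_max_right _ _).trans hn) hnS q.1 q.2
    refine iInf_le_of_le est (iSup_le fun p ↦ (hest p.1 p.2).trans (ENNReal.ofReal_le_ofReal ?_))
    have := log_natCast_nonneg n
    gcongr
    exact le_max_right _ _
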